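/- For all 0 ≤ s < t ≤ T and x < g(s), the taboo sub-probability measure A ↦ P(X^{s,x}_t ∈ A and X^{s,x}_u < g(u) for all u ∈ [s,t]) on the Borel subsets of (−∞, g(t)) admits a density q(s,x;t,·) with respect to Lebesgue measure. Furthermore, for each fixed (s,x) the function y ↦ q(s,x;t,y) is continuously differentiable on (−∞, g(t)) and the limit lim_{y↑g(t)} ∂_y q(s,x;t,y) exists and is finite. -/

import Mathlib

/-!
The Lamperti transform `Φ(r, z) = ∫_{g(r)}^z du / σ(r, u)` straightens the moving boundary to the
level `0` and turns the diffusion coefficient into `1`; the new drift `β` is continuous and locally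
Hölder in space (`Coef.exists_drift`, `Coef.transMP`). Since `Φ` is a `C¹` diffeomorphism in space
with `∂_z Φ = 1 / σ`, regularity of the density up to the boundary can be proved for the transformed
process, killed at `0`, and then carried back (`Coef.exists_density`).

By optional stopping (`stopped_mean`), the laws of the killed process solve the Fokker–Planck
equation against test functions that vanish at `0` (`TransMP.weakSol`). Testing with a localised
heat kernel, minus its reflection at `0` in the killed case, gives Duhamel formulas
(`identity_free`, `identity_killed`) that express the smoothed law through a source term which
involves only the law itself, cutoffs and the drift.

These formulas are bootstrapped three times.
* The law without killing has locally bounded densities: the blow-up exponent of the smoothed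
  density improves from `1/2` to `1/4` to `0` (`hBd_zero`). The law without killing dominates the
  killed one, which therefore has locally bounded densities too (`TransMP.exists_killedFlow`).
* With this bound the source term is integrable in time and the Duhamel integral defines a Hölder
  continuous function (`k_holder`), which is identified as the density of the killed law
  (`k_density`).
* With a Hölder density, the `y`-derivative of the source term is of order `τ ^ (-1 + α / 2)`,
  hence integrable in time (`K'_bound`). Up to the boundary this uses that the `y`-derivative of the
  odd reflected source involves the even, Neumann, kernel, whose second derivative integrates to
  zero over the half-line (`integral_heatG2_reflect`). So the density is `C¹` up to `0`
  (`KilledFlow.exists_density`).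

The local densities agree where they overlap, by continuity, and are glued in `glue_density`.
-/

open MeasureTheory Set Filter Topology

noncomputable section

variable {Ω : Type*}

/-- Partial derivative in the time variable. -/
def pderivT (f : ℝ → ℝ → ℝ) (s x : ℝ) : ℝ := deriv (fun s' => f s' x) s

/-- Partial derivative in the space variable. -/
def pderivX (f : ℝ → ℝ → ℝ) (s x : ℝ) : ℝ := deriv (f s) x

/-- Second partial derivative in the space variable. -/
def pderivXX (f : ℝ → ℝ → ℝ) (s x : ℝ) : ℝ := deriv (deriv (f s)) x

/-- The differential operator `L` associated with drift `μ` and diffusion `σ`: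
`(Lf)(s,x) = ∂ₛf + μ ∂ₓf + ½σ² ∂ₓₓf`. -/
def genOp (μ σ : ℝ → ℝ → ℝ) (f : ℝ → ℝ → ℝ) (s x : ℝ) : ℝ :=
  pderivT f s x + μ s x * pderivX f s x + (1 / 2) * (σ s x) ^ 2 * pderivXX f s x

/-- `f` belongs to `C^{1,2}(U)`: the derivatives `∂ₛf`, `∂ₓf`, `∂ₓₓf` exist and are
continuous on `U`. -/
def C12On (f : ℝ → ℝ → ℝ) (U : Set (ℝ × ℝ)) : Prop :=
  (∀ p ∈ U, DifferentiableAt ℝ (fun s => f s p.2) p.1) ∧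
  (∀ p ∈ U, DifferentiableAt ℝ (f p.1) p.2) ∧
  (∀ p ∈ U, DifferentiableAt ℝ (deriv (f p.1)) p.2) ∧
  ContinuousOn (fun p : ℝ × ℝ => pderivT f p.1 p.2) U ∧
  ContinuousOn (fun p : ℝ × ℝ => pderivX f p.1 p.2) U ∧
  ContinuousOn (fun p : ℝ × ℝ => pderivXX f p.1 p.2) U

/-- Condition (C1): continuity, positivity of `σ`, linear-growth-type bounds and local
Lipschitz continuity. -/
def CondC1 (T : ℝ) (μ σ : ℝ → ℝ → ℝ) : Prop :=
  ContinuousOn (fun p : ℝ × ℝ => μ p.1 p.2) (Icc 0 T ×ˢ (univ : Set ℝ)) ∧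
  ContinuousOn (fun p : ℝ × ℝ => σ p.1 p.2) (Icc 0 T ×ˢ (univ : Set ℝ)) ∧
  (∀ t ∈ Icc (0:ℝ) T, ∀ x : ℝ, 0 < σ t x) ∧
  (∃ K : ℝ, ∀ t ∈ Icc (0:ℝ) T, ∀ x : ℝ,
    x * μ t x ≤ K * (1 + x ^ 2) ∧ (σ t x) ^ 2 ≤ K * (1 + x ^ 2)) ∧
  (∀ a : ℝ, 0 < a → ∃ Ka : ℝ, ∀ t ∈ Icc (0:ℝ) T, ∀ x ∈ Ioo (-a) a, ∀ y ∈ Ioo (-a) a,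
    |μ t x - μ t y| + |(σ t x) ^ 2 - (σ t y) ^ 2| ≤ Ka * |x - y|)

/-- Condition (C2): uniform ellipticity. -/
def CondC2 (T : ℝ) (σ : ℝ → ℝ → ℝ) : Prop :=
  ∃ σ₀ : ℝ, 0 < σ₀ ∧ ∀ t ∈ Icc (0:ℝ) T, ∀ x : ℝ, σ₀ ≤ σ t x

/-- Hölder continuity on `[0,T] × ℝ` with exponent `α` in space and `α/2` in time. -/
def HolderTX (T α : ℝ) (φ : ℝ → ℝ → ℝ) : Prop :=
  ∃ C : ℝ, ∀ t ∈ Icc (0:ℝ) T, ∀ t' ∈ Icc (0:ℝ) T, ∀ x x' : ℝ,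
    |φ t x - φ t' x'| ≤ C * (|x - x'| ^ α + |t - t'| ^ (α / 2))

/-- Condition (C3): boundedness of the coefficients and Hölder continuity of
`μ, ∂ₓμ, σ, ∂ₜσ, ∂ₓσ, ∂ₓ∂ₜσ, ∂ₓₓσ` with exponent `α` in `x` and `α/2` in `t`. -/
def CondC3 (T α : ℝ) (μ σ : ℝ → ℝ → ℝ) : Prop :=
  (∃ M : ℝ, ∀ t ∈ Icc (0:ℝ) T, ∀ x : ℝ, |μ t x| ≤ M ∧ |σ t x| ≤ M) ∧
  (∀ t ∈ Icc (0:ℝ) T, ∀ x : ℝ,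
    DifferentiableAt ℝ (μ t) x ∧ DifferentiableAt ℝ (σ t) x ∧
    DifferentiableAt ℝ (fun s => σ s x) t ∧ DifferentiableAt ℝ (deriv (σ t)) x ∧
    DifferentiableAt ℝ (fun y => pderivT σ t y) x) ∧
  HolderTX T α μ ∧ HolderTX T α (fun t x => pderivX μ t x) ∧ HolderTX T α σ ∧
  HolderTX T α (fun t x => pderivT σ t x) ∧ HolderTX T α (fun t x => pderivX σ t x) ∧
  HolderTX T α (fun t x => pderivX (fun s y => pderivT σ s y) t x) ∧
  HolderTX T α (fun t x => pderivXX σ t x)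

/-- `M` is a martingale with respect to `(F, P)` over the time set `I`. -/
def MartingaleOn [m : MeasurableSpace Ω] (P : Measure Ω) (F : Filtration ℝ m)
    (M : ℝ → Ω → ℝ) (I : Set ℝ) : Prop :=
  (∀ u ∈ I, StronglyMeasurable[F u] (M u) ∧ Integrable (M u) P) ∧
  ∀ u₁ ∈ I, ∀ u₂ ∈ I, u₁ ≤ u₂ → P[M u₂|F u₁] =ᵐ[P] M u₁

/-- `X` solves the martingale problem for the generator associated with `μ` and `σ`:
for every compactly supported `f ∈ C^{1,2}`, the process
`u ↦ f(u, X^{s,x}_u) − ∫_s^u (Lf)(r, X^{s,x}_r) dr` is a martingale on `[s,T]`. -/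
def SolvesMP [m : MeasurableSpace Ω] (T : ℝ) (μ σ : ℝ → ℝ → ℝ) (P : Measure Ω)
    (F : Filtration ℝ m) (X : ℝ → ℝ → ℝ → Ω → ℝ) : Prop :=
  ∀ s ∈ Icc (0:ℝ) T, ∀ x : ℝ, ∀ f : ℝ → ℝ → ℝ,
    C12On f univ → HasCompactSupport (fun p : ℝ × ℝ => f p.1 p.2) →
    MartingaleOn P F
      (fun u ω => f u (X s x u ω) - ∫ r in s..u, genOp μ σ f r (X s x r ω)) (Icc s T)

/-- The first hitting time `τ^{s,x}` of the boundary `g`, capped at `T`. -/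
def tauF (T : ℝ) (g : ℝ → ℝ) (X : ℝ → ℝ → ℝ → Ω → ℝ) (s x : ℝ) (ω : Ω) : ℝ :=
  sInf ({t | t ∈ Icc s T ∧ g t ≤ X s x t ω} ∪ {T})

/-- The boundary non-crossing probability `v(s,x)`. -/
def vF [MeasurableSpace Ω] (T : ℝ) (g : ℝ → ℝ) (P : Measure Ω)
    (X : ℝ → ℝ → ℝ → Ω → ℝ) (s x : ℝ) : ℝ :=
  (P {ω | ∀ u ∈ Ico s T, X s x u ω < g u}).toReal

/-- The domain `D_t = {(s,x) : 0 < s < t, x < g(s)}`. -/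
def DTset (t : ℝ) (g : ℝ → ℝ) : Set (ℝ × ℝ) := {p | 0 < p.1 ∧ p.1 < t ∧ p.2 < g p.1}

/-- The boundary non-crossing probability functional `F(b)`. -/
def FncF [MeasurableSpace Ω] (T x₀ : ℝ) (P : Measure Ω) (X : ℝ → ℝ → ℝ → Ω → ℝ)
    (b : ℝ → ℝ) : ℝ :=
  (P {ω | ∀ t ∈ Icc (0:ℝ) T, X 0 x₀ t ω < b t}).toReal

/-- `h` lies in the Cameron–Martin space `H`, with a.e. derivative `ℓ ∈ L²([0,T])`. -/
def InCM (T : ℝ) (h ℓ : ℝ → ℝ) : Prop :=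
  Measurable ℓ ∧ IntegrableOn (fun s => ℓ s ^ 2) (Icc 0 T) volume ∧
  ∀ t ∈ Icc (0:ℝ) T, h t = ∫ s in (0:ℝ)..t, ℓ s

/-- Membership in the Cameron–Martin space `H`. -/
def InH (T : ℝ) (h : ℝ → ℝ) : Prop := ∃ ℓ : ℝ → ℝ, InCM T h ℓ

/-- The function `ψ(t) = −E[∂ₓv(t, X_t) 1_{τ > t}]`. -/
def psiF [MeasurableSpace Ω] (T x₀ : ℝ) (g : ℝ → ℝ) (P : Measure Ω)
    (X : ℝ → ℝ → ℝ → Ω → ℝ) (t : ℝ) : ℝ :=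
  -∫ ω, (if t < tauF T g X 0 x₀ ω then pderivX (vF T g P X) t (X 0 x₀ t ω) else 0) ∂P

/-- `N_t = 𝔥(t∧τ, X_{t∧τ})/𝔥(0,x₀)` where `𝔥 = −∂ₓv`. -/
def NtF [MeasurableSpace Ω] (T x₀ : ℝ) (g : ℝ → ℝ) (P : Measure Ω)
    (X : ℝ → ℝ → ℝ → Ω → ℝ) (t : ℝ) (ω : Ω) : ℝ :=
  -pderivX (vF T g P X) (min t (tauF T g X 0 x₀ ω)) (X 0 x₀ (min t (tauF T g X 0 x₀ ω)) ω) /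
    -pderivX (vF T g P X) 0 x₀

/-! ### The heat kernel -/

/-- The Gaussian heat kernel of `∂_τ - ½ ∂_{xx}` on the line, `τ` being the variance. -/
def heatG (τ x : ℝ) : ℝ := (√(2 * Real.pi * τ))⁻¹ * Real.exp (-x ^ 2 / (2 * τ))

/-- The first space derivative of `heatG`. -/
def heatG1 (τ x : ℝ) : ℝ := -(x / τ) * heatG τ x

/-- The second space derivative of `heatG`. -/
def heatG2 (τ x : ℝ) : ℝ := (x ^ 2 / τ ^ 2 - 1 / τ) * heatG τ x

lemma heatG_nonneg (τ x : ℝ) : 0 ≤ heatG τ x := by unfold heatG; positivity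

lemma heatG_neg (τ x : ℝ) : heatG τ (-x) = heatG τ x := by simp [heatG]
lemma heatG1_neg (τ x : ℝ) : heatG1 τ (-x) = -heatG1 τ x := by
  simp only [heatG1, heatG_neg]; ring
lemma heatG2_neg (τ x : ℝ) : heatG2 τ (-x) = heatG2 τ x := by
  simp only [heatG2, heatG_neg]; ring

lemma heatG_le {τ : ℝ} (hτ : 0 < τ) (x : ℝ) : heatG τ x ≤ τ ^ (-(1 / 2) : ℝ) := by
  unfold heatG
  have h1 : Real.exp (-x ^ 2 / (2 * τ)) ≤ 1 := by
    rw [Real.exp_le_one_iff]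
    apply div_nonpos_of_nonpos_of_nonneg
    · nlinarith [sq_nonneg x]
    · positivity
  have h2 : (√(2 * Real.pi * τ))⁻¹ ≤ τ ^ (-(1 / 2) : ℝ) := by
    rw [Real.rpow_neg hτ.le, ← Real.sqrt_eq_rpow]
    apply inv_anti₀ (Real.sqrt_pos.2 hτ)
    apply Real.sqrt_le_sqrt
    nlinarith [Real.pi_gt_three]
  calc _ ≤ (√(2 * Real.pi * τ))⁻¹ * 1 := by gcongr
    _ ≤ _ := by simpa using h2

lemma hasDerivAt_heatG {τ : ℝ} (hτ : 0 < τ) (x : ℝ) :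
    HasDerivAt (heatG τ) (heatG1 τ x) x := by
  unfold heatG1 heatG
  have h : HasDerivAt (fun x : ℝ => -x ^ 2 / (2 * τ)) (-(x / τ)) x := by
    refine (((hasDerivAt_pow 2 x).neg).div_const (2 * τ)).congr_deriv ?_
    push_cast
    field_simp
  refine (h.exp.const_mul ((√(2 * Real.pi * τ))⁻¹)).congr_deriv ?_
  ring

lemma hasDerivAt_heatG1 {τ : ℝ} (hτ : 0 < τ) (x : ℝ) :
    HasDerivAt (heatG1 τ) (heatG2 τ x) x := by
  have h : HasDerivAt (fun x : ℝ => -(x / τ)) (-(1 / τ)) x :=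
    ((hasDerivAt_id x).div_const τ).neg
  refine (h.mul (hasDerivAt_heatG hτ x)).congr_deriv ?_
  unfold heatG1 heatG2
  field_simp
  ring

lemma hasDerivAt_heatG_time {τ : ℝ} (hτ : 0 < τ) (x : ℝ) :
    HasDerivAt (fun τ => heatG τ x) (1 / 2 * heatG2 τ x) τ := by
  unfold heatG2 heatG
  have hp : 0 < 2 * Real.pi * τ := by positivity
  have h1 : HasDerivAt (fun τ : ℝ => (√(2 * Real.pi * τ))⁻¹)
      (-(2 * Real.pi / (2 * √(2 * Real.pi * τ))) / (√(2 * Real.pi * τ)) ^ 2) τ := by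
    have h0 : HasDerivAt (fun τ : ℝ => 2 * Real.pi * τ) (2 * Real.pi) τ := by
      simpa using (hasDerivAt_id τ).const_mul (2 * Real.pi)
    exact (h0.sqrt hp.ne').inv (Real.sqrt_pos.2 hp).ne'
  have h2 : HasDerivAt (fun τ : ℝ => -x ^ 2 / (2 * τ)) (x ^ 2 / (2 * τ ^ 2)) τ := by
    have h0 : HasDerivAt (fun τ : ℝ => 2 * τ) 2 τ := by
      simpa using (hasDerivAt_id τ).const_mul (2 : ℝ)
    refine ((hasDerivAt_const τ (-x ^ 2)).div h0 (by positivity)).congr_deriv ?_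
    field_simp
    ring
  refine (h1.mul h2.exp).congr_deriv ?_
  rw [Real.sq_sqrt hp.le]
  have hs := (Real.sqrt_pos.2 hp).ne'
  field_simp
  ring

/-- Polynomial factors in `x / √τ` are absorbed by doubling the variance. -/
lemma heatG_absorb {τ : ℝ} (hτ : 0 < τ) (x : ℝ) :
    (1 + x ^ 2 / τ) ^ 2 * heatG τ x ≤ 100 * heatG (2 * τ) x := by
  set v := x ^ 2 / τ with hv
  have hv0 : 0 ≤ v := by positivity
  have e1 : heatG τ x = √2 * Real.exp (-(v / 4)) * heatG (2 * τ) x := by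
    unfold heatG
    have : 2 * Real.pi * (2 * τ) = 2 * (2 * Real.pi * τ) := by ring
    rw [this, Real.sqrt_mul (by norm_num : (0 : ℝ) ≤ 2)]
    have h2 : (√2 : ℝ) ≠ 0 := by positivity
    have : Real.exp (-x ^ 2 / (2 * τ)) =
        Real.exp (-(v / 4)) * Real.exp (-x ^ 2 / (2 * (2 * τ))) := by
      rw [← Real.exp_add]; congr 1; rw [hv]; field_simp; ring
    rw [this]; field_simp
  rw [e1]
  have h3 : (1 + v) ^ 2 * Real.exp (-(v / 4)) ≤ 64 := by
    have h := Real.add_one_le_exp (v / 8)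
    have h5 : Real.exp (v / 8) ^ 2 = Real.exp (v / 4) := by
      rw [← Real.exp_nat_mul]; congr 1; push_cast; ring
    have h4 : (1 + v) ^ 2 ≤ 64 * Real.exp (v / 4) := by
      rw [← h5]
      nlinarith
    rw [Real.exp_neg, ← div_eq_mul_inv, div_le_iff₀ (Real.exp_pos _)]
    exact h4
  have h6 : √2 ≤ 1.5 := by rw [Real.sqrt_le_left (by norm_num)]; norm_num
  have h7 := heatG_nonneg (2 * τ) x
  calc _ = ((1 + v) ^ 2 * Real.exp (-(v / 4))) * √2 * heatG (2 * τ) x := by ring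
    _ ≤ 64 * 1.5 * heatG (2 * τ) x := by gcongr
    _ ≤ _ := by nlinarith

lemma heatG_le_double {τ : ℝ} (hτ : 0 < τ) (x : ℝ) :
    heatG τ x ≤ 100 * heatG (2 * τ) x := by
  refine le_trans ?_ (heatG_absorb hτ x)
  have : 0 ≤ x ^ 2 / τ := by positivity
  exact le_mul_of_one_le_left (heatG_nonneg _ _) (by nlinarith)

lemma abs_heatG1_le {τ : ℝ} (hτ : 0 < τ) (x : ℝ) :
    |heatG1 τ x| ≤ 100 * τ ^ (-(1 / 2) : ℝ) * heatG (2 * τ) x := by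
  unfold heatG1
  rw [abs_mul, abs_of_nonneg (heatG_nonneg τ x), abs_neg, Real.rpow_neg hτ.le,
    ← Real.sqrt_eq_rpow, abs_div, abs_of_pos hτ]
  have hs := Real.sqrt_pos.2 hτ
  have hss := Real.sq_sqrt hτ.le
  have h1 : |x| / τ ≤ (√τ)⁻¹ * (1 + x ^ 2 / τ) ^ 2 := by
    have e : x ^ 2 / τ = (|x| / √τ) ^ 2 := by rw [div_pow, hss, sq_abs]
    rw [e]
    have e2 : |x| / τ = (√τ)⁻¹ * (|x| / √τ) := by
      field_simp; rw [hss]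
    rw [e2]
    have : 0 ≤ |x| / √τ := by positivity
    gcongr
    nlinarith [sq_nonneg (|x| / √τ - 1), sq_nonneg (|x| / √τ), sq_nonneg ((|x| / √τ)^2)]
  calc _ ≤ (√τ)⁻¹ * (1 + x ^ 2 / τ) ^ 2 * heatG τ x := by
        gcongr; exact heatG_nonneg _ _
    _ = (√τ)⁻¹ * ((1 + x ^ 2 / τ) ^ 2 * heatG τ x) := by ring
    _ ≤ (√τ)⁻¹ * (100 * heatG (2 * τ) x) := by
        exact mul_le_mul_of_nonneg_left (heatG_absorb hτ x) (by positivity)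
    _ = _ := by ring

lemma abs_heatG2_le' {τ : ℝ} (hτ : 0 < τ) (x : ℝ) :
    (1 + x ^ 2 / τ) * |heatG2 τ x| ≤ 100 * τ⁻¹ * heatG (2 * τ) x := by
  unfold heatG2
  rw [abs_mul, abs_of_nonneg (heatG_nonneg τ x)]
  have hv : 0 ≤ x ^ 2 / τ := by positivity
  have h1 : |x ^ 2 / τ ^ 2 - 1 / τ| ≤ τ⁻¹ * (1 + x ^ 2 / τ) := by
    have : x ^ 2 / τ ^ 2 - 1 / τ = τ⁻¹ * (x ^ 2 / τ - 1) := by field_simp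
    rw [this, abs_mul, abs_of_pos (inv_pos.2 hτ)]
    gcongr
    rw [abs_le]; constructor <;> linarith
  calc _ ≤ (1 + x ^ 2 / τ) * (τ⁻¹ * (1 + x ^ 2 / τ) * heatG τ x) := by
        gcongr; exact heatG_nonneg _ _
    _ = τ⁻¹ * ((1 + x ^ 2 / τ) ^ 2 * heatG τ x) := by ring
    _ ≤ τ⁻¹ * (100 * heatG (2 * τ) x) := by
        exact mul_le_mul_of_nonneg_left (heatG_absorb hτ x) (by positivity)
    _ = _ := by ring

lemma abs_heatG2_le {τ : ℝ} (hτ : 0 < τ) (x : ℝ) :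
    |heatG2 τ x| ≤ 100 * τ⁻¹ * heatG (2 * τ) x := by
  refine le_trans ?_ (abs_heatG2_le' hτ x)
  have hv : 0 ≤ x ^ 2 / τ := by positivity
  exact le_mul_of_one_le_left (abs_nonneg _) (by linarith)

lemma abs_rpow_le {α : ℝ} (h0 : 0 < α) (h1 : α < 1) {τ : ℝ} (hτ : 0 < τ) (x : ℝ) :
    |x| ^ α ≤ τ ^ (α / 2) * (1 + x ^ 2 / τ) := by
  have hs := Real.sqrt_pos.2 hτ
  have e : |x| = √τ * (|x| / √τ) := by field_simp
  have e3 : τ ^ (α / 2) = (√τ) ^ α := by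
    rw [Real.sqrt_eq_rpow, ← Real.rpow_mul hτ.le]; congr 1; ring
  have e4 : x ^ 2 / τ = (|x| / √τ) ^ 2 := by rw [div_pow, Real.sq_sqrt hτ.le, sq_abs]
  rw [e3, e4]
  conv_lhs => rw [e]
  set u := |x| / √τ with hu
  have hu0 : 0 ≤ u := by positivity
  rw [Real.mul_rpow hs.le hu0]
  gcongr
  rcases le_total u 1 with h | h
  · have := Real.rpow_le_one hu0 h h0.le
    nlinarith [sq_nonneg u]
  · have := Real.rpow_le_rpow_of_exponent_le h h1.le
    rw [Real.rpow_one] at this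
    nlinarith [sq_nonneg (u - 1)]

/-- A Hölder factor `|x| ^ α` gains `τ ^ (α / 2)`, which makes the second derivative of the heat
kernel integrable in time. -/
lemma abs_rpow_heatG2_le {α : ℝ} (h0 : 0 < α) (h1 : α < 1) {τ : ℝ} (hτ : 0 < τ) (x : ℝ) :
    |x| ^ α * |heatG2 τ x| ≤ 100 * τ ^ (-1 + α / 2) * heatG (2 * τ) x := by
  calc _ ≤ τ ^ (α / 2) * (1 + x ^ 2 / τ) * |heatG2 τ x| := by
        gcongr; exact abs_rpow_le h0 h1 hτ x
    _ = τ ^ (α / 2) * ((1 + x ^ 2 / τ) * |heatG2 τ x|) := by ring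
    _ ≤ τ ^ (α / 2) * (100 * τ⁻¹ * heatG (2 * τ) x) := by
        exact mul_le_mul_of_nonneg_left (abs_heatG2_le' hτ x) (by positivity)
    _ = _ := by
        rw [Real.rpow_add hτ, Real.rpow_neg_one]; ring

lemma integrable_heatG {τ : ℝ} (hτ : 0 < τ) : Integrable (heatG τ) := by
  unfold heatG
  have := (integrable_exp_neg_mul_sq (b := 1 / (2 * τ)) (by positivity)).const_mul
    (√(2 * Real.pi * τ))⁻¹
  convert this using 4
  ring

lemma integral_heatG {τ : ℝ} (hτ : 0 < τ) : ∫ x, heatG τ x = 1 := by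
  unfold heatG
  rw [integral_const_mul]
  have := integral_gaussian (1 / (2 * τ))
  have e : (fun x : ℝ => Real.exp (-x ^ 2 / (2 * τ))) =
      fun x => Real.exp (-(1 / (2 * τ)) * x ^ 2) := by
    ext x; congr 1; ring
  rw [e, this]
  have e2 : Real.pi / (1 / (2 * τ)) = 2 * Real.pi * τ := by field_simp
  rw [e2]
  have : 0 < √(2 * Real.pi * τ) := by positivity
  field_simp

lemma measurable_heatG : Measurable (fun p : ℝ × ℝ => heatG p.1 p.2) := by
  unfold heatG; fun_prop
lemma measurable_heatG1 : Measurable (fun p : ℝ × ℝ => heatG1 p.1 p.2) := by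
  unfold heatG1
  exact ((measurable_snd.div measurable_fst).neg).mul measurable_heatG
lemma measurable_heatG2 : Measurable (fun p : ℝ × ℝ => heatG2 p.1 p.2) := by
  unfold heatG2
  exact (((measurable_snd.pow_const 2).div (measurable_fst.pow_const 2)).sub
    (measurable_const.div measurable_fst)).mul measurable_heatG

lemma continuousOn_heatG : ContinuousOn (fun p : ℝ × ℝ => heatG p.1 p.2) (Ioi 0 ×ˢ univ) := by
  unfold heatG
  apply ContinuousOn.mul
  · apply ContinuousOn.inv₀ (by fun_prop)
    rintro ⟨a, b⟩ ⟨h, -⟩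
    have : (0 : ℝ) < a := h
    positivity
  · apply ContinuousOn.rexp
    apply ContinuousOn.div (by fun_prop) (by fun_prop)
    rintro ⟨a, b⟩ ⟨h, -⟩
    have : (0 : ℝ) < a := h
    positivity

lemma continuousOn_heatG1 : ContinuousOn (fun p : ℝ × ℝ => heatG1 p.1 p.2) (Ioi 0 ×ˢ univ) := by
  unfold heatG1
  refine ContinuousOn.mul (ContinuousOn.neg (ContinuousOn.div (by fun_prop) (by fun_prop) ?_))
    continuousOn_heatG
  rintro ⟨a, b⟩ ⟨h, -⟩
  exact (ne_of_gt h)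

lemma continuousOn_heatG2 : ContinuousOn (fun p : ℝ × ℝ => heatG2 p.1 p.2) (Ioi 0 ×ˢ univ) := by
  unfold heatG2
  refine ContinuousOn.mul (ContinuousOn.sub (ContinuousOn.div (by fun_prop) (by fun_prop) ?_)
    (ContinuousOn.div (by fun_prop) (by fun_prop) ?_)) continuousOn_heatG
  · rintro ⟨a, b⟩ ⟨h, -⟩
    exact pow_ne_zero _ (ne_of_gt h)
  · rintro ⟨a, b⟩ ⟨h, -⟩
    exact (ne_of_gt h)

lemma continuous_heatG {τ : ℝ} (hτ : 0 < τ) : Continuous (heatG τ) :=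
  continuous_iff_continuousAt.2 fun x => (hasDerivAt_heatG hτ x).continuousAt
lemma continuous_heatG1 {τ : ℝ} (hτ : 0 < τ) : Continuous (heatG1 τ) :=
  continuous_iff_continuousAt.2 fun x => (hasDerivAt_heatG1 hτ x).continuousAt
lemma continuous_heatG2 {τ : ℝ} (hτ : 0 < τ) : Continuous (heatG2 τ) := by
  have := continuousOn_heatG2.comp_continuous (f := fun x : ℝ => (τ, x)) (by fun_prop)
    (fun x => ⟨hτ, mem_univ _⟩)
  exact this

/-- Gaussian convolutions form an approximate identity. -/
lemma tendsto_heatG_conv {φ : ℝ → ℝ} (hφ : Continuous φ) {C : ℝ} (hC : ∀ x, |φ x| ≤ C)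
    (w : ℝ) (u : ℕ → ℝ) (hu0 : ∀ n, 0 < u n) (hu : Tendsto u atTop (𝓝 0)) :
    Tendsto (fun n => ∫ y, heatG (u n) (w - y) * φ y) atTop (𝓝 (φ w)) := by
  have key : ∀ n, ∫ y, heatG (u n) (w - y) * φ y = ∫ z, heatG 1 z * φ (w - √(u n) * z) := by
    intro n
    have hs : 0 < √(u n) := Real.sqrt_pos.2 (hu0 n)
    have h1 : ∫ y, heatG (u n) (w - y) * φ y = ∫ y, heatG (u n) y * φ (w - y) := by
      have := integral_sub_left_eq_self (fun y => heatG (u n) y * φ (w - y)) volume w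
      rw [← this]; simp
    have h2 := Measure.integral_comp_mul_left (fun y => heatG (u n) y * φ (w - y)) (√(u n))
    rw [h1]
    have h3 : ∀ z, heatG 1 z = √(u n) * heatG (u n) (√(u n) * z) := by
      intro z
      unfold heatG
      rw [Real.sqrt_mul (by positivity : 0 ≤ 2 * Real.pi) (u n), mul_pow,
        Real.sq_sqrt (hu0 n).le, mul_one]
      have e : -(u n * z ^ 2) / (2 * u n) = -z ^ 2 / (2 * 1) := by
        have := (hu0 n).ne'
        field_simp
      rw [e]; field_simp
    simp_rw [h3, mul_assoc]
    rw [integral_const_mul, h2, abs_of_pos (inv_pos.2 hs), smul_eq_mul, ← mul_assoc,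
      mul_inv_cancel₀ hs.ne', one_mul]
  simp_rw [key]
  have : φ w = ∫ z, heatG 1 z * φ w := by
    rw [integral_mul_const, integral_heatG one_pos, one_mul]
  rw [this]
  refine tendsto_integral_of_dominated_convergence (fun z => heatG 1 z * C) ?_ ?_ ?_ ?_
  · intro n
    have := continuous_heatG one_pos
    exact (by fun_prop : Continuous _).aestronglyMeasurable
  · exact (integrable_heatG one_pos).mul_const _
  · intro n
    filter_upwards with z
    rw [norm_mul, Real.norm_eq_abs, abs_of_nonneg (heatG_nonneg _ _), Real.norm_eq_abs]
    exact mul_le_mul_of_nonneg_left (hC _) (heatG_nonneg _ _)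
  · filter_upwards with z
    apply Tendsto.const_mul
    have h : Tendsto (fun n => w - √(u n) * z) atTop (𝓝 (w - √0 * z)) :=
      (((Real.continuous_sqrt.tendsto 0).comp hu).mul_const z).const_sub w
    simp only [Real.sqrt_zero, zero_mul, sub_zero] at h
    exact (hφ.tendsto w).comp h

attribute [irreducible] heatG heatG1 heatG2

lemma hasDerivAt_heatG_left {τ : ℝ} (hτ : 0 < τ) (w y : ℝ) :
    HasDerivAt (fun w => heatG τ (w - y)) (heatG1 τ (w - y)) w :=
  (hasDerivAt_heatG hτ (w - y)).comp_sub_const w y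
lemma hasDerivAt_heatG1_left {τ : ℝ} (hτ : 0 < τ) (w y : ℝ) :
    HasDerivAt (fun w => heatG1 τ (w - y)) (heatG2 τ (w - y)) w :=
  (hasDerivAt_heatG1 hτ (w - y)).comp_sub_const w y
lemma hasDerivAt_heatG_right {τ : ℝ} (hτ : 0 < τ) (w y : ℝ) :
    HasDerivAt (fun y => heatG τ (w - y)) (-heatG1 τ (w - y)) y :=
  (hasDerivAt_heatG hτ (w - y)).comp_const_sub w y
lemma hasDerivAt_heatG1_right {τ : ℝ} (hτ : 0 < τ) (w y : ℝ) :
    HasDerivAt (fun y => heatG1 τ (w - y)) (-heatG2 τ (w - y)) y :=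
  (hasDerivAt_heatG1 hτ (w - y)).comp_const_sub w y

/-! ### Test functions, weak solutions and cutoffs -/

/-- Test functions for the reduced problem (unit diffusion coefficient): `F` is of class `C^{1,2}`
before time `t'`, with derivatives `Fr`, `Fw`, `Fww`, and it vanishes up to a time after `s` and
for large `|w|`. -/
structure TestFn (s t' : ℝ) (F Fr Fw Fww : ℝ → ℝ → ℝ) : Prop where
  dr : ∀ r < t', ∀ w, HasDerivAt (fun r => F r w) (Fr r w) r
  dw : ∀ r < t', ∀ w, HasDerivAt (F r) (Fw r w) w
  dww : ∀ r < t', ∀ w, HasDerivAt (Fw r) (Fww r w) w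
  cr : ContinuousOn (fun p : ℝ × ℝ => Fr p.1 p.2) (Iio t' ×ˢ univ)
  cw : ContinuousOn (fun p : ℝ × ℝ => Fw p.1 p.2) (Iio t' ×ˢ univ)
  cww : ContinuousOn (fun p : ℝ × ℝ => Fww p.1 p.2) (Iio t' ×ˢ univ)
  supp : ∃ s1 > s, ∃ R : ℝ, ∀ r w, (r ≤ s1 ∨ R ≤ |w|) →
    F r w = 0 ∧ Fr r w = 0 ∧ Fw r w = 0 ∧ Fww r w = 0

/-- The flow of measures `r ↦ m r` solves the Fokker–Planck equation with generator
`β ∂_w + ½ ∂_{ww}` on `(s, T]`, tested against functions that vanish at `w = 0` if `bc` holds. -/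
def WeakSol (s T : ℝ) (β : ℝ → ℝ → ℝ) (m : ProbabilityTheory.Kernel ℝ ℝ) (bc : Prop) : Prop :=
  ∀ (t' : ℝ) (F Fr Fw Fww : ℝ → ℝ → ℝ), TestFn s t' F Fr Fw Fww → (bc → ∀ r, F r 0 = 0) →
    ∀ t, s < t → t ≤ T → t < t' →
      ∫ w, F t w ∂(m t) =
        ∫ r in s..t, ∫ w, (Fr r w + β r w * Fw r w + 1 / 2 * Fww r w) ∂(m r)

/-- A time cutoff `θ` (zero before `s1`, one after `s2`) and a space cutoff `χ` (one on `[-R, R]`,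
zero off `[-(R+1), R+1]`), together with their derivatives. -/
structure CutData (R s1 s2 : ℝ) where
  θ : ℝ → ℝ
  θ1 : ℝ → ℝ
  χ : ℝ → ℝ
  χ1 : ℝ → ℝ
  χ2 : ℝ → ℝ
  hθ : ∀ r, HasDerivAt θ (θ1 r) r
  cθ1 : Continuous θ1
  θ_zero : ∀ r ≤ s1, θ r = 0 ∧ θ1 r = 0
  θ_one : ∀ r, s2 ≤ r → θ r = 1
  hχ : ∀ w, HasDerivAt χ (χ1 w) w
  hχ1 : ∀ w, HasDerivAt χ1 (χ2 w) w
  cχ2 : Continuous χ2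
  χ_zero : ∀ w, R + 1 ≤ |w| → χ w = 0 ∧ χ1 w = 0 ∧ χ2 w = 0
  χ_one : ∀ w, |w| ≤ R → χ w = 1
  χ_nonneg : ∀ w, 0 ≤ χ w

lemma exists_cutData {R s1 s2 : ℝ} (hR : 0 < R) (h12 : s1 < s2) : Nonempty (CutData R s1 s2) := by
  let b : ContDiffBump (0 : ℝ) := ⟨R, R + 1 / 2, hR, by linarith⟩
  let χ : ℝ → ℝ := b
  have hc : ContDiff ℝ 2 χ := b.contDiff
  let θ : ℝ → ℝ := fun r => Real.smoothTransition ((r - (s1 + s2) / 2) / ((s2 - s1) / 2))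
  have ht : ContDiff ℝ 1 θ :=
    (Real.smoothTransition.contDiff (n := 1)).comp (by fun_prop)
  have hc1 : ContDiff ℝ 1 (deriv χ) := ((contDiff_succ_iff_deriv (n := 1)).1 hc).2.2
  have hθz : ∀ r ≤ (s1 + s2) / 2, θ r = 0 := fun r hr =>
    Real.smoothTransition.zero_of_nonpos
      (div_nonpos_of_nonpos_of_nonneg (by linarith) (by linarith))
  have hχz : ∀ w, R + 1 / 2 ≤ |w| → χ w = 0 := fun w hw =>
    b.zero_of_le_dist (by change R + 1 / 2 ≤ dist w 0; simpa [Real.dist_eq] using hw)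
  have hχe : ∀ w, R + 1 ≤ |w| → χ =ᶠ[𝓝 w] fun _ => 0 := by
    intro w hw
    have : {w : ℝ | R + 1 / 2 < |w|} ∈ 𝓝 w :=
      (isOpen_lt continuous_const continuous_abs).mem_nhds (show R + 1 / 2 < |w| by linarith)
    filter_upwards [this] with v hv
    exact hχz v (le_of_lt hv)
  refine ⟨{ θ := θ, θ1 := deriv θ, χ := χ, χ1 := deriv χ, χ2 := deriv (deriv χ),
            hθ := fun r => (ht.differentiable (by norm_num) r).hasDerivAt
            cθ1 := ht.continuous_deriv le_rfl
            θ_zero := ?_, θ_one := ?_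
            hχ := fun r => (hc.differentiable (by norm_num) r).hasDerivAt
            hχ1 := fun r => (hc1.differentiable (by norm_num) r).hasDerivAt
            cχ2 := hc1.continuous_deriv le_rfl
            χ_zero := ?_, χ_one := ?_, χ_nonneg := ?_ }⟩
  · intro r hr
    refine ⟨hθz r (by linarith), ?_⟩
    have : θ =ᶠ[𝓝 r] fun _ => 0 := by
      filter_upwards [Iio_mem_nhds (show r < (s1 + s2) / 2 by linarith)] with v hv
      exact hθz v (le_of_lt hv)
    rw [this.deriv_eq]; simp
  · intro r hr
    apply Real.smoothTransition.one_of_one_le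
    rw [le_div_iff₀ (by linarith)]; linarith
  · intro w hw
    have h := hχe w hw
    refine ⟨hχz w (by linarith), ?_, ?_⟩
    · rw [h.deriv_eq]; simp
    · rw [h.deriv.deriv_eq]; simp
  · intro w hw
    exact b.one_of_mem_closedBall (by
      change dist w 0 ≤ R; simpa [Real.dist_eq] using hw)
  · intro w; exact b.nonneg

namespace CutData

variable {R s1 s2 : ℝ} (D : CutData R s1 s2)

/-- Coefficient of `∂_x heatG` in the action of the generator on a localised heat kernel. -/
def a (β : ℝ → ℝ → ℝ) (r w : ℝ) : ℝ := D.θ r * (D.χ1 w + β r w * D.χ w)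

/-- Coefficient of `heatG` in the action of the generator on a localised heat kernel. -/
def c (β : ℝ → ℝ → ℝ) (r w : ℝ) : ℝ :=
  D.θ1 r * D.χ w + D.θ r * (1 / 2 * D.χ2 w + β r w * D.χ1 w)

lemma cθ : Continuous D.θ := continuous_iff_continuousAt.2 fun x => (D.hθ x).continuousAt
lemma cχ : Continuous D.χ := continuous_iff_continuousAt.2 fun x => (D.hχ x).continuousAt
lemma cχ1 : Continuous D.χ1 := continuous_iff_continuousAt.2 fun x => (D.hχ1 x).continuousAt

lemma measurable_a {β : ℝ → ℝ → ℝ} (hβ : Measurable (fun p : ℝ × ℝ => β p.1 p.2)) :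
    Measurable (fun p : ℝ × ℝ => D.a β p.1 p.2) := by
  unfold a
  have h1 := D.cθ.measurable; have h2 := D.cχ.measurable; have h3 := D.cχ1.measurable
  fun_prop

lemma measurable_c {β : ℝ → ℝ → ℝ} (hβ : Measurable (fun p : ℝ × ℝ => β p.1 p.2)) :
    Measurable (fun p : ℝ × ℝ => D.c β p.1 p.2) := by
  unfold c
  have h1 := D.cθ.measurable; have h2 := D.cχ.measurable; have h3 := D.cχ1.measurable
  have h4 := D.cθ1.measurable; have h5 := D.cχ2.measurable
  fun_prop

lemma a_zero_time (β : ℝ → ℝ → ℝ) {r : ℝ} (hr : r ≤ s1) (w : ℝ) : D.a β r w = 0 := by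
  simp [a, (D.θ_zero r hr).1]
lemma c_zero_time (β : ℝ → ℝ → ℝ) {r : ℝ} (hr : r ≤ s1) (w : ℝ) : D.c β r w = 0 := by
  simp [c, (D.θ_zero r hr).1, (D.θ_zero r hr).2]
lemma a_zero_space (β : ℝ → ℝ → ℝ) (r : ℝ) {w : ℝ} (hw : R + 1 ≤ |w|) : D.a β r w = 0 := by
  simp [a, (D.χ_zero w hw).1, (D.χ_zero w hw).2.1]
lemma c_zero_space (β : ℝ → ℝ → ℝ) (r : ℝ) {w : ℝ} (hw : R + 1 ≤ |w|) : D.c β r w = 0 := by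
  simp [c, (D.χ_zero w hw).1, (D.χ_zero w hw).2.1, (D.χ_zero w hw).2.2]

/-- The localised heat kernel is a test function. -/
lemma testFn {s : ℝ} (hs : s < s1) (t' y : ℝ) :
    TestFn s t' (fun r w => D.θ r * D.χ w * heatG (t' - r) (w - y))
      (fun r w => D.θ1 r * D.χ w * heatG (t' - r) (w - y)
        - D.θ r * D.χ w * (1 / 2 * heatG2 (t' - r) (w - y)))
      (fun r w => D.θ r * (D.χ1 w * heatG (t' - r) (w - y) + D.χ w * heatG1 (t' - r) (w - y)))
      (fun r w => D.θ r * (D.χ2 w * heatG (t' - r) (w - y)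
        + 2 * D.χ1 w * heatG1 (t' - r) (w - y) + D.χ w * heatG2 (t' - r) (w - y))) := by
  have hm : MapsTo (fun p : ℝ × ℝ => (t' - p.1, p.2 - y)) (Iio t' ×ˢ univ) (Ioi 0 ×ˢ univ) := by
    rintro ⟨a, b⟩ ⟨h, -⟩
    exact ⟨by simpa using h, mem_univ _⟩
  have hcm : ContinuousOn (fun p : ℝ × ℝ => (t' - p.1, p.2 - y)) (Iio t' ×ˢ univ) := by fun_prop
  have g0 : ContinuousOn (fun p : ℝ × ℝ => heatG (t' - p.1) (p.2 - y)) (Iio t' ×ˢ univ) :=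
    continuousOn_heatG.comp hcm hm
  have g1 : ContinuousOn (fun p : ℝ × ℝ => heatG1 (t' - p.1) (p.2 - y)) (Iio t' ×ˢ univ) :=
    continuousOn_heatG1.comp hcm hm
  have g2 : ContinuousOn (fun p : ℝ × ℝ => heatG2 (t' - p.1) (p.2 - y)) (Iio t' ×ˢ univ) :=
    continuousOn_heatG2.comp hcm hm
  have h1 : ContinuousOn (fun p : ℝ × ℝ => D.θ p.1) (Iio t' ×ˢ univ) :=
    (D.cθ.comp continuous_fst).continuousOn
  have h4 : ContinuousOn (fun p : ℝ × ℝ => D.θ1 p.1) (Iio t' ×ˢ univ) :=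
    (D.cθ1.comp continuous_fst).continuousOn
  have h2 : ContinuousOn (fun p : ℝ × ℝ => D.χ p.2) (Iio t' ×ˢ univ) :=
    (D.cχ.comp continuous_snd).continuousOn
  have h3 : ContinuousOn (fun p : ℝ × ℝ => D.χ1 p.2) (Iio t' ×ˢ univ) :=
    (D.cχ1.comp continuous_snd).continuousOn
  have h5 : ContinuousOn (fun p : ℝ × ℝ => D.χ2 p.2) (Iio t' ×ˢ univ) :=
    (D.cχ2.comp continuous_snd).continuousOn
  constructor
  · intro r hr w
    have hp : 0 < t' - r := by linarith
    have hG : HasDerivAt (fun r => heatG (t' - r) (w - y))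
        (1 / 2 * heatG2 (t' - r) (w - y) * (-1)) r :=
      by simpa using (hasDerivAt_heatG_time hp (w - y)).comp_const_sub t' r
    refine (((D.hθ r).mul_const (D.χ w)).mul hG).congr_deriv ?_
    ring
  · intro r hr w
    have hp : 0 < t' - r := by linarith
    have hG := hasDerivAt_heatG_left hp w y
    refine (((D.hχ w).const_mul (D.θ r)).mul hG).congr_deriv ?_
    ring
  · intro r hr w
    have hp : 0 < t' - r := by linarith
    have hG := hasDerivAt_heatG_left hp w y
    have hG1 := hasDerivAt_heatG1_left hp w y
    refine ((((D.hχ1 w).mul hG).add ((D.hχ w).mul hG1)).const_mul (D.θ r)).congr_deriv ?_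
    ring
  · exact ((h4.mul h2).mul g0).sub ((h1.mul h2).mul (g2.const_mul _))
  · exact h1.mul ((h3.mul g0).add (h2.mul g1))
  · exact h1.mul (((h5.mul g0).add ((h3.const_mul _).mul g1)).add (h2.mul g2))
  · refine ⟨s1, hs, R + 1, ?_⟩
    rintro r w (h | h)
    · simp [(D.θ_zero r h).1, (D.θ_zero r h).2]
    · simp [(D.χ_zero w h).1, (D.χ_zero w h).2.1, (D.χ_zero w h).2.2]

lemma abs_le_of_a_ne {β : ℝ → ℝ → ℝ} {r w : ℝ} (h : D.a β r w ≠ 0) : |w| ≤ R + 1 := by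
  by_contra hc; exact h (D.a_zero_space β r (not_le.1 hc).le)

end CutData

/-- Local boundedness and local Hölder continuity in space of the drift. -/
def LocHolder (s T α : ℝ) (β : ℝ → ℝ → ℝ) : Prop :=
  ∀ R : ℝ, 0 < R → ∃ C : ℝ, 0 ≤ C ∧ ∀ r ∈ Icc s T, ∀ w w' : ℝ, |w| ≤ R → |w'| ≤ R →
    |β r w| ≤ C ∧ |β r w - β r w'| ≤ C * |w - w'| ^ α

lemma exists_bound_Icc {f : ℝ → ℝ} (hf : Continuous f) (a b : ℝ) :
    ∃ C, 0 ≤ C ∧ ∀ x ∈ Icc a b, |f x| ≤ C := by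
  obtain ⟨C, hC⟩ := isCompact_Icc.exists_bound_of_continuousOn (hf.continuousOn (s := Icc a b))
  exact ⟨max C 0, le_max_right _ _, fun x hx => (hC x hx).trans (le_max_left _ _)⟩

/-- A bounded differentiable function with bounded derivative is Hölder of every order below one. -/
lemma holder_of_deriv {f f' : ℝ → ℝ} {α A B : ℝ} (hα0 : 0 < α) (hα1 : α < 1)
    (hA : ∀ x, |f x| ≤ A) (hf : ∀ x, HasDerivAt f (f' x) x) (hB : ∀ x, |f' x| ≤ B) (x y : ℝ) :
    |f x - f y| ≤ (2 * A) ^ (1 - α) * B ^ α * |x - y| ^ α := by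
  have hB0 : 0 ≤ B := (abs_nonneg _).trans (hB 0)
  have hA0 : 0 ≤ A := (abs_nonneg _).trans (hA 0)
  have h1 : |f x - f y| ≤ B * |x - y| := by
    have := Convex.norm_image_sub_le_of_norm_hasDerivWithin_le (f := f) (f' := f') (s := univ)
      (C := B) (fun x _ => (hf x).hasDerivWithinAt) (fun x _ => hB x) convex_univ
      (mem_univ y) (mem_univ x)
    simpa using this
  have h2 : |f x - f y| ≤ 2 * A := by
    have h := abs_sub (f x) (f y)
    have := hA x; have := hA y
    linarith
  rcases (abs_nonneg (f x - f y)).eq_or_lt' with h | h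
  · rw [h]; positivity
  · calc |f x - f y| = |f x - f y| ^ (1 - α) * |f x - f y| ^ α := by
          rw [← Real.rpow_add h]; simp
      _ ≤ (2 * A) ^ (1 - α) * (B * |x - y|) ^ α := by
          gcongr
      _ = _ := by rw [Real.mul_rpow hB0 (abs_nonneg _)]; ring

/-- The localised coefficients are bounded uniformly in time, and `a` is also Hölder continuous in
space. -/
lemma CutData.bounds {R s1 s2 : ℝ} (D : CutData R s1 s2) (hR : 0 < R) {s T α : ℝ}
    (hα0 : 0 < α) (hα1 : α < 1)
    {β : ℝ → ℝ → ℝ} (hβ : LocHolder s T α β) :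
    ∃ C, 0 ≤ C ∧ ∀ r ∈ Icc s T, ∀ w, |D.a β r w| ≤ C ∧ |D.c β r w| ≤ C ∧
      ∀ w', |D.a β r w - D.a β r w'| ≤ C * |w - w'| ^ α := by
  obtain ⟨Cb, hCb, hb⟩ := hβ (R + 2) (by linarith)
  obtain ⟨B0, hB0, b0⟩ := exists_bound_Icc D.cθ s T
  obtain ⟨B1, hB1, b1⟩ := exists_bound_Icc D.cθ1 s T
  have ext : ∀ {f : ℝ → ℝ}, Continuous f → (∀ w, R + 1 ≤ |w| → f w = 0) →
      ∃ C, 0 ≤ C ∧ ∀ w, |f w| ≤ C := by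
    intro f hf h0
    obtain ⟨C, hC, h⟩ := exists_bound_Icc hf (-(R + 1)) (R + 1)
    refine ⟨C, hC, fun w => ?_⟩
    by_cases hw : R + 1 ≤ |w|
    · rw [h0 w hw]; simpa using hC
    · exact h w (abs_le.1 (not_le.1 hw).le)
  obtain ⟨K0, hK0, k0⟩ := ext D.cχ (fun w hw => (D.χ_zero w hw).1)
  obtain ⟨K1, hK1, k1⟩ := ext D.cχ1 (fun w hw => (D.χ_zero w hw).2.1)
  obtain ⟨K2, hK2, k2⟩ := ext D.cχ2 (fun w hw => (D.χ_zero w hw).2.2)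
  have hol0 := holder_of_deriv hα0 hα1 k0 D.hχ k1
  have hol1 := holder_of_deriv hα0 hα1 k1 D.hχ1 k2
  set L0 := (2 * K0) ^ (1 - α) * K1 ^ α with hL0
  set L1 := (2 * K1) ^ (1 - α) * K2 ^ α with hL1
  have hL0' : 0 ≤ L0 := by positivity
  have hL1' : 0 ≤ L1 := by positivity
  have ba : ∀ r ∈ Icc s T, ∀ w, |D.a β r w| ≤ B0 * (K1 + Cb * K0) := by
    intro r hr w
    by_cases hw : R + 1 ≤ |w|
    · rw [D.a_zero_space β r hw, abs_zero]; positivity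
    · have hb1 := (hb r hr w w (by linarith) (by linarith)).1
      unfold CutData.a
      rw [abs_mul]
      have : |D.χ1 w + β r w * D.χ w| ≤ K1 + Cb * K0 := by
        refine (abs_add_le _ _).trans ?_
        rw [abs_mul]
        have := k0 w; have := k1 w
        gcongr
      have := b0 r hr
      gcongr
  have bc : ∀ r ∈ Icc s T, ∀ w, |D.c β r w| ≤ B1 * K0 + B0 * (K2 + Cb * K1) := by
    intro r hr w
    by_cases hw : R + 1 ≤ |w|
    · rw [D.c_zero_space β r hw, abs_zero]; positivity
    · have hb1 := (hb r hr w w (by linarith) (by linarith)).1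
      unfold CutData.c
      refine (abs_add_le _ _).trans ?_
      rw [abs_mul, abs_mul]
      have h1 : |1 / 2 * D.χ2 w + β r w * D.χ1 w| ≤ K2 + Cb * K1 := by
        refine (abs_add_le _ _).trans ?_
        rw [abs_mul, abs_mul]
        have := k2 w; have := k1 w
        have h3 : |(1 / 2 : ℝ)| * |D.χ2 w| ≤ K2 := by
          rw [abs_of_pos (by norm_num)]; linarith [abs_nonneg (D.χ2 w)]
        gcongr
      have := b0 r hr; have := b1 r hr; have := k0 w
      gcongr
  have hol : ∀ r ∈ Icc s T, ∀ w w', |w| ≤ R + 2 → |w'| ≤ R + 2 →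
      |D.a β r w - D.a β r w'| ≤ B0 * (L1 + Cb * L0 + Cb * K0) * |w - w'| ^ α := by
    intro r hr w w' hw hw'
    obtain ⟨h1, h2⟩ := hb r hr w w' hw hw'
    unfold CutData.a
    have e : D.θ r * (D.χ1 w + β r w * D.χ w) - D.θ r * (D.χ1 w' + β r w' * D.χ w') =
      D.θ r * ((D.χ1 w - D.χ1 w') + β r w * (D.χ w - D.χ w') + (β r w - β r w') * D.χ w') := by
      ring
    rw [e, abs_mul, mul_assoc]
    have := b0 r hr
    gcongr
    calc _ ≤ |D.χ1 w - D.χ1 w'| + |β r w| * |D.χ w - D.χ w'| + |β r w - β r w'| * |D.χ w'| := by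
          refine (abs_add_le _ _).trans ?_
          rw [abs_mul (β r w - β r w')]
          gcongr
          refine (abs_add_le _ _).trans ?_
          rw [abs_mul]
      _ ≤ L1 * |w - w'| ^ α + Cb * (L0 * |w - w'| ^ α) + Cb * |w - w'| ^ α * K0 := by
          have := hol0 w w'; have := hol1 w w'; have := k0 w'
          gcongr
      _ = _ := by ring
  set CA := B0 * (K1 + Cb * K0)
  set CC := B1 * K0 + B0 * (K2 + Cb * K1)
  set CH := B0 * (L1 + Cb * L0 + Cb * K0)
  have pA : 0 ≤ CA := by positivity
  have pC : 0 ≤ CC := by positivity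
  have pH : 0 ≤ CH := by positivity
  refine ⟨CA + CC + CH, by positivity, fun r hr w => ⟨(ba r hr w).trans (by linarith),
    (bc r hr w).trans (by linarith), fun w' => ?_⟩⟩
  -- far apart points: one of them lies outside the support, at distance at least one
  have far : ∀ u u', R + 2 < |u| →
      |D.a β r u - D.a β r u'| ≤ (CA + CC + CH) * |u - u'| ^ α := by
    intro u u' hu
    rw [D.a_zero_space β r (w := u) (by linarith), zero_sub, abs_neg]
    by_cases hu' : R + 1 ≤ |u'|
    · rw [D.a_zero_space β r hu', abs_zero]; positivity
    · have h1 : 1 ≤ |u - u'| := by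
        have := abs_sub_abs_le_abs_sub u u'
        linarith
      have h2 := Real.one_le_rpow h1 hα0.le
      have := ba r hr u'
      nlinarith
  by_cases hw : |w| ≤ R + 2
  · by_cases hw' : |w'| ≤ R + 2
    · refine (hol r hr w w' hw hw').trans ?_
      gcongr
      linarith
    · rw [abs_sub_comm, abs_sub_comm w w']
      exact far w' w (not_le.1 hw')
  · exact far w w' (not_le.1 hw)

/-! ### The Duhamel formula and locally bounded densities -/

/-- Uniform bound, of order `τ ^ (-γ)`, for the flow `m` localised in space and smoothed by the
heat kernel. For `γ = 0` this says that the measures `m r` have locally bounded densities. -/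
def HBd (s T γ : ℝ) (m : ProbabilityTheory.Kernel ℝ ℝ) : Prop :=
  ∀ R s1 M : ℝ, 0 < R → s < s1 → 0 < M → ∃ C : ℝ, 0 ≤ C ∧ ∀ r, s1 ≤ r → r ≤ T →
    ∀ τ, 0 < τ → τ ≤ M → ∀ y, ∫ w in Icc (-R) R, heatG τ (w - y) ∂(m r) ≤ C * τ ^ (-γ)

lemma integrable_heatG_shift {τ : ℝ} (hτ : 0 < τ) (y : ℝ) (ρ : Measure ℝ) [IsFiniteMeasure ρ] :
    Integrable (fun w => heatG τ (w - y)) ρ := by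
  refine Integrable.of_bound
    ((continuous_heatG hτ).comp (by fun_prop : Continuous fun w : ℝ => w - y)).aestronglyMeasurable
    (τ ^ (-(1 / 2) : ℝ)) ?_
  filter_upwards with w
  rw [Real.norm_eq_abs, abs_of_nonneg (heatG_nonneg _ _)]
  exact heatG_le hτ _

/-- Domination of an integral by the localised heat-smoothed measure. -/
lemma abs_integral_le_heat {ρ : Measure ℝ} [IsFiniteMeasure ρ] {τ y B R : ℝ} (hτ : 0 < τ)
    {φ : ℝ → ℝ} (hφ : ∀ w, |φ w| ≤ B * heatG τ (w - y)) (h0 : ∀ w, R ≤ |w| → φ w = 0) :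
    |∫ w, φ w ∂ρ| ≤ B * ∫ w in Icc (-R) R, heatG τ (w - y) ∂ρ := by
  rw [← integral_const_mul, ← integral_indicator measurableSet_Icc, ← Real.norm_eq_abs]
  refine norm_integral_le_of_norm_le (((integrable_heatG_shift hτ y ρ).const_mul B).indicator
    measurableSet_Icc) ?_
  filter_upwards with w
  by_cases hw : w ∈ Icc (-R) R
  · rw [indicator_of_mem hw]; exact hφ w
  · rw [indicator_of_notMem hw, h0 w]
    · simp
    · by_contra hc
      exact hw (abs_le.1 (not_le.1 hc).le)

lemma intervalIntegrable_sub_rpow (s t : ℝ) {p : ℝ} (hp : -1 < p) :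
    IntervalIntegrable (fun r => (t - r) ^ p) volume s t := by
  have h := (intervalIntegral.intervalIntegrable_rpow' (a := t - s) (b := t - t) hp).comp_sub_left t
  simpa using h

lemma integral_sub_rpow (s t : ℝ) {p : ℝ} (hp : -1 < p) :
    ∫ r in s..t, (t - r) ^ p = (t - s) ^ (p + 1) / (p + 1) := by
  rw [intervalIntegral.integral_comp_sub_left (fun r => r ^ p) t, integral_rpow (Or.inl hp)]
  simp [Real.zero_rpow (by linarith : p + 1 ≠ 0)]

lemma abs_integral_le_rpow {f : ℝ → ℝ} {s t p K : ℝ} (hst : s ≤ t) (hp : -1 < p)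
    (hf : ∀ r, s < r → r < t → |f r| ≤ K * (t - r) ^ p) :
    |∫ r in s..t, f r| ≤ K * ((t - s) ^ (p + 1) / (p + 1)) := by
  rw [← integral_sub_rpow s t hp, ← intervalIntegral.integral_const_mul, ← Real.norm_eq_abs]
  refine intervalIntegral.norm_integral_le_of_norm_le hst ?_
    ((intervalIntegrable_sub_rpow s t hp).const_mul K)
  have : ∀ᵐ r : ℝ, r ≠ t := by simp [ae_iff, measure_singleton]
  filter_upwards [this] with r hr hr2
  exact hf r hr2.1 (lt_of_le_of_ne hr2.2 hr)

namespace CutData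

variable {R s1 s2 : ℝ} (D : CutData R s1 s2)

/-- The source term at time `r` in the Duhamel formula, at heat time `τ` and position `y`. -/
def H (β : ℝ → ℝ → ℝ) (m : ProbabilityTheory.Kernel ℝ ℝ) (τ y r : ℝ) : ℝ :=
  ∫ w, (D.a β r w * heatG1 τ (w - y) + D.c β r w * heatG τ (w - y)) ∂(m r)

/-- The `y`-derivative of `CutData.H`. -/
def H' (β : ℝ → ℝ → ℝ) (m : ProbabilityTheory.Kernel ℝ ℝ) (τ y r : ℝ) : ℝ :=
  ∫ w, (D.a β r w * -heatG2 τ (w - y) + D.c β r w * -heatG1 τ (w - y)) ∂(m r)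

lemma H_zero_time (β : ℝ → ℝ → ℝ) (m : ProbabilityTheory.Kernel ℝ ℝ) (τ y : ℝ) {r : ℝ}
    (hr : r ≤ s1) : D.H β m τ y r = 0 := by
  simp [H, D.a_zero_time β hr, D.c_zero_time β hr]

lemma H'_zero_time (β : ℝ → ℝ → ℝ) (m : ProbabilityTheory.Kernel ℝ ℝ) (τ y : ℝ) {r : ℝ}
    (hr : r ≤ s1) : D.H' β m τ y r = 0 := by
  simp [H', D.a_zero_time β hr, D.c_zero_time β hr]

lemma one_le_aux {τ M : ℝ} (hτ : 0 < τ) (hM : τ ≤ M) : 1 ≤ √M * τ ^ (-(1 / 2) : ℝ) := by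
  rw [Real.rpow_neg hτ.le, ← Real.sqrt_eq_rpow, ← div_eq_mul_inv, le_div_iff₀ (Real.sqrt_pos.2 hτ),
    one_mul]
  exact Real.sqrt_le_sqrt hM

lemma rpow_add_half {τ : ℝ} (hτ : 0 < τ) (p : ℝ) :
    τ ^ (-(1 / 2) : ℝ) * τ ^ p = τ ^ (-(1 / 2) + p) := (Real.rpow_add hτ _ _).symm

/-- The source term costs a factor `τ ^ (-1 / 2)`, and its derivative a factor `τ ^ (-1)`, over the
bound provided by `HBd`. -/
lemma H_bound {s T α γ : ℝ} (hs : s < s1) (hR : 0 < R) (hα0 : 0 < α) (hα1 : α < 1) (hγ : 0 ≤ γ)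
    {β : ℝ → ℝ → ℝ} (hβ : LocHolder s T α β) {m : ProbabilityTheory.Kernel ℝ ℝ}
    [ProbabilityTheory.IsFiniteKernel m] (hm : HBd s T γ m) (M : ℝ) (hM : 0 < M) :
    ∃ C, 0 ≤ C ∧ ∀ r ∈ Icc s T, ∀ τ, 0 < τ → τ ≤ M → ∀ y,
      |D.H β m τ y r| ≤ C * τ ^ (-(1 / 2) + -γ) ∧ |D.H' β m τ y r| ≤ C * τ ^ (-1 + -γ) := by
  obtain ⟨A, hA, hb⟩ := D.bounds hR hα0 hα1 hβ
  obtain ⟨C, hC, h⟩ := hm (R + 1) s1 (2 * M) (by linarith) hs (by linarith)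
  refine ⟨A * 100 * (1 + √M) * C, by positivity, fun r hr τ hτ hτM y => ?_⟩
  by_cases hrs : r ≤ s1
  · rw [D.H_zero_time β m τ y hrs, D.H'_zero_time β m τ y hrs, abs_zero]
    constructor <;> positivity
  have hh := h r (not_le.1 hrs).le hr.2 (2 * τ) (by linarith) (by linarith) y
  have h2 : (2 * τ) ^ (-γ) ≤ τ ^ (-γ) :=
    Real.rpow_le_rpow_of_nonpos hτ (by linarith) (by linarith)
  have hone := one_le_aux hτ hτM
  have hh' : ∫ w in Icc (-(R + 1)) (R + 1), heatG (2 * τ) (w - y) ∂(m r) ≤ C * τ ^ (-γ) :=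
    hh.trans (by gcongr)
  set q := τ ^ (-(1 / 2) : ℝ) with hq
  have hq0 : 0 < q := by positivity
  have hqq : q * q = τ⁻¹ := by
    rw [hq, ← Real.rpow_add hτ, ← Real.rpow_neg_one]; norm_num
  constructor
  · refine (abs_integral_le_heat (B := A * 100 * (1 + √M) * q) (R := R + 1) (y := y)
      (by linarith : 0 < 2 * τ) ?_ ?_).trans ?_
    · intro w
      refine (abs_add_le _ _).trans ?_
      rw [abs_mul, abs_mul, abs_of_nonneg (heatG_nonneg _ _)]
      have h3 := abs_heatG1_le hτ (w - y)
      have h4 := heatG_le_double hτ (w - y)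
      have h5 := (hb r hr w).1
      have h6 := (hb r hr w).2.1
      have h7 := heatG_nonneg (2 * τ) (w - y)
      have h8 := heatG_nonneg τ (w - y)
      calc _ ≤ A * (100 * q * heatG (2 * τ) (w - y)) + A * (100 * heatG (2 * τ) (w - y)) := by
            gcongr
        _ ≤ A * (100 * q * heatG (2 * τ) (w - y))
            + A * (100 * (√M * q * heatG (2 * τ) (w - y))) := by
            gcongr
            exact le_mul_of_one_le_left h7 hone
        _ = _ := by ring
    · intro w hw
      simp [D.a_zero_space β r hw, D.c_zero_space β r hw]
    · calc _ ≤ A * 100 * (1 + √M) * q * (C * τ ^ (-γ)) := by gcongr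
        _ = A * 100 * (1 + √M) * C * (q * τ ^ (-γ)) := by ring
        _ = _ := by rw [hq, rpow_add_half hτ]
  · refine (abs_integral_le_heat (B := A * 100 * (1 + √M) * τ⁻¹) (R := R + 1) (y := y)
      (by linarith : 0 < 2 * τ) ?_ ?_).trans ?_
    · intro w
      refine (abs_add_le _ _).trans ?_
      rw [abs_mul, abs_mul, abs_neg, abs_neg]
      have h3 := abs_heatG2_le hτ (w - y)
      have h4 := abs_heatG1_le hτ (w - y)
      have h5 := (hb r hr w).1
      have h6 := (hb r hr w).2.1
      have h7 := heatG_nonneg (2 * τ) (w - y)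
      rw [← hq] at h4
      calc _ ≤ A * (100 * τ⁻¹ * heatG (2 * τ) (w - y)) + A * (100 * q * heatG (2 * τ) (w - y)) := by
            gcongr
        _ ≤ A * (100 * τ⁻¹ * heatG (2 * τ) (w - y))
            + A * (100 * q * (√M * q * heatG (2 * τ) (w - y))) := by
            gcongr
            exact le_mul_of_one_le_left h7 hone
        _ = A * (100 * τ⁻¹ * heatG (2 * τ) (w - y))
            + A * (100 * √M * (q * q) * heatG (2 * τ) (w - y)) := by ring
        _ = _ := by rw [hqq]; ring
    · intro w hw
      simp [D.a_zero_space β r hw, D.c_zero_space β r hw]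
    · calc _ ≤ A * 100 * (1 + √M) * τ⁻¹ * (C * τ ^ (-γ)) := by gcongr
        _ = A * 100 * (1 + √M) * C * (τ ^ (-1 : ℝ) * τ ^ (-γ)) := by
            rw [Real.rpow_neg_one]; ring
        _ = _ := by rw [← Real.rpow_add hτ]

/-- Duhamel formula for a flow without boundary condition. -/
lemma identity_free {s T : ℝ} (hs : s < s1) {β : ℝ → ℝ → ℝ}
    {m : ProbabilityTheory.Kernel ℝ ℝ} (hm : WeakSol s T β m False) {t : ℝ} (hst : s < t)
    (ht2 : s2 ≤ t) (htT : t ≤ T) {τ : ℝ} (hτ : 0 < τ) (y : ℝ) :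
    ∫ w, D.χ w * heatG τ (w - y) ∂(m t) = ∫ r in s..t, D.H β m (t + τ - r) y r := by
  have h := hm (t + τ) _ _ _ _ (D.testFn hs (t + τ) y) (fun h => h.elim) t hst htT (by linarith)
  simp only [D.θ_one t ht2, one_mul, add_sub_cancel_left] at h
  rw [h]
  refine intervalIntegral.integral_congr fun r _ => ?_
  unfold H a c
  refine integral_congr_ae (ae_of_all _ fun w => ?_)
  simp only
  ring

end CutData

lemma TestFn.sub {s t' : ℝ} {F Fr Fw Fww G Gr Gw Gww : ℝ → ℝ → ℝ} (hF : TestFn s t' F Fr Fw Fww)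
    (hG : TestFn s t' G Gr Gw Gww) :
    TestFn s t' (fun r w => F r w - G r w) (fun r w => Fr r w - Gr r w)
      (fun r w => Fw r w - Gw r w) (fun r w => Fww r w - Gww r w) := by
  constructor
  · exact fun r hr w => (hF.dr r hr w).sub (hG.dr r hr w)
  · exact fun r hr w => (hF.dw r hr w).sub (hG.dw r hr w)
  · exact fun r hr w => (hF.dww r hr w).sub (hG.dww r hr w)
  · exact hF.cr.sub hG.cr
  · exact hF.cw.sub hG.cw
  · exact hF.cww.sub hG.cww
  · obtain ⟨s1, h1, R1, k1⟩ := hF.supp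
    obtain ⟨s2, h2, R2, k2⟩ := hG.supp
    refine ⟨min s1 s2, lt_min h1 h2, max R1 R2, fun r w h => ?_⟩
    have a1 := k1 r w (h.imp (fun h => h.trans (min_le_left _ _))
      (fun h => (le_max_left _ _).trans h))
    have a2 := k2 r w (h.imp (fun h => h.trans (min_le_right _ _))
      (fun h => (le_max_right _ _).trans h))
    simp [a1.1, a1.2.1, a1.2.2.1, a1.2.2.2, a2.1, a2.2.1, a2.2.2.1, a2.2.2.2]

section Bounds

variable {s T α : ℝ} {β : ℝ → ℝ → ℝ} {ν : ProbabilityTheory.Kernel ℝ ℝ}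
  [ProbabilityTheory.IsFiniteKernel ν]

/-- The trivial bound: the supremum of the heat kernel times a mass of at most one. -/
lemma hBd_half (hν : ∀ r, (ν r).real univ ≤ 1) : HBd s T (1 / 2) ν := by
  intro R s1 M hR hs1 hM
  refine ⟨1, zero_le_one, fun r h1 h2 τ hτ hτM y => ?_⟩
  have h3 : ∫ w in Icc (-R) R, heatG τ (w - y) ∂(ν r) ≤ ∫ w, heatG τ (w - y) ∂(ν r) :=
    setIntegral_le_integral (integrable_heatG_shift hτ y _)
      (ae_of_all _ fun w => heatG_nonneg _ _)
  refine h3.trans ?_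
  calc _ ≤ ∫ w, τ ^ (-(1 / 2) : ℝ) ∂(ν r) :=
        integral_mono (integrable_heatG_shift hτ y _) (integrable_const _)
          (fun w => heatG_le hτ _)
    _ = (ν r).real univ * τ ^ (-(1 / 2) : ℝ) := by simp
    _ ≤ _ := by have := hν r; gcongr

/-- One application of the Duhamel formula gains a factor `τ ^ (1/4)`. -/
lemma hBd_improve (hα0 : 0 < α) (hα1 : α < 1) (hβ : LocHolder s T α β)
    (hν : WeakSol s T β ν False) {γ : ℝ} (hγ : 1 / 4 ≤ γ) (h : HBd s T γ ν) :
    HBd s T (γ - 1 / 4) ν := by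
  intro R s1 M hR hs1 hM
  set s0 := (s + s1) / 2 with hs0
  obtain ⟨D⟩ := exists_cutData hR (show s0 < s1 by linarith)
  by_cases hsT : s < T
  swap
  · exact ⟨0, le_rfl, fun r h1 h2 => by linarith⟩
  obtain ⟨C, hC, hb⟩ := D.H_bound (by linarith : s < s0) hR hα0 hα1 (by linarith : 0 ≤ γ) hβ h
    (T - s + M) (by linarith)
  refine ⟨C * ((T - s) ^ (-(3 / 4) + 1 : ℝ) / (-(3 / 4) + 1)), ?_, fun r h1 h2 τ hτ hτM y => ?_⟩
  · have : (0 : ℝ) ≤ T - s := by linarith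
    have h3 : (0 : ℝ) < -(3 / 4) + 1 := by norm_num
    positivity
  have e1 : ∫ w in Icc (-R) R, heatG τ (w - y) ∂(ν r) ≤ ∫ w, D.χ w * heatG τ (w - y) ∂(ν r) := by
    have hi := integrable_heatG_shift hτ y (ν r)
    have hint : Integrable (fun w => D.χ w * heatG τ (w - y)) (ν r) := by
      obtain ⟨B, -, hB⟩ := exists_bound_Icc D.cχ (-(R + 1)) (R + 1)
      refine hi.bdd_mul (c := max B 0) D.cχ.aestronglyMeasurable (ae_of_all _ fun w => ?_)
      by_cases hw : R + 1 ≤ |w|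
      · rw [(D.χ_zero w hw).1]; simp
      · exact (hB w (abs_le.1 (not_le.1 hw).le)).trans (le_max_left _ _)
    rw [← integral_indicator measurableSet_Icc]
    refine integral_mono (hi.indicator measurableSet_Icc) hint fun w => ?_
    by_cases hw : w ∈ Icc (-R) R
    · rw [indicator_of_mem hw, D.χ_one w (abs_le.2 hw), one_mul]
    · rw [indicator_of_notMem hw]
      exact mul_nonneg (D.χ_nonneg w) (heatG_nonneg _ _)
  refine e1.trans ?_
  rw [D.identity_free (by linarith) hν (by linarith) h1 h2 hτ y]
  refine (le_abs_self _).trans ((abs_integral_le_rpow (p := -(3 / 4)) (by linarith) (by norm_num)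
    (K := C * τ ^ (-(γ - 1 / 4))) fun q hq1 hq2 => ?_).trans ?_)
  · have hp : 0 < r + τ - q := by linarith
    refine (hb q ⟨hq1.le, by linarith⟩ (r + τ - q) hp (by linarith) y).1.trans ?_
    -- the power `-3/4` is integrable in time, the remaining power is bounded by its value at `τ`
    have e : (-(1 / 2) + -γ : ℝ) = -(γ - 1 / 4) + -(3 / 4) := by ring
    rw [e, Real.rpow_add hp, mul_assoc]
    have i1 : (r + τ - q) ^ (-(γ - 1 / 4)) ≤ τ ^ (-(γ - 1 / 4)) :=
      Real.rpow_le_rpow_of_nonpos hτ (by linarith) (by linarith)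
    have i2 : (r + τ - q) ^ (-(3 / 4) : ℝ) ≤ (r - q) ^ (-(3 / 4) : ℝ) :=
      Real.rpow_le_rpow_of_nonpos (by linarith) (by linarith) (by norm_num)
    have : 0 ≤ r - q := by linarith
    gcongr
  · have : (r - s) ^ (-(3 / 4) + 1 : ℝ) ≤ (T - s) ^ (-(3 / 4) + 1 : ℝ) := by
      apply Real.rpow_le_rpow <;> [linarith; linarith; norm_num]
    have h3 : (0 : ℝ) < -(3 / 4) + 1 := by norm_num
    calc _ ≤ C * τ ^ (-(γ - 1 / 4)) * ((T - s) ^ (-(3 / 4) + 1 : ℝ) / (-(3 / 4) + 1)) := by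
          gcongr
      _ = _ := by ring

/-- Two improvements bring the trivial exponent `1/2` down to zero. -/
lemma hBd_zero (hα0 : 0 < α) (hα1 : α < 1) (hβ : LocHolder s T α β)
    (hm : ∀ r, (ν r).real univ ≤ 1) (hν : WeakSol s T β ν False) : HBd s T 0 ν := by
  have h1 := hBd_improve hα0 hα1 hβ hν (by norm_num) (hBd_half hm)
  have h2 := hBd_improve hα0 hα1 hβ hν (by norm_num) h1
  norm_num at h2
  exact h2

lemma HBd.mono {γ : ℝ} {μ : ProbabilityTheory.Kernel ℝ ℝ}
    (hμ : ∀ r, μ r ≤ ν r) (h : HBd s T γ ν) : HBd s T γ μ := by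
  intro R s1 M hR hs1 hM
  obtain ⟨C, hC, hb⟩ := h R s1 M hR hs1 hM
  refine ⟨C, hC, fun r h1 h2 τ hτ hτM y => le_trans ?_ (hb r h1 h2 τ hτ hτM y)⟩
  exact integral_mono_measure (Measure.restrict_mono le_rfl (hμ r))
    (ae_of_all _ fun w => heatG_nonneg _ _) (integrable_heatG_shift hτ y _).integrableOn

end Bounds

/-! ### The source term and its reflection -/

namespace CutData

variable {R s1 s2 : ℝ} (D : CutData R s1 s2) {s T α : ℝ} {β : ℝ → ℝ → ℝ}
  {μ : ProbabilityTheory.Kernel ℝ ℝ} [ProbabilityTheory.IsFiniteKernel μ]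

lemma heatG_sup {τ0 τ : ℝ} (h0 : 0 < τ0) (h : τ0 ≤ τ) (x : ℝ) :
    |heatG τ x| ≤ 100 * (1 + τ0⁻¹) * τ0 ^ (-(1 / 2) : ℝ) ∧
    |heatG1 τ x| ≤ 100 * (1 + τ0⁻¹) * (1 + τ0 ^ (-(1 / 2) : ℝ)) * τ0 ^ (-(1 / 2) : ℝ) ∧
    |heatG2 τ x| ≤ 100 * (1 + τ0⁻¹) * τ0 ^ (-(1 / 2) : ℝ) := by
  have hτ : 0 < τ := by linarith
  have e1 : τ ^ (-(1 / 2) : ℝ) ≤ τ0 ^ (-(1 / 2) : ℝ) :=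
    Real.rpow_le_rpow_of_nonpos h0 h (by norm_num)
  have e2 : (2 * τ) ^ (-(1 / 2) : ℝ) ≤ τ0 ^ (-(1 / 2) : ℝ) :=
    Real.rpow_le_rpow_of_nonpos h0 (by linarith) (by norm_num)
  have e3 : τ⁻¹ ≤ τ0⁻¹ := inv_anti₀ h0 h
  have g2 := (heatG_le (by linarith : 0 < 2 * τ) x).trans e2
  have g0 := heatG_nonneg (2 * τ) x
  have i0 : 0 < τ0⁻¹ := by positivity
  have j0 : 0 < τ0 ^ (-(1 / 2) : ℝ) := by positivity
  set j := τ0 ^ (-(1 / 2) : ℝ)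
  set i := τ0⁻¹
  refine ⟨?_, ?_, ?_⟩
  · rw [abs_of_nonneg (heatG_nonneg _ _)]
    refine (heatG_le hτ x).trans (e1.trans ?_)
    nlinarith [mul_pos i0 j0]
  · refine (abs_heatG1_le hτ x).trans ?_
    calc 100 * τ ^ (-(1 / 2) : ℝ) * heatG (2 * τ) x ≤ 100 * j * j := by gcongr
      _ ≤ _ := by nlinarith [mul_pos i0 j0, mul_pos j0 j0, mul_pos i0 (mul_pos j0 j0)]
  · refine (abs_heatG2_le hτ x).trans ?_
    calc 100 * τ⁻¹ * heatG (2 * τ) x ≤ 100 * i * j := by gcongr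
      _ ≤ _ := by nlinarith [mul_pos i0 j0]

lemma heatG_sup' {τ0 : ℝ} (h0 : 0 < τ0) : ∃ B, 0 ≤ B ∧ ∀ τ, τ0 ≤ τ → ∀ x,
    |heatG τ x| ≤ B ∧ |heatG1 τ x| ≤ B ∧ |heatG2 τ x| ≤ B := by
  refine ⟨100 * (1 + τ0⁻¹) * (1 + τ0 ^ (-(1 / 2) : ℝ)) * τ0 ^ (-(1 / 2) : ℝ)
    + 100 * (1 + τ0⁻¹) * τ0 ^ (-(1 / 2) : ℝ), by positivity, fun τ hτ x => ?_⟩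
  obtain ⟨h1, h2, h3⟩ := heatG_sup h0 hτ x
  refine ⟨h1.trans (le_add_of_nonneg_left (by positivity)),
    h2.trans (le_add_of_nonneg_right (by positivity)),
    h3.trans (le_add_of_nonneg_left (by positivity))⟩

lemma integrable_H (hR : 0 < R) (hα0 : 0 < α) (hα1 : α < 1) (hβ : LocHolder s T α β)
    (hβm : Measurable (fun p : ℝ × ℝ => β p.1 p.2)) {r : ℝ} (hr : r ∈ Icc s T)
    (ρ : Measure ℝ) [IsFiniteMeasure ρ] {f f' : ℝ → ℝ} (hf : Continuous f) (hf' : Continuous f')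
    {B : ℝ} (hB : ∀ x, |f x| ≤ B) (hB' : ∀ x, |f' x| ≤ B) :
    Integrable (fun w => D.a β r w * f w + D.c β r w * f' w) ρ := by
  obtain ⟨A, hA, hb⟩ := D.bounds hR hα0 hα1 hβ
  have ha := (D.measurable_a hβm).comp (measurable_const.prodMk measurable_id : Measurable fun w : ℝ => (r, w))
  have hc := (D.measurable_c hβm).comp (measurable_const.prodMk measurable_id : Measurable fun w : ℝ => (r, w))
  refine Integrable.of_bound (((ha.mul hf.measurable).add (hc.mul hf'.measurable)).aestronglyMeasurable)
    (A * B + A * B) (ae_of_all _ fun w => ?_)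
  refine (norm_add_le _ _).trans ?_
  have h1 := (hb r hr w).1
  have h2 := (hb r hr w).2.1
  rw [norm_mul, norm_mul]
  simp only [Real.norm_eq_abs]
  have := hB w; have := hB' w
  gcongr

lemma measurable_H (hβm : Measurable (fun p : ℝ × ℝ => β p.1 p.2)) :
    Measurable (fun p : ℝ × ℝ × ℝ => D.H β μ p.1 p.2.1 p.2.2) ∧
    Measurable (fun p : ℝ × ℝ × ℝ => D.H' β μ p.1 p.2.1 p.2.2) := by
  have h22 : Measurable (fun p : ℝ × ℝ × ℝ => p.2.2) := by fun_prop
  have pa : Measurable (fun q : (ℝ × ℝ × ℝ) × ℝ => (q.1.2.2, q.2)) := by fun_prop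
  have ph : Measurable (fun q : (ℝ × ℝ × ℝ) × ℝ => (q.1.1, q.2 - q.1.2.1)) := by fun_prop
  have ha := (D.measurable_a hβm).comp pa
  have hc := (D.measurable_c hβm).comp pa
  have g0 := measurable_heatG.comp ph
  have g1 := measurable_heatG1.comp ph
  have g2 := measurable_heatG2.comp ph
  constructor
  · exact (StronglyMeasurable.integral_kernel_prod_right' (κ := μ.comap _ h22)
      ((ha.mul g1).add (hc.mul g0)).stronglyMeasurable).measurable
  · exact (StronglyMeasurable.integral_kernel_prod_right' (κ := μ.comap _ h22)
      ((ha.mul g2.neg).add (hc.mul g1.neg)).stronglyMeasurable).measurable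

lemma cont_shift {τ : ℝ} (hτ : 0 < τ) (y : ℝ) :
    Continuous (fun w => heatG τ (w - y)) ∧ Continuous (fun w => heatG1 τ (w - y)) ∧
    Continuous (fun w => heatG2 τ (w - y)) := by
  have h : Continuous fun w : ℝ => w - y := by fun_prop
  exact ⟨(continuous_heatG hτ).comp h, (continuous_heatG1 hτ).comp h, (continuous_heatG2 hτ).comp h⟩

lemma cont_shift' {τ : ℝ} (hτ : 0 < τ) (w : ℝ) :
    Continuous (fun y => heatG τ (w - y)) ∧ Continuous (fun y => heatG1 τ (w - y)) ∧
    Continuous (fun y => heatG2 τ (w - y)) := by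
  have h : Continuous fun y : ℝ => w - y := by fun_prop
  exact ⟨(continuous_heatG hτ).comp h, (continuous_heatG1 hτ).comp h, (continuous_heatG2 hτ).comp h⟩

lemma H_abs_aux {A B a b c d : ℝ} (ha : |a| ≤ A) (hb : |b| ≤ B) (hc : |c| ≤ A) (hd : |d| ≤ B) :
    ‖a * b + c * d‖ ≤ A * B + A * B := by
  have : 0 ≤ A := (abs_nonneg _).trans ha
  have : 0 ≤ B := (abs_nonneg _).trans hb
  refine (norm_add_le _ _).trans ?_
  rw [norm_mul, norm_mul]
  simp only [Real.norm_eq_abs]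
  gcongr

lemma hasDerivAt_H (hR : 0 < R) (hα0 : 0 < α) (hα1 : α < 1) (hβ : LocHolder s T α β)
    (hβm : Measurable (fun p : ℝ × ℝ => β p.1 p.2)) {r : ℝ} (hr : r ∈ Icc s T) {τ : ℝ}
    (hτ : 0 < τ) (y : ℝ) :
    HasDerivAt (fun y => D.H β μ τ y r) (D.H' β μ τ y r) y := by
  obtain ⟨A, hA, hb⟩ := D.bounds hR hα0 hα1 hβ
  obtain ⟨B, hB, hg⟩ := heatG_sup' hτ
  have hint : ∀ y, Integrable (fun w => D.a β r w * heatG1 τ (w - y) + D.c β r w * heatG τ (w - y))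
      (μ r) := fun y => D.integrable_H hR hα0 hα1 hβ hβm hr _ (cont_shift hτ y).2.1
        (cont_shift hτ y).1 (fun x => (hg τ le_rfl _).2.1) (fun x => (hg τ le_rfl _).1)
  have hint' : Integrable
      (fun w => D.a β r w * -heatG2 τ (w - y) + D.c β r w * -heatG1 τ (w - y)) (μ r) :=
    D.integrable_H hR hα0 hα1 hβ hβm hr _ (cont_shift hτ y).2.2.neg
        (cont_shift hτ y).2.1.neg (fun _ => (abs_neg _).le.trans (hg τ le_rfl _).2.2)
        (fun _ => (abs_neg _).le.trans (hg τ le_rfl _).2.1)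
  refine (hasDerivAt_integral_of_dominated_loc_of_deriv_le (s := univ)
    (F := fun y w => D.a β r w * heatG1 τ (w - y) + D.c β r w * heatG τ (w - y))
    (F' := fun y w => D.a β r w * -heatG2 τ (w - y) + D.c β r w * -heatG1 τ (w - y))
    (bound := fun _ => A * B + A * B) univ_mem (Eventually.of_forall fun y => (hint y).1)
    (hint y) hint'.1 (ae_of_all _ fun w y _ => ?_) (integrable_const _)
    (ae_of_all _ fun w y _ => ?_)).2
  · exact H_abs_aux (hb r hr w).1 (by rw [abs_neg]; exact (hg τ le_rfl _).2.2) (hb r hr w).2.1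
      (by rw [abs_neg]; exact (hg τ le_rfl _).2.1)
  · exact ((hasDerivAt_heatG1_right hτ w y).const_mul _).add
      ((hasDerivAt_heatG_right hτ w y).const_mul _)

lemma continuous_H' (hR : 0 < R) (hα0 : 0 < α) (hα1 : α < 1) (hβ : LocHolder s T α β)
    (hβm : Measurable (fun p : ℝ × ℝ => β p.1 p.2)) {r : ℝ} (hr : r ∈ Icc s T) {τ : ℝ}
    (hτ : 0 < τ) : Continuous (fun y => D.H' β μ τ y r) := by
  obtain ⟨A, hA, hb⟩ := D.bounds hR hα0 hα1 hβ
  obtain ⟨B, hB, hg⟩ := heatG_sup' hτ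
  refine continuous_of_dominated (bound := fun _ => A * B + A * B) (fun y => ?_)
    (fun y => ae_of_all _ fun w => ?_) (integrable_const _) (ae_of_all _ fun w => ?_)
  · exact (D.integrable_H hR hα0 hα1 hβ hβm hr (μ r) (cont_shift hτ y).2.2.neg
        (cont_shift hτ y).2.1.neg (fun _ => (abs_neg _).le.trans (hg τ le_rfl _).2.2)
        (fun _ => (abs_neg _).le.trans (hg τ le_rfl _).2.1)).1
  · exact H_abs_aux (hb r hr w).1 (by rw [abs_neg]; exact (hg τ le_rfl _).2.2) (hb r hr w).2.1
      (by rw [abs_neg]; exact (hg τ le_rfl _).2.1)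
  · have := cont_shift' hτ w
    exact (continuous_const.mul this.2.2.neg).add (continuous_const.mul this.2.1.neg)

lemma continuousAt_H_time (hR : 0 < R) (hα0 : 0 < α) (hα1 : α < 1) (hβ : LocHolder s T α β)
    (hβm : Measurable (fun p : ℝ × ℝ => β p.1 p.2)) {r : ℝ} (hr : r ∈ Icc s T) {τ : ℝ}
    (hτ : 0 < τ) (y : ℝ) : ContinuousAt (fun τ => D.H β μ τ y r) τ := by
  obtain ⟨A, hA, hb⟩ := D.bounds hR hα0 hα1 hβ
  obtain ⟨B, hB, hg⟩ := heatG_sup' (half_pos hτ)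
  have hev : ∀ᶠ τ' in 𝓝 τ, τ / 2 ≤ τ' := by
    filter_upwards [Ioi_mem_nhds (half_lt_self hτ)] with τ' h using le_of_lt h
  refine continuousAt_of_dominated (bound := fun _ => A * B + A * B) ?_ ?_ (integrable_const _)
    (ae_of_all _ fun w => ?_)
  · filter_upwards [hev] with τ' h
    have h0 : 0 < τ' := by linarith
    exact (D.integrable_H hR hα0 hα1 hβ hβm hr (μ r) (cont_shift h0 y).2.1
        (cont_shift h0 y).1 (fun x => (hg τ' h _).2.1) (fun x => (hg τ' h _).1)).1
  · filter_upwards [hev] with τ' h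
    exact ae_of_all _ fun w => H_abs_aux (hb r hr w).1 (hg τ' h _).2.1 (hb r hr w).2.1 (hg τ' h _).1
  · have hU : (Ioi 0 ×ˢ univ : Set (ℝ × ℝ)) ∈ 𝓝 (τ, w - y) :=
      (isOpen_Ioi.prod isOpen_univ).mem_nhds ⟨hτ, mem_univ _⟩
    have h0 : ContinuousAt (fun τ => (τ, w - y)) τ := by fun_prop
    have g0 := (continuousOn_heatG.continuousAt hU).comp (f := fun τ => (τ, w - y)) h0
    have g1 := (continuousOn_heatG1.continuousAt hU).comp (f := fun τ => (τ, w - y)) h0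
    exact (continuousAt_const.mul g1).add (continuousAt_const.mul g0)

/-- The source term antisymmetrised by reflection at the boundary point `0`. -/
def K (β : ℝ → ℝ → ℝ) (m : ProbabilityTheory.Kernel ℝ ℝ) (τ y r : ℝ) : ℝ :=
  D.H β m τ y r - D.H β m τ (-y) r

/-- The `y`-derivative of `CutData.K`. -/
def K' (β : ℝ → ℝ → ℝ) (m : ProbabilityTheory.Kernel ℝ ℝ) (τ y r : ℝ) : ℝ :=
  D.H' β m τ y r + D.H' β m τ (-y) r

lemma hasDerivAt_K (hR : 0 < R) (hα0 : 0 < α) (hα1 : α < 1) (hβ : LocHolder s T α β)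
    (hβm : Measurable (fun p : ℝ × ℝ => β p.1 p.2)) {r : ℝ} (hr : r ∈ Icc s T) {τ : ℝ}
    (hτ : 0 < τ) (y : ℝ) :
    HasDerivAt (fun y => D.K β μ τ y r) (D.K' β μ τ y r) y := by
  have h1 := D.hasDerivAt_H (μ := μ) hR hα0 hα1 hβ hβm hr hτ y
  have h2 := (D.hasDerivAt_H (μ := μ) hR hα0 hα1 hβ hβm hr hτ (-y)).scomp y (hasDerivAt_neg y)
  refine (h1.sub h2).congr_deriv ?_
  simp [K']

lemma continuous_K' (hR : 0 < R) (hα0 : 0 < α) (hα1 : α < 1) (hβ : LocHolder s T α β)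
    (hβm : Measurable (fun p : ℝ × ℝ => β p.1 p.2)) {r : ℝ} (hr : r ∈ Icc s T) {τ : ℝ}
    (hτ : 0 < τ) : Continuous (fun y => D.K' β μ τ y r) :=
  (D.continuous_H' hR hα0 hα1 hβ hβm hr hτ).add
    ((D.continuous_H' hR hα0 hα1 hβ hβm hr hτ).comp continuous_neg)

lemma continuousAt_K_time (hR : 0 < R) (hα0 : 0 < α) (hα1 : α < 1) (hβ : LocHolder s T α β)
    (hβm : Measurable (fun p : ℝ × ℝ => β p.1 p.2)) {r : ℝ} (hr : r ∈ Icc s T) {τ : ℝ}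
    (hτ : 0 < τ) (y : ℝ) : ContinuousAt (fun τ => D.K β μ τ y r) τ :=
  (D.continuousAt_H_time hR hα0 hα1 hβ hβm hr hτ y).sub
    (D.continuousAt_H_time hR hα0 hα1 hβ hβm hr hτ (-y))

lemma measurable_K (hβm : Measurable (fun p : ℝ × ℝ => β p.1 p.2)) :
    Measurable (fun p : ℝ × ℝ × ℝ => D.K β μ p.1 p.2.1 p.2.2) ∧
    Measurable (fun p : ℝ × ℝ × ℝ => D.K' β μ p.1 p.2.1 p.2.2) := by
  obtain ⟨h1, h2⟩ := D.measurable_H (μ := μ) hβm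
  have hn : Measurable (fun p : ℝ × ℝ × ℝ => (p.1, -p.2.1, p.2.2)) := by fun_prop
  exact ⟨h1.sub (h1.comp hn), h2.add (h2.comp hn)⟩

/-- The bounds on the reflected source term for laws with locally bounded densities. -/
lemma K_bound (hs : s < s1) (hR : 0 < R) (hα0 : 0 < α) (hα1 : α < 1)
    (hβ : LocHolder s T α β) (hm : HBd s T 0 μ) (M : ℝ) (hM : 0 < M) :
    ∃ C, 0 ≤ C ∧ ∀ r ∈ Icc s T, ∀ τ, 0 < τ → τ ≤ M → ∀ y,
      |D.K β μ τ y r| ≤ C * τ ^ (-(1 / 2) : ℝ) ∧ |D.K' β μ τ y r| ≤ C * τ ^ (-1 : ℝ) := by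
  obtain ⟨C, hC, h⟩ := D.H_bound hs hR hα0 hα1 le_rfl hβ hm M hM
  simp only [neg_zero, add_zero] at h
  refine ⟨C + C, by linarith, fun r hr τ h1 h2 y => ⟨?_, ?_⟩⟩
  · refine (abs_sub _ _).trans ?_
    rw [add_mul]
    exact add_le_add (h r hr τ h1 h2 y).1 (h r hr τ h1 h2 (-y)).1
  · refine (abs_add_le _ _).trans ?_
    rw [add_mul]
    exact add_le_add (h r hr τ h1 h2 y).2 (h r hr τ h1 h2 (-y)).2

end CutData

/-! ### The killed flow: bounded and Hölder densities -/

/-- A flow of subprobabilities on `(-∞, 0)` with locally bounded densities, solving the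
Fokker–Planck equation with absorption at `0`. -/
structure KilledFlow (s T α : ℝ) (β : ℝ → ℝ → ℝ) (μ : ProbabilityTheory.Kernel ℝ ℝ) : Prop where
  α0 : 0 < α
  α1 : α < 1
  hol : LocHolder s T α β
  meas : Measurable (fun p : ℝ × ℝ => β p.1 p.2)
  bd : HBd s T 0 μ
  neg : ∀ r, μ r (Ici 0) = 0
  sol : WeakSol s T β μ True

namespace CutData

variable {R s1 s2 : ℝ} (D : CutData R s1 s2) {s T α : ℝ} {β : ℝ → ℝ → ℝ}
  {μ : ProbabilityTheory.Kernel ℝ ℝ} [ProbabilityTheory.IsFiniteKernel μ]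

/-- The smoothed density of the flow at time `t`, as given by the Duhamel formula. -/
def k (β : ℝ → ℝ → ℝ) (m : ProbabilityTheory.Kernel ℝ ℝ) (s t τ y : ℝ) : ℝ :=
  ∫ r in s..t, D.K β m (t + τ - r) y r

lemma integrable_H' (hR : 0 < R) (h : KilledFlow s T α β μ) {r : ℝ} (hr : r ∈ Icc s T) {τ : ℝ}
    (hτ : 0 < τ) (y : ℝ) (ρ : Measure ℝ) [IsFiniteMeasure ρ] :
    Integrable (fun w => D.a β r w * heatG1 τ (w - y) + D.c β r w * heatG τ (w - y)) ρ := by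
  obtain ⟨B, hB, hg⟩ := heatG_sup' hτ
  exact D.integrable_H hR h.α0 h.α1 h.hol h.meas hr _ (cont_shift hτ y).2.1
        (cont_shift hτ y).1 (fun x => (hg τ le_rfl _).2.1) (fun x => (hg τ le_rfl _).1)

/-- Duhamel formula for the flow with absorption: the image charge at `-y` cancels the boundary
term. -/
lemma identity_killed (hR : 0 < R) (hs : s < s1) (h : KilledFlow s T α β μ) {t : ℝ} (hst : s < t)
    (ht2 : s2 ≤ t) (htT : t ≤ T) {τ : ℝ} (hτ : 0 < τ) (y : ℝ) :
    ∫ w, D.χ w * (heatG τ (w - y) - heatG τ (w - -y)) ∂(μ t) = D.k β μ s t τ y := by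
  have h1 := h.sol (t + τ) _ _ _ _ ((D.testFn hs (t + τ) y).sub (D.testFn hs (t + τ) (-y))) (by
    intro _ r
    have : (0 : ℝ) - y = -(0 - -y) := by ring
    simp only [this, heatG_neg]
    ring) t hst htT (by linarith)
  simp only [D.θ_one t ht2, one_mul, add_sub_cancel_left] at h1
  unfold k K
  have e : ∀ w, D.χ w * (heatG τ (w - y) - heatG τ (w - -y)) =
      D.χ w * heatG τ (w - y) - D.χ w * heatG τ (w - -y) := fun w => by ring
  simp only [e]
  rw [h1]
  refine intervalIntegral.integral_congr fun r hr => ?_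
  rw [uIcc_of_le hst.le] at hr
  have hr' : r ∈ Icc s T := ⟨hr.1, hr.2.trans htT⟩
  have hp : 0 < t + τ - r := by linarith [hr.2]
  unfold H
  rw [← integral_sub (D.integrable_H' hR h hr' hp y _) (D.integrable_H' hR h hr' hp (-y) _)]
  refine integral_congr_ae (ae_of_all _ fun w => ?_)
  simp only [a, c]
  ring

lemma measurable_K_time (hβm : Measurable (fun p : ℝ × ℝ => β p.1 p.2)) (t τ y : ℝ) :
    Measurable (fun r => D.K β μ (t + τ - r) y r) ∧
      Measurable (fun r => D.K' β μ (t + τ - r) y r) := by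
  obtain ⟨h1, h2⟩ := D.measurable_K (μ := μ) hβm
  have : Measurable (fun r : ℝ => (t + τ - r, y, r)) := by fun_prop
  exact ⟨h1.comp this, h2.comp this⟩

lemma ae_ne (t : ℝ) : ∀ᵐ r : ℝ, r ≠ t := by simp [ae_iff, measure_singleton]

/-- A bound on the Duhamel integrand that is integrable in time and uniform in the smoothing time
`τ ∈ [0, 1]`. -/
lemma K_time_bound (hs : s < s1) (hsT : s < T) (hR : 0 < R) (h : KilledFlow s T α β μ) :
    ∃ C, 0 ≤ C ∧ ∀ t ≤ T, ∀ τ, 0 ≤ τ → τ ≤ 1 → ∀ y, ∀ r, s ≤ r → r < t →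
      |D.K β μ (t + τ - r) y r| ≤ C * (t - r) ^ (-(1 / 2) : ℝ) := by
  obtain ⟨C, hC, hb⟩ := D.K_bound hs hR h.α0 h.α1 h.hol h.bd (T - s + 1) (by linarith)
  refine ⟨C, hC, fun t htT τ hτ0 hτ1 y r hr1 hr2 => ?_⟩
  have hp : 0 < t + τ - r := by linarith
  refine (hb r ⟨hr1, by linarith⟩ _ hp (by linarith) y).1.trans ?_
  have : (t + τ - r) ^ (-(1 / 2) : ℝ) ≤ (t - r) ^ (-(1 / 2) : ℝ) :=
    Real.rpow_le_rpow_of_nonpos (by linarith) (by linarith) (by norm_num)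
  gcongr

lemma intervalIntegrable_K (hs : s < s1) (hsT : s < T) (hR : 0 < R) (h : KilledFlow s T α β μ)
    {t : ℝ} (hst : s ≤ t) (ht : t ≤ T) (τ : ℝ) (h0 : 0 ≤ τ) (h1 : τ ≤ 1) (y : ℝ) :
    IntervalIntegrable (fun r => D.K β μ (t + τ - r) y r) volume s t := by
  obtain ⟨C, hC, hb⟩ := D.K_time_bound hs hsT hR h
  refine ((intervalIntegrable_sub_rpow s t (p := -(1 / 2)) (by norm_num)).const_mul C).mono_fun'
    (D.measurable_K_time h.meas t τ y).1.aestronglyMeasurable ?_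
  rw [uIoc_of_le hst]
  filter_upwards [ae_restrict_mem measurableSet_Ioc, ae_restrict_of_ae (ae_ne t)] with r hr hr'
  exact hb t ht τ h0 h1 y r hr.1.le (lt_of_le_of_ne hr.2 hr')

lemma k_bound (hs : s < s1) (hsT : s < T) (hR : 0 < R) (h : KilledFlow s T α β μ) :
    ∃ C, 0 ≤ C ∧ ∀ t, s ≤ t → t ≤ T → ∀ τ, 0 ≤ τ → τ ≤ 1 → ∀ y, |D.k β μ s t τ y| ≤ C := by
  obtain ⟨C, hC, hb⟩ := D.K_time_bound hs hsT hR h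
  have h3 : (0 : ℝ) < -(1 / 2) + 1 := by norm_num
  have h4 : (0 : ℝ) ≤ T - s := by linarith
  refine ⟨C * ((T - s) ^ (-(1 / 2) + 1 : ℝ) / (-(1 / 2) + 1)), by positivity,
    fun t h1 h2 τ hτ0 hτ1 y => ?_⟩
  refine (abs_integral_le_rpow h1 (by norm_num) (fun r hr1 hr2 =>
    hb t h2 τ hτ0 hτ1 y r hr1.le hr2)).trans ?_
  have : (t - s) ^ (-(1 / 2) + 1 : ℝ) ≤ (T - s) ^ (-(1 / 2) + 1 : ℝ) := by
    apply Real.rpow_le_rpow <;> linarith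
  gcongr

/-- The density is Hölder continuous in space: interpolate between the bounds on the source term
and on its derivative. -/
lemma k_holder (hs : s < s1) (hsT : s < T) (hR : 0 < R) (h : KilledFlow s T α β μ) :
    ∃ C, 0 ≤ C ∧ ∀ t, s ≤ t → t ≤ T → ∀ y y',
      |D.k β μ s t 0 y - D.k β μ s t 0 y'| ≤ C * |y - y'| ^ α := by
  obtain ⟨C, hC, hb⟩ := D.K_bound hs hR h.α0 h.α1 h.hol h.bd (T - s) (by linarith)
  have hα0 := h.α0
  have hα1 := h.α1
  have h3 : (0 : ℝ) < -(1 / 2) + -(α / 2) + 1 := by linarith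
  have h4 : (0 : ℝ) ≤ T - s := by linarith
  refine ⟨((2 * C) ^ (1 - α) * C ^ α) *
    ((T - s) ^ (-(1 / 2) + -(α / 2) + 1 : ℝ) / (-(1 / 2) + -(α / 2) + 1)), by positivity,
    fun t h1 h2 y y' => ?_⟩
  unfold k
  rw [← intervalIntegral.integral_sub (D.intervalIntegrable_K hs hsT hR h h1 h2 0 le_rfl
    zero_le_one y) (D.intervalIntegrable_K hs hsT hR h h1 h2 0 le_rfl zero_le_one y')]
  refine (abs_integral_le_rpow (p := -(1 / 2) + -(α / 2))
    (K := ((2 * C) ^ (1 - α) * C ^ α) * |y - y'| ^ α) h1 (by linarith) (fun r hr1 hr2 => ?_)).trans ?_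
  · have hp : 0 < t - r := by linarith
    have hr : r ∈ Icc s T := ⟨hr1.le, by linarith⟩
    rw [add_zero]
    refine (holder_of_deriv hα0 hα1 (fun y => (hb r hr (t - r) hp (by linarith) y).1)
      (fun y => D.hasDerivAt_K hR hα0 hα1 h.hol h.meas hr hp y)
      (fun y => (hb r hr (t - r) hp (by linarith) y).2) y y').trans (le_of_eq ?_)
    rw [← mul_assoc, Real.mul_rpow (by positivity) (by positivity),
      Real.mul_rpow hC (by positivity), ← Real.rpow_mul hp.le, ← Real.rpow_mul hp.le]
    have : (t - r) ^ (-(1 / 2) * (1 - α)) * (t - r) ^ (-1 * α) = (t - r) ^ (-(1 / 2) + -(α / 2)) := by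
      rw [← Real.rpow_add hp]; congr 1; ring
    rw [← this]; ring
  · have : (t - s) ^ (-(1 / 2) + -(α / 2) + 1 : ℝ) ≤ (T - s) ^ (-(1 / 2) + -(α / 2) + 1 : ℝ) := by
      apply Real.rpow_le_rpow <;> linarith
    calc _ ≤ ((2 * C) ^ (1 - α) * C ^ α) * |y - y'| ^ α *
        ((T - s) ^ (-(1 / 2) + -(α / 2) + 1 : ℝ) / (-(1 / 2) + -(α / 2) + 1)) := by gcongr
      _ = _ := by ring

/-- The smoothing time may be sent to zero inside the Duhamel integral. -/
lemma k_tendsto (hs : s < s1) (hsT : s < T) (hR : 0 < R) (h : KilledFlow s T α β μ)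
    {t : ℝ} (hst : s ≤ t) (ht : t ≤ T) (y : ℝ) {u : ℕ → ℝ} (hu0 : ∀ n, 0 < u n) (hu1 : ∀ n, u n ≤ 1)
    (hu : Tendsto u atTop (𝓝 0)) :
    Tendsto (fun n => D.k β μ s t (u n) y) atTop (𝓝 (D.k β μ s t 0 y)) := by
  obtain ⟨C, hC, hb⟩ := D.K_time_bound hs hsT hR h
  refine intervalIntegral.tendsto_integral_filter_of_dominated_convergence
    (fun r => C * (t - r) ^ (-(1 / 2) : ℝ)) (Eventually.of_forall fun n =>
      (D.measurable_K_time h.meas t (u n) y).1.aestronglyMeasurable)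
    (Eventually.of_forall fun n => ?_)
    ((intervalIntegrable_sub_rpow s t (by norm_num)).const_mul C) ?_
  · filter_upwards [ae_ne t] with r hr' hr
    rw [uIoc_of_le hst] at hr
    exact hb t ht (u n) (hu0 n).le (hu1 n) y r hr.1.le (lt_of_le_of_ne hr.2 hr')
  · filter_upwards [ae_ne t] with r hr' hr
    rw [uIoc_of_le hst] at hr
    have hp : 0 < t + 0 - r := by linarith [lt_of_le_of_ne hr.2 hr']
    have hc := D.continuousAt_K_time (μ := μ) hR h.α0 h.α1 h.hol h.meas
      (⟨hr.1.le, hr.2.trans ht⟩ : r ∈ Icc s T) hp y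
    refine hc.tendsto.comp ?_
    exact (hu.const_add t).sub_const r

lemma measurable_k (hβm : Measurable (fun p : ℝ × ℝ => β p.1 p.2)) {t : ℝ} (hst : s ≤ t) (τ : ℝ) :
    Measurable (fun y => D.k β μ s t τ y) := by
  unfold k
  simp only [intervalIntegral.integral_of_le hst]
  have : Measurable (fun q : ℝ × ℝ => (t + τ - q.2, q.1, q.2)) := by fun_prop
  exact (StronglyMeasurable.integral_prod_right'
    ((D.measurable_K (μ := μ) hβm).1.comp this).stronglyMeasurable).measurable

end CutData

/-! ### Identification of the density -/

namespace CutData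

variable {R s1 s2 : ℝ} (D : CutData R s1 s2) {s T α : ℝ} {β : ℝ → ℝ → ℝ}
  {μ : ProbabilityTheory.Kernel ℝ ℝ} [ProbabilityTheory.IsFiniteKernel μ]

lemma exists_χ_bound : ∃ B, 0 ≤ B ∧ ∀ w, |D.χ w| ≤ B := by
  obtain ⟨B, h0, hB⟩ := exists_bound_Icc D.cχ (-(R + 1)) (R + 1)
  refine ⟨B, h0, fun w => ?_⟩
  by_cases hw : R + 1 ≤ |w|
  · rw [(D.χ_zero w hw).1]; simpa using h0
  · exact hB w (abs_le.1 (not_le.1 hw).le)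

/-- Testing the density against a continuous function: let the heat time tend to zero in
`identity_killed`. -/
lemma integral_k (hR : 0 < R) (hs : s < s1) (h : KilledFlow s T α β μ) {t : ℝ} (hst : s < t)
    (ht2 : s2 ≤ t) (htT : t ≤ T) {φ : ℝ → ℝ} (hφ : Continuous φ) (hφ1 : ∀ x, |φ x| ≤ 1)
    {a b : ℝ} (ha : -R ≤ a) (hb : b ≤ 0) (hφ0 : ∀ x, x ∉ Ioo a b → φ x = 0) :
    ∫ y, φ y * D.k β μ s t 0 y = ∫ w, φ w ∂(μ t) := by
  have hsT : s < T := by linarith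
  set u : ℕ → ℝ := fun n => 1 / ((n : ℝ) + 1) with hu
  have hu0 : ∀ n, 0 < u n := fun n => by positivity
  have hu1 : ∀ n, u n ≤ 1 := fun n => by
    rw [hu]; simp only
    rw [div_le_one (by positivity)]; linarith [(Nat.cast_nonneg n : (0 : ℝ) ≤ n)]
  have hut : Tendsto u atTop (𝓝 0) := tendsto_one_div_add_atTop_nhds_zero_nat
  have hφc : HasCompactSupport φ := HasCompactSupport.intro (K := Icc a b) isCompact_Icc
    fun x hx => hφ0 x fun hx' => hx (Ioo_subset_Icc_self hx')
  have hφi : Integrable φ := hφ.integrable_of_hasCompactSupport hφc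
  obtain ⟨C, hC, hk⟩ := D.k_bound hs hsT hR h
  obtain ⟨B, hB, hχ⟩ := D.exists_χ_bound
  -- as the smoothing time tends to zero, the smoothed densities converge to the density
  have L1 : Tendsto (fun n => ∫ y, φ y * D.k β μ s t (u n) y) atTop
      (𝓝 (∫ y, φ y * D.k β μ s t 0 y)) := by
    refine tendsto_integral_of_dominated_convergence (fun y => |φ y| * C) (fun n => ?_)
      (hφi.abs.mul_const C) (fun n => ae_of_all _ fun y => ?_) (ae_of_all _ fun y => ?_)
    · exact (hφ.measurable.mul (D.measurable_k h.meas hst.le (u n))).aestronglyMeasurable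
    · rw [norm_mul]
      exact mul_le_mul_of_nonneg_left (hk t hst.le htT (u n) (hu0 n).le (hu1 n) y) (abs_nonneg _)
    · exact (D.k_tendsto hs hsT hR h hst.le htT y hu0 hu1 hut).const_mul _
  -- by symmetry of the heat kernel, the smoothing may be moved to `φ`, where it converges to `φ`
  have conv_le : ∀ n w, |∫ y, heatG (u n) (w - y) * φ y| ≤ 1 := by
    intro n w
    have e : ∫ y, heatG (u n) (w - y) = 1 := by
      rw [integral_sub_left_eq_self (fun x => heatG (u n) x) volume w]
      exact integral_heatG (hu0 n)
    rw [← e, ← Real.norm_eq_abs]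
    refine norm_integral_le_of_norm_le ((integrable_heatG (hu0 n)).comp_sub_left w) ?_
    filter_upwards with y
    rw [norm_mul, Real.norm_eq_abs, Real.norm_eq_abs, abs_of_nonneg (heatG_nonneg _ _)]
    exact mul_le_of_le_one_right (heatG_nonneg _ _) (hφ1 y)
  have E : ∀ n, ∫ y, φ y * D.k β μ s t (u n) y =
      ∫ w, D.χ w * ((∫ y, heatG (u n) (w - y) * φ y) - ∫ y, heatG (u n) (-w - y) * φ y) ∂(μ t) := by
    intro n
    simp only [← D.identity_killed hR hs h hst ht2 htT (hu0 n), ← integral_const_mul]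
    rw [integral_integral_swap]
    · refine integral_congr_ae (ae_of_all _ fun w => ?_)
      simp only
      have i1 : ∀ v, Integrable (fun y => heatG (u n) (v - y) * φ y) := by
        intro v
        refine hφi.bdd_mul (c := (u n) ^ (-(1 / 2) : ℝ))
          (cont_shift' (hu0 n) v).1.aestronglyMeasurable (ae_of_all _ fun y => ?_)
        rw [Real.norm_eq_abs, abs_of_nonneg (heatG_nonneg _ _)]
        exact heatG_le (hu0 n) _
      rw [← integral_sub (i1 w) (i1 (-w)), ← integral_const_mul]
      refine integral_congr_ae (ae_of_all _ fun y => ?_)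
      have : w - -y = -(-w - y) := by ring
      simp only [this, heatG_neg]
      ring
    · have hc1 : Continuous (fun p : ℝ × ℝ => heatG (u n) (p.2 - p.1)) :=
        (continuous_heatG (hu0 n)).comp (by fun_prop : Continuous fun p : ℝ × ℝ => p.2 - p.1)
      have hc2 : Continuous (fun p : ℝ × ℝ => heatG (u n) (p.2 - -p.1)) :=
        (continuous_heatG (hu0 n)).comp (by fun_prop : Continuous fun p : ℝ × ℝ => p.2 - -p.1)
      have hi : Integrable (fun p : ℝ × ℝ => φ p.1 * 1) (volume.prod (μ t)) :=
        hφi.mul_prod (integrable_const (1 : ℝ))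
      refine (hi.norm.const_mul (B * ((u n) ^ (-(1 / 2) : ℝ) + (u n) ^ (-(1 / 2) : ℝ)))).mono'
        (((hφ.comp continuous_fst).mul ((D.cχ.comp continuous_snd).mul
          (hc1.sub hc2))).aestronglyMeasurable) (ae_of_all _ fun p => ?_)
      simp only [Function.uncurry, norm_mul, Real.norm_eq_abs, mul_one]
      rw [mul_comm]
      have g1 : |heatG (u n) (p.2 - p.1) - heatG (u n) (p.2 - -p.1)| ≤
          (u n) ^ (-(1 / 2) : ℝ) + (u n) ^ (-(1 / 2) : ℝ) := by
        refine (abs_sub _ _).trans ?_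
        rw [abs_of_nonneg (heatG_nonneg _ _), abs_of_nonneg (heatG_nonneg _ _)]
        exact add_le_add (heatG_le (hu0 n) _) (heatG_le (hu0 n) _)
      have := hχ p.2
      norm_num
      gcongr
      norm_num at g1
      exact g1
  have L2 : Tendsto (fun n => ∫ y, φ y * D.k β μ s t (u n) y) atTop
      (𝓝 (∫ w, D.χ w * (φ w - φ (-w)) ∂(μ t))) := by
    simp only [E]
    refine tendsto_integral_of_dominated_convergence (fun y => B * (1 + 1)) (fun n => ?_)
      (integrable_const _) (fun n => ae_of_all _ fun w => ?_) (ae_of_all _ fun w => ?_)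
    · have hm : Measurable (fun w => ∫ y, heatG (u n) (w - y) * φ y) := by
        have hc : Continuous (fun p : ℝ × ℝ => heatG (u n) (p.1 - p.2) * φ p.2) :=
          ((continuous_heatG (hu0 n)).comp
            (by fun_prop : Continuous fun p : ℝ × ℝ => p.1 - p.2)).mul (hφ.comp continuous_snd)
        exact (StronglyMeasurable.integral_prod_right' hc.stronglyMeasurable).measurable
      exact (D.cχ.measurable.mul (hm.sub (hm.comp measurable_neg))).aestronglyMeasurable
    · rw [norm_mul]
      refine mul_le_mul (hχ w) ((abs_sub _ _).trans (add_le_add (conv_le n w) (conv_le n (-w))))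
        (abs_nonneg _) hB
    · exact ((tendsto_heatG_conv hφ hφ1 w u hu0 hut).sub
        (tendsto_heatG_conv hφ hφ1 (-w) u hu0 hut)).const_mul _
  -- the image term `φ (-w)` vanishes: `φ` and `μ t` both live on the negative half-line
  rw [tendsto_nhds_unique L1 L2]
  have hneg : ∀ᵐ w ∂(μ t), w < 0 := by
    have : {w : ℝ | ¬ w < 0} = Ici 0 := by ext; simp
    rw [ae_iff, this]; exact h.neg t
  refine integral_congr_ae ?_
  filter_upwards [hneg] with w hw
  rw [hφ0 (-w) (fun hc => by linarith [hc.2])]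
  by_cases hwab : w ∈ Ioo a b
  · rw [D.χ_one w (abs_le.2 ⟨by linarith [hwab.1], by linarith⟩)]; ring
  · rw [hφ0 w hwab]; simp

lemma continuous_of_holder {f : ℝ → ℝ} {C : ℝ} (hα : 0 < α)
    (h : ∀ x y, |f x - f y| ≤ C * |x - y| ^ α) : Continuous f := by
  rw [continuous_iff_continuousAt]
  intro y
  rw [ContinuousAt, tendsto_iff_norm_sub_tendsto_zero]
  have : Tendsto (fun x => C * |x - y| ^ α) (𝓝 y) (𝓝 0) := by
    have hc : Continuous fun x => C * |x - y| ^ α :=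
      continuous_const.mul ((continuous_id.sub continuous_const).abs.rpow_const
        fun _ => Or.inr hα.le)
    have := hc.tendsto y
    simpa [Real.zero_rpow hα.ne'] using this
  exact squeeze_zero (fun _ => norm_nonneg _) (fun x => h x y) this

/-- Trapezoidal approximation from below of the indicator of `(a, b)`. -/
def trap (a b : ℝ) (n : ℕ) (x : ℝ) : ℝ := min 1 (n * max 0 (min (x - a) (b - x)))

lemma continuous_trap (a b : ℝ) (n : ℕ) : Continuous (trap a b n) := by unfold trap; fun_prop

lemma trap_nonneg (a b : ℝ) (n : ℕ) (x : ℝ) : 0 ≤ trap a b n x :=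
  le_min zero_le_one (by positivity)

lemma trap_le (a b : ℝ) (n : ℕ) (x : ℝ) : trap a b n x ≤ 1 := min_le_left _ _

lemma trap_zero {a b : ℝ} (n : ℕ) {x : ℝ} (hx : x ∉ Ioo a b) : trap a b n x = 0 := by
  have : min (x - a) (b - x) ≤ 0 := by
    by_contra hc
    rw [not_le, lt_min_iff] at hc
    exact hx ⟨by linarith, by linarith⟩
  simp [trap, max_eq_left this]

lemma trap_tendsto (a b x : ℝ) :
    Tendsto (fun n => trap a b n x) atTop (𝓝 ((Ioo a b).indicator (fun _ => 1) x)) := by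
  by_cases hx : x ∈ Ioo a b
  · rw [indicator_of_mem hx]
    have hp : 0 < max 0 (min (x - a) (b - x)) :=
      lt_max_of_lt_right (lt_min (by linarith [hx.1]) (by linarith [hx.2]))
    have h1 : Tendsto (fun n : ℕ => (n : ℝ) * max 0 (min (x - a) (b - x))) atTop atTop :=
      tendsto_natCast_atTop_atTop.atTop_mul_const hp
    refine tendsto_const_nhds.congr' ?_
    filter_upwards [h1.eventually_ge_atTop 1] with n hn
    rw [trap, min_eq_left hn]
  · rw [indicator_of_notMem hx]
    simp only [trap_zero _ hx]
    exact tendsto_const_nhds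

/-- `D.k` is the density of the flow at time `t` on `(-R, 0)`. -/
lemma k_density (hR : 0 < R) (hs : s < s1) (h : KilledFlow s T α β μ) {t : ℝ} (hst : s < t)
    (ht2 : s2 ≤ t) (htT : t ≤ T) :
    (μ t).restrict (Ioo (-R) 0) = (volume.restrict (Ioo (-R) 0)).withDensity
      (fun y => ENNReal.ofReal (D.k β μ s t 0 y)) ∧ ∀ y ∈ Ioo (-R) 0, 0 ≤ D.k β μ s t 0 y := by
  have hsT : s < T := by linarith
  obtain ⟨C, hC, hhol⟩ := D.k_holder hs hsT hR h
  obtain ⟨C', hC', hk⟩ := D.k_bound hs hsT hR h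
  have hkc : Continuous (fun y => D.k β μ s t 0 y) :=
    continuous_of_holder h.α0 (hhol t hst.le htT)
  have key : ∀ a b, -R ≤ a → b ≤ 0 →
      ∫ y in Ioo a b, D.k β μ s t 0 y = (μ t).real (Ioo a b) := by
    intro a b ha hb
    have e : ∀ n, ∫ y, trap a b n y * D.k β μ s t 0 y = ∫ w, trap a b n w ∂(μ t) := fun n =>
      D.integral_k hR hs h hst ht2 htT (continuous_trap a b n)
        (fun x => by rw [abs_of_nonneg (trap_nonneg a b n x)]; exact trap_le a b n x) ha hb
        (fun x hx => trap_zero n hx)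
    have hsup : ∀ n y, trap a b n y ≤ (Ioo a b).indicator (fun _ => 1) y := by
      intro n y
      by_cases hy : y ∈ Ioo a b
      · rw [indicator_of_mem hy]; exact trap_le a b n y
      · rw [indicator_of_notMem hy, trap_zero n hy]
    have h1 : Tendsto (fun n => ∫ w, trap a b n w ∂(μ t)) atTop
        (𝓝 (∫ w, (Ioo a b).indicator (fun _ => (1 : ℝ)) w ∂(μ t))) := by
      refine tendsto_integral_of_dominated_convergence (fun _ => 1)
        (fun n => (continuous_trap a b n).aestronglyMeasurable) (integrable_const _)
        (fun n => ae_of_all _ fun y => ?_) (ae_of_all _ fun y => trap_tendsto a b y)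
      rw [Real.norm_eq_abs, abs_of_nonneg (trap_nonneg a b n y)]; exact trap_le a b n y
    have h2 : Tendsto (fun n => ∫ y, trap a b n y * D.k β μ s t 0 y) atTop
        (𝓝 (∫ y, (Ioo a b).indicator (fun _ => (1 : ℝ)) y * D.k β μ s t 0 y)) := by
      refine tendsto_integral_of_dominated_convergence
        (fun y => (Ioo a b).indicator (fun _ => C') y)
        (fun n => ((continuous_trap a b n).mul hkc).aestronglyMeasurable) ?_
        (fun n => ae_of_all _ fun y => ?_)
        (ae_of_all _ fun y => (trap_tendsto a b y).mul_const _)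
      · rw [integrable_indicator_iff measurableSet_Ioo]
        exact integrableOn_const (by simp) (by simp)
      · rw [norm_mul, Real.norm_eq_abs, abs_of_nonneg (trap_nonneg a b n y)]
        by_cases hy : y ∈ Ioo a b
        · rw [indicator_of_mem hy]
          calc _ ≤ 1 * C' := mul_le_mul (trap_le a b n y)
                (hk t hst.le htT 0 le_rfl zero_le_one y) (abs_nonneg _) zero_le_one
            _ = C' := one_mul _
        · rw [indicator_of_notMem hy, trap_zero n hy, zero_mul]
    simp only [e] at h2
    have h3 := tendsto_nhds_unique h2 h1
    rw [integral_indicator measurableSet_Ioo] at h3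
    have e2 : ∀ y, (Ioo a b).indicator (fun _ => (1 : ℝ)) y * D.k β μ s t 0 y =
        (Ioo a b).indicator (fun y => D.k β μ s t 0 y) y := by
      intro y
      by_cases hy : y ∈ Ioo a b
      · rw [indicator_of_mem hy, indicator_of_mem hy, one_mul]
      · rw [indicator_of_notMem hy, indicator_of_notMem hy, zero_mul]
    simp only [e2] at h3
    rw [integral_indicator measurableSet_Ioo] at h3
    rw [h3]; simp
  have hpos : ∀ y ∈ Ioo (-R) 0, 0 ≤ D.k β μ s t 0 y := by
    intro y hy
    by_contra hneg
    rw [not_le] at hneg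
    have hU : {x | D.k β μ s t 0 x < 0} ∩ Ioo (-R) 0 ∈ 𝓝 y :=
      inter_mem (hkc.continuousAt.eventually_lt continuousAt_const hneg) (isOpen_Ioo.mem_nhds hy)
    obtain ⟨ε, hε, hball⟩ := Metric.mem_nhds_iff.1 hU
    rw [Real.ball_eq_Ioo] at hball
    have hlt : y - ε / 2 < y + ε / 2 := by linarith
    have hsub : Icc (y - ε / 2) (y + ε / 2) ⊆ Ioo (y - ε) (y + ε) := fun z hz =>
      ⟨by linarith [hz.1], by linarith [hz.2]⟩
    have hl := (hball (hsub ⟨le_rfl, hlt.le⟩)).2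
    have hr := (hball (hsub ⟨hlt.le, le_rfl⟩)).2
    have h1 := key (y - ε / 2) (y + ε / 2) hl.1.le hr.2.le
    have h2 : ∫ z in (y - ε / 2)..(y + ε / 2), D.k β μ s t 0 z < 0 := by
      have := intervalIntegral.intervalIntegral_pos_of_pos_on (f := fun z => -D.k β μ s t 0 z)
        (a := y - ε / 2) (b := y + ε / 2) (hkc.neg.intervalIntegrable _ _)
        (fun z hz => by
          have := (hball (hsub (Ioo_subset_Icc_self hz))).1
          simp only [mem_ofPred_eq] at this; linarith) hlt
      rw [intervalIntegral.integral_neg] at this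
      linarith
    rw [intervalIntegral.integral_of_le hlt.le, ← integral_Ioc_eq_integral_Ioo.symm, h1] at h2
    linarith [measureReal_nonneg (μ := μ t) (s := Ioo (y - ε / 2) (y + ε / 2))]
  refine ⟨Real.measure_ext_Ioo_rat fun a b => ?_, hpos⟩
  rw [Measure.restrict_apply measurableSet_Ioo, withDensity_apply _ measurableSet_Ioo,
    Measure.restrict_restrict measurableSet_Ioo, Ioo_inter_Ioo,
    ← ofReal_integral_eq_lintegral_ofReal, key _ _ (le_sup_right) inf_le_right]
  · simp
  · exact (hkc.integrableOn_Icc).mono_set Ioo_subset_Icc_self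
  · filter_upwards [ae_restrict_mem measurableSet_Ioo] with y hy
    exact hpos y ⟨lt_of_le_of_lt le_sup_right hy.1, lt_of_lt_of_le hy.2 inf_le_right⟩

end CutData

/-! ### Differentiability of the density up to the boundary -/

lemma integrable_heatG2_shift {τ : ℝ} (hτ : 0 < τ) (y : ℝ) :
    Integrable (fun w => heatG2 τ (w - y)) := by
  refine (((integrable_heatG (by linarith : 0 < 2 * τ)).comp_sub_right y).const_mul
    (100 * τ⁻¹)).mono' (CutData.cont_shift hτ y).2.2.aestronglyMeasurable (ae_of_all _ fun w => ?_)
  exact abs_heatG2_le hτ _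

lemma integrable_heatG1_shift {τ : ℝ} (hτ : 0 < τ) (y : ℝ) :
    Integrable (fun w => heatG1 τ (w - y)) := by
  refine (((integrable_heatG (by linarith : 0 < 2 * τ)).comp_sub_right y).const_mul
    (100 * τ ^ (-(1 / 2) : ℝ))).mono'
    (CutData.cont_shift hτ y).2.1.aestronglyMeasurable (ae_of_all _ fun w => ?_)
  exact abs_heatG1_le hτ _

/-- The Neumann heat kernel has constant mass on the half-line. -/
lemma integral_heatG2_reflect {τ : ℝ} (hτ : 0 < τ) (y : ℝ) :
    ∫ w in Iic 0, (heatG2 τ (w - y) + heatG2 τ (w - -y)) = 0 := by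
  have z : ∀ y, ∫ w, heatG2 τ (w - y) = 0 := fun y =>
    integral_eq_zero_of_hasDerivAt_of_integrable
      (fun w => hasDerivAt_heatG1_left hτ w y) (integrable_heatG2_shift hτ y)
      (integrable_heatG1_shift hτ y)
  set f : ℝ → ℝ := fun w => heatG2 τ (w - y) + heatG2 τ (w - -y) with hf
  have hi : Integrable f := (integrable_heatG2_shift hτ y).add (integrable_heatG2_shift hτ (-y))
  have h0 : ∫ w, f w = 0 := by
    rw [hf, integral_add (integrable_heatG2_shift hτ y) (integrable_heatG2_shift hτ (-y)), z, z,
      add_zero]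
  have hev : ∀ w, f (-w) = f w := by
    intro w
    simp only [hf]
    rw [← heatG2_neg τ (-w - y), ← heatG2_neg τ (-w - -y)]
    rw [add_comm]; congr 2 <;> ring
  have h1 : ∫ w in Iic 0, f w = ∫ w in Ioi 0, f w := by
    have := integral_comp_neg_Iic (0 : ℝ) f
    simp only [hev, neg_zero] at this
    exact this
  have h2 := integral_add_compl (measurableSet_Iic (a := (0 : ℝ))) hi
  rw [compl_Iic, ← h1, h0] at h2
  linarith

namespace CutData

variable {R s1 s2 : ℝ} (D : CutData R s1 s2) {s T α : ℝ} {β : ℝ → ℝ → ℝ}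
  {μ : ProbabilityTheory.Kernel ℝ ℝ} [ProbabilityTheory.IsFiniteKernel μ]

omit [ProbabilityTheory.IsFiniteKernel μ] in
lemma integral_eq_density (h : KilledFlow s T α β μ) {r : ℝ} {k : ℝ → ℝ} (hk : Continuous k)
    (hk0 : ∀ y ∈ Ioo (-(R + 2)) 0, 0 ≤ k y)
    (hd : (μ r).restrict (Ioo (-(R + 2)) 0) = (volume.restrict (Ioo (-(R + 2)) 0)).withDensity
      (fun y => ENNReal.ofReal (k y))) {f : ℝ → ℝ} (hf : ∀ w, R + 1 ≤ |w| → f w = 0) :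
    ∫ w, f w ∂(μ r) = ∫ w in Iic 0, k w * f w := by
  have hneg : ∀ᵐ w ∂(μ r), w < 0 := by
    have : {w : ℝ | ¬ w < 0} = Ici 0 := by ext; simp
    rw [ae_iff, this]; exact h.neg r
  have e1 : ∫ w, f w ∂(μ r) = ∫ w in Ioo (-(R + 2)) 0, f w ∂(μ r) := by
    rw [← integral_indicator measurableSet_Ioo]
    refine integral_congr_ae ?_
    filter_upwards [hneg] with w hw
    by_cases hwR : w ∈ Ioo (-(R + 2)) 0
    · rw [indicator_of_mem hwR]
    · rw [indicator_of_notMem hwR]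
      have : w ≤ -(R + 2) := by
        by_contra hc; exact hwR ⟨not_le.1 hc, hw⟩
      exact hf w (by rw [abs_of_neg hw]; linarith)
  rw [e1, hd, integral_withDensity_eq_integral_toReal_smul
    (f := fun y => ENNReal.ofReal (k y)) hk.measurable.ennreal_ofReal (ae_of_all _ fun _ => ENNReal.ofReal_lt_top)]
  have e2 : ∫ w in Iic 0, k w * f w = ∫ w in Iio 0, k w * f w :=
    setIntegral_congr_set Iio_ae_eq_Iic.symm
  rw [e2, setIntegral_eq_of_subset_of_forall_sdiff_eq_zero measurableSet_Iio
    (s := Ioo (-(R + 2)) 0) (fun w hw => hw.2)]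
  · refine setIntegral_congr_fun measurableSet_Ioo fun w hw => ?_
    simp only [smul_eq_mul]
    rw [ENNReal.toReal_ofReal (hk0 w hw)]
  · rintro w ⟨hw, hwR⟩
    have : w ≤ -(R + 2) := by
      by_contra hc; exact hwR ⟨not_le.1 hc, hw⟩
    simp only [hf w (by rw [abs_of_neg hw]; linarith), mul_zero]

/-- The singularity of `K'` is integrable in time: the Hölder continuity of `a` times the density
is used to subtract the value at `y`, the full reflected kernel integrating to zero. -/
lemma K'_bound (hR : 0 < R) (hs : s < s1) (hsT : s < T) (h : KilledFlow s T α β μ) :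
    ∃ C, 0 ≤ C ∧ ∀ r ∈ Icc s T, ∀ τ, 0 < τ → τ ≤ T - s → ∀ y,
      |D.K' β μ τ y r| ≤ C * τ ^ (-1 + α / 2) := by
  -- the density is needed on the support of `a`, which exceeds `[-R, R]`: hence a larger cutoff
  obtain ⟨Dk⟩ := exists_cutData (by linarith : 0 < R + 2) (show (s + s1) / 2 < s1 by linarith)
  have hs0 : s < (s + s1) / 2 := by linarith
  have hR2 : 0 < R + 2 := by linarith
  obtain ⟨A, hA, hab⟩ := D.bounds hR h.α0 h.α1 h.hol
  obtain ⟨B, hB, hkb⟩ := Dk.k_bound hs0 hsT hR2 h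
  obtain ⟨L, hL, hkh⟩ := Dk.k_holder hs0 hsT hR2 h
  obtain ⟨Q, hQ, hQb⟩ := h.bd (R + 1) s1 (2 * (T - s)) (by linarith) hs (by linarith)
  have hα0 := h.α0
  have hα1 := h.α1
  set M := T - s with hM
  have hM0 : 0 < M := by linarith
  set C1 := (A * L + B * A) * (200 : ℝ) with hC1
  set C2 := 2 * (A * 100 * Q) * M ^ (1 / 2 - α / 2) with hC2
  have hC1' : 0 ≤ C1 := by positivity
  have hC2' : 0 ≤ C2 := by positivity
  refine ⟨C1 + C2, by linarith, fun r hr τ hτ hτM => ?_⟩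
  -- `K'` is even in `y`
  suffices hneg : ∀ y ≤ 0, |D.K' β μ τ y r| ≤ (C1 + C2) * τ ^ (-1 + α / 2) by
    intro y
    rcases le_total y 0 with hy | hy
    · exact hneg y hy
    · have := hneg (-y) (by linarith)
      unfold K' at this ⊢
      rw [neg_neg, add_comm] at this
      exact this
  intro y hy
  by_cases hrs : r ≤ s1
  · unfold K'
    rw [D.H'_zero_time β μ τ y hrs, D.H'_zero_time β μ τ (-y) hrs, add_zero, abs_zero]
    positivity
  have hrs1 : s1 ≤ r := (not_le.1 hrs).le
  have hsr : s < r := by linarith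
  obtain ⟨hd, hk0⟩ := Dk.k_density hR2 hs0 h hsr hrs1 hr.2
  set k : ℝ → ℝ := fun y => Dk.k β μ s r 0 y with hk
  have hkB : ∀ y, |k y| ≤ B := fun y => hkb r hsr.le hr.2 0 le_rfl zero_le_one y
  have hkL : ∀ y y', |k y - k y'| ≤ L * |y - y'| ^ α := fun y y' => hkh r hsr.le hr.2 y y'
  have hkc : Continuous k := continuous_of_holder h.α0 hkL
  obtain ⟨B2, hB2, hg⟩ := heatG_sup' hτ
  have i1 : ∀ v, Integrable (fun w => D.a β r w * heatG2 τ (w - v)) (μ r) := fun v => by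
    simpa using D.integrable_H hR h.α0 h.α1 h.hol h.meas hr (μ r) (cont_shift hτ v).2.2
      (continuous_const (y := (0 : ℝ))) (fun x => (hg τ le_rfl _).2.2) (fun x => by simpa using hB2)
  have i2 : ∀ v, Integrable (fun w => D.c β r w * heatG1 τ (w - v)) (μ r) := fun v => by
    simpa using D.integrable_H hR h.α0 h.α1 h.hol h.meas hr (μ r)
      (continuous_const (y := (0 : ℝ))) (cont_shift hτ v).2.1 (fun x => by simpa using hB2)
      (fun x => (hg τ le_rfl _).2.1)
  have split : ∀ v, D.H' β μ τ v r = -(∫ w, D.a β r w * heatG2 τ (w - v) ∂(μ r))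
      - ∫ w, D.c β r w * heatG1 τ (w - v) ∂(μ r) := by
    intro v
    unfold H'
    have i1' : Integrable (fun w => -(D.a β r w * heatG2 τ (w - v))) (μ r) := (i1 v).neg
    rw [← integral_neg, ← integral_sub i1' (i2 v)]
    refine integral_congr_ae (ae_of_all _ fun w => ?_)
    simp only
    ring
  have dens : ∀ v, ∫ w, D.a β r w * heatG2 τ (w - v) ∂(μ r) =
      ∫ w in Iic 0, k w * (D.a β r w * heatG2 τ (w - v)) := fun v =>
    integral_eq_density h hkc hk0 hd fun w hw => by rw [D.a_zero_space β r hw, zero_mul]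
  -- the term with `c` only needs the bounded density
  have low : ∀ v, |∫ w, D.c β r w * heatG1 τ (w - v) ∂(μ r)| ≤
      (A * 100 * Q) * τ ^ (-(1 / 2) : ℝ) := by
    intro v
    refine (abs_integral_le_heat (B := A * 100 * τ ^ (-(1 / 2) : ℝ)) (R := R + 1) (y := v)
      (by linarith : 0 < 2 * τ) (fun w => ?_)
      (fun w hw => by rw [D.c_zero_space β r hw, zero_mul])).trans ?_
    · rw [abs_mul]
      have h1 := (hab r hr w).2.1
      have h2 := abs_heatG1_le hτ (w - v)
      calc _ ≤ A * (100 * τ ^ (-(1 / 2) : ℝ) * heatG (2 * τ) (w - v)) := by gcongr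
        _ = _ := by ring
    · have := hQb r hrs1 hr.2 (2 * τ) (by linarith) (by linarith) v
      rw [neg_zero, Real.rpow_zero, mul_one] at this
      calc _ ≤ A * 100 * τ ^ (-(1 / 2) : ℝ) * Q := by gcongr
        _ = _ := by ring
  have hpow : τ ^ (-(1 / 2) : ℝ) ≤ M ^ (1 / 2 - α / 2) * τ ^ (-1 + α / 2) := by
    have : τ ^ (-(1 / 2) : ℝ) = τ ^ (1 / 2 - α / 2) * τ ^ (-1 + α / 2) := by
      rw [← Real.rpow_add hτ]; congr 1; ring
    rw [this]
    have : τ ^ (1 / 2 - α / 2) ≤ M ^ (1 / 2 - α / 2) :=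
      Real.rpow_le_rpow hτ.le hτM (by linarith)
    gcongr
  -- the product of `a` and the density is Hölder, so subtracting its value at `y` tames the kernel
  set e : ℝ → ℝ := fun w => D.a β r w * k w with he
  have hem : Measurable e :=
    ((D.measurable_a h.meas).comp (measurable_const.prodMk measurable_id : Measurable fun w : ℝ => (r, w))).mul
      hkc.measurable
  have heb : ∀ w, |e w| ≤ A * B := fun w => by
    rw [he]; simp only
    rw [abs_mul]
    exact mul_le_mul (hab r hr w).1 (hkB w) (abs_nonneg _) hA
  have heh : ∀ w v, |e w - e v| ≤ (A * L + B * A) * |w - v| ^ α := by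
    intro w v
    have : e w - e v = D.a β r w * (k w - k v) + k v * (D.a β r w - D.a β r v) := by
      simp only [he]; ring
    rw [this, add_mul]
    refine (abs_add_le _ _).trans (add_le_add ?_ ?_)
    · rw [abs_mul, mul_assoc]
      exact mul_le_mul (hab r hr w).1 (hkL w v) (abs_nonneg _) hA
    · rw [abs_mul, mul_assoc]
      exact mul_le_mul (hkB v) ((hab r hr w).2.2 v) (abs_nonneg _) hB
  have i3 : ∀ v, Integrable (fun w => e w * heatG2 τ (w - v)) := fun v =>
    (integrable_heatG2_shift hτ v).bdd_mul hem.aestronglyMeasurable (ae_of_all _ heb)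
  have main : |∫ w in Iic 0, (e w - e y) * (heatG2 τ (w - y) + heatG2 τ (w - -y))| ≤
      C1 * τ ^ (-1 + α / 2) := by
    have hG : ∀ v, Integrable (fun w => heatG (2 * τ) (w - v)) := fun v =>
      (integrable_heatG (by linarith : 0 < 2 * τ)).comp_sub_right v
    have hG1 : ∀ v, ∫ w, heatG (2 * τ) (w - v) = 1 := fun v => by
      rw [integral_sub_right_eq_self (fun x => heatG (2 * τ) x)]
      exact integral_heatG (by linarith)
    have hbd : ∀ w ∈ Iic (0 : ℝ), ‖(e w - e y) * (heatG2 τ (w - y) + heatG2 τ (w - -y))‖ ≤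
        (A * L + B * A) * (100 * τ ^ (-1 + α / 2)) *
          (heatG (2 * τ) (w - y) + heatG (2 * τ) (w - -y)) := by
      intro w hw
      have hw' : w ≤ 0 := hw
      -- `w` and `y` are nonpositive, so the image point is the farther one
      have hle : |w - y| ≤ |w - -y| := by
        rw [abs_of_nonpos (by linarith : w - -y ≤ 0)]
        exact abs_le.2 ⟨by linarith, by linarith⟩
      have hle' : |w - y| ^ α ≤ |w - -y| ^ α := Real.rpow_le_rpow (abs_nonneg _) hle hα0.le
      have g1 := abs_rpow_heatG2_le hα0 hα1 hτ (w - y)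
      have g2 := abs_rpow_heatG2_le hα0 hα1 hτ (w - -y)
      rw [norm_mul, Real.norm_eq_abs, Real.norm_eq_abs]
      calc _ ≤ ((A * L + B * A) * |w - y| ^ α) * (|heatG2 τ (w - y)| + |heatG2 τ (w - -y)|) := by
            have := heh w y
            have := abs_add_le (heatG2 τ (w - y)) (heatG2 τ (w - -y))
            gcongr
        _ = (A * L + B * A) * (|w - y| ^ α * |heatG2 τ (w - y)|
              + |w - y| ^ α * |heatG2 τ (w - -y)|) := by ring
        _ ≤ (A * L + B * A) * (|w - y| ^ α * |heatG2 τ (w - y)|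
              + |w - -y| ^ α * |heatG2 τ (w - -y)|) := by gcongr
        _ ≤ (A * L + B * A) * (100 * τ ^ (-1 + α / 2) * heatG (2 * τ) (w - y)
              + 100 * τ ^ (-1 + α / 2) * heatG (2 * τ) (w - -y)) := by gcongr
        _ = _ := by ring
    have hint : Integrable (fun w => (A * L + B * A) * (100 * τ ^ (-1 + α / 2)) *
          (heatG (2 * τ) (w - y) + heatG (2 * τ) (w - -y))) := ((hG y).add (hG (-y))).const_mul _
    rw [← Real.norm_eq_abs]
    refine (norm_integral_le_of_norm_le hint.integrableOn ((ae_restrict_mem measurableSet_Iic).mono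
      fun w hw => hbd w hw)).trans ?_
    refine (setIntegral_le_integral hint (ae_of_all _ fun w => ?_)).trans (le_of_eq ?_)
    · have := heatG_nonneg (2 * τ) (w - y)
      have := heatG_nonneg (2 * τ) (w - -y)
      simp only [Pi.zero_apply]
      positivity
    · rw [integral_const_mul, integral_add (hG y) (hG (-y)), hG1, hG1, hC1]
      ring
  have eqn : D.K' β μ τ y r =
      -(∫ w in Iic 0, (e w - e y) * (heatG2 τ (w - y) + heatG2 τ (w - -y)))
      - (∫ w, D.c β r w * heatG1 τ (w - y) ∂(μ r))
      - ∫ w, D.c β r w * heatG1 τ (w - -y) ∂(μ r) := by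
    have e1 : ∫ w in Iic 0, (e w - e y) * (heatG2 τ (w - y) + heatG2 τ (w - -y)) =
        (∫ w in Iic 0, e w * heatG2 τ (w - y)) + ∫ w in Iic 0, e w * heatG2 τ (w - -y) := by
      have e2 : ∀ w, (e w - e y) * (heatG2 τ (w - y) + heatG2 τ (w - -y)) =
          (e w * heatG2 τ (w - y) + e w * heatG2 τ (w - -y))
            - e y * (heatG2 τ (w - y) + heatG2 τ (w - -y)) := fun w => by ring
      simp only [e2]
      have j1 : Integrable (fun w => e w * heatG2 τ (w - y) + e w * heatG2 τ (w - -y)) :=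
        (i3 y).add (i3 (-y))
      have j2 : Integrable (fun w => e y * (heatG2 τ (w - y) + heatG2 τ (w - -y))) :=
        ((integrable_heatG2_shift hτ y).add (integrable_heatG2_shift hτ (-y))).const_mul (e y)
      rw [integral_sub j1.integrableOn j2.integrableOn,
        integral_const_mul, integral_heatG2_reflect hτ y, mul_zero, sub_zero,
        integral_add (i3 y).integrableOn (i3 (-y)).integrableOn]
    have e3 : ∀ v, ∫ w in Iic 0, k w * (D.a β r w * heatG2 τ (w - v)) =
        ∫ w in Iic 0, e w * heatG2 τ (w - v) := fun v => by
      refine integral_congr_ae (ae_of_all _ fun w => ?_)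
      simp only [he]; ring
    unfold K'
    rw [split, split, dens, dens, e3, e3, e1]
    ring
  rw [eqn]
  have l1 := low y
  have l2 := low (-y)
  calc _ ≤ C1 * τ ^ (-1 + α / 2) + (A * 100 * Q) * τ ^ (-(1 / 2) : ℝ)
        + (A * 100 * Q) * τ ^ (-(1 / 2) : ℝ) := by
        refine (abs_sub _ _).trans (add_le_add ((abs_sub _ _).trans (add_le_add ?_ l1)) l2)
        rw [abs_neg]; exact main
    _ = C1 * τ ^ (-1 + α / 2) + 2 * (A * 100 * Q) * τ ^ (-(1 / 2) : ℝ) := by ring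
    _ ≤ C1 * τ ^ (-1 + α / 2) + 2 * (A * 100 * Q) * (M ^ (1 / 2 - α / 2) * τ ^ (-1 + α / 2)) := by
        gcongr
    _ = _ := by rw [hC2]; ring

end CutData

/-- The flow has densities that are continuously differentiable up to the boundary. -/
lemma KilledFlow.exists_density {s T α : ℝ} {β : ℝ → ℝ → ℝ} {μ : ProbabilityTheory.Kernel ℝ ℝ}
    [ProbabilityTheory.IsFiniteKernel μ] (h : KilledFlow s T α β μ) {t : ℝ} (hst : s < t)
    (htT : t ≤ T) {R : ℝ} (hR : 0 < R) :
    ∃ k k' : ℝ → ℝ, (∀ y, HasDerivAt k (k' y) y) ∧ Continuous k' ∧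
      (∀ y ∈ Ioo (-R) 0, 0 ≤ k y) ∧
      (μ t).restrict (Ioo (-R) 0) = (volume.restrict (Ioo (-R) 0)).withDensity
        (fun y => ENNReal.ofReal (k y)) := by
  have hsT : s < T := by linarith
  obtain ⟨D⟩ := exists_cutData hR (show (s + t) / 2 < t by linarith)
  have hs0 : s < (s + t) / 2 := by linarith
  obtain ⟨hd, hk0⟩ := D.k_density hR hs0 h hst le_rfl htT
  obtain ⟨C, hC, hb⟩ := D.K'_bound hR hs0 hsT h
  have hα0 := h.α0
  have hbi : IntervalIntegrable (fun r => C * (t - r) ^ (-1 + α / 2)) volume s t :=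
    (intervalIntegrable_sub_rpow s t (by linarith)).const_mul C
  have bnd : ∀ y, ∀ r, r ∈ uIoc s t → r ≠ t →
      ‖D.K' β μ (t + 0 - r) y r‖ ≤ C * (t - r) ^ (-1 + α / 2) := by
    intro y r hr hr'
    rw [uIoc_of_le hst.le] at hr
    have := lt_of_le_of_ne hr.2 hr'
    rw [add_zero]
    exact hb r ⟨hr.1.le, by linarith⟩ (t - r) (by linarith) (by linarith [hr.1]) y
  refine ⟨fun y => D.k β μ s t 0 y, fun y => ∫ r in s..t, D.K' β μ (t + 0 - r) y r,
    fun y => ?_, ?_, hk0, hd⟩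
  · refine (intervalIntegral.hasDerivAt_integral_of_dominated_loc_of_deriv_le (s := univ)
      (F := fun y r => D.K β μ (t + 0 - r) y r) (F' := fun y r => D.K' β μ (t + 0 - r) y r)
      (bound := fun r => C * (t - r) ^ (-1 + α / 2)) univ_mem (Eventually.of_forall fun y =>
        (D.measurable_K_time h.meas t 0 y).1.aestronglyMeasurable)
      (D.intervalIntegrable_K hs0 hsT hR h hst.le htT 0 le_rfl zero_le_one y)
      (D.measurable_K_time h.meas t 0 y).2.aestronglyMeasurable ?_ hbi ?_).2
    · filter_upwards [CutData.ae_ne t] with r hr' hr y _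
      exact bnd y r hr hr'
    · filter_upwards [CutData.ae_ne t] with r hr' hr y _
      rw [uIoc_of_le hst.le] at hr
      have := lt_of_le_of_ne hr.2 hr'
      exact D.hasDerivAt_K hR h.α0 h.α1 h.hol h.meas ⟨hr.1.le, by linarith⟩ (by linarith) y
  · refine intervalIntegral.continuous_of_dominated_interval
      (bound := fun r => C * (t - r) ^ (-1 + α / 2)) (fun y =>
      (D.measurable_K_time h.meas t 0 y).2.aestronglyMeasurable) (fun y => ?_) hbi ?_
    · filter_upwards [CutData.ae_ne t] with r hr' hr
      exact bnd y r hr hr'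
    · filter_upwards [CutData.ae_ne t] with r hr' hr
      rw [uIoc_of_le hst.le] at hr
      have := lt_of_le_of_ne hr.2 hr'
      exact D.continuous_K' hR h.α0 h.α1 h.hol h.meas ⟨hr.1.le, by linarith⟩ (by linarith)

/-! ### Optional stopping -/

/-- The sum of the increments of `m`, taken while the decreasing condition `e` holds, telescopes to
the value at the first index `J` where `e` fails. -/
lemma sum_stop (e : ℕ → Prop) [DecidablePred e] (hanti : ∀ k, e (k + 1) → e k) (m : ℕ → ℝ)
    (n : ℕ) : ∃ J ≤ n, (∑ k ∈ Finset.range n, if e k then m (k + 1) - m k else 0) = m J - m 0 ∧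
      (∀ k < J, e k) ∧ ∀ k, J ≤ k → k < n → ¬ e k := by
  induction n with
  | zero => exact ⟨0, le_rfl, by simp, by simp, fun k _ h => absurd h (Nat.not_lt_zero _)⟩
  | succ n ih =>
    obtain ⟨J, hJ, hs, h1, h2⟩ := ih
    have hanti' : Antitone e := antitone_nat_of_succ_le fun k => hanti k
    rw [Finset.sum_range_succ, hs]
    by_cases hn : e n
    · have hJn : J = n := by
        by_contra hc
        have : J < n := lt_of_le_of_ne hJ hc
        exact h2 J le_rfl this (hanti' this.le hn)
      subst hJn
      refine ⟨J + 1, le_rfl, by rw [if_pos hn]; ring, fun k hk => ?_, fun k hk hk' => by omega⟩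
      exact hanti' (Nat.lt_succ_iff.1 hk) hn
    · refine ⟨J, hJ.trans n.le_succ, by rw [if_neg hn, add_zero], h1, fun k hk hk' => ?_⟩
      rcases Nat.lt_succ_iff_lt_or_eq.1 hk' with h | h
      · exact h2 k hk h
      · rw [h]; exact hn

section Stop

variable {Ω : Type*} [m : MeasurableSpace Ω] {P : Measure Ω} [IsProbabilityMeasure P]
  {F : Filtration ℝ m}

lemma MartingaleOn.setIntegral_sub {M : ℝ → Ω → ℝ} {I : Set ℝ} (hM : MartingaleOn P F M I)
    {u v : ℝ} (hu : u ∈ I) (hv : v ∈ I) (huv : u ≤ v) {E : Set Ω} (hE : MeasurableSet[F u] E) :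
    ∫ ω in E, (M v ω - M u ω) ∂P = 0 := by
  rw [integral_sub (hM.1 v hv).2.integrableOn (hM.1 u hu).2.integrableOn,
    ← setIntegral_condExp (F.le u) (hM.1 v hv).2 hE]
  have : ∫ ω in E, (P[M v|F u]) ω ∂P = ∫ ω in E, M u ω ∂P :=
    setIntegral_congr_ae (F.le u _ hE) ((hM.2 u hu v hv huv).mono fun ω h _ => h)
  rw [this, sub_self]

/-- Optional stopping for a bounded continuous martingale at the end `τ` of a decreasing family
of events `E r`, through approximation by the discrete stochastic integrals of the indicators. -/
lemma stopped_mean {M : ℝ → Ω → ℝ} {s t C : ℝ} (hst : s < t)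
    (hM : ∀ v, s < v → v < t → MartingaleOn P F M (Icc s v))
    (hc : ∀ ω, ContinuousOn (fun u => M u ω) (Icc s t))
    (hb : ∀ u ∈ Icc s t, ∀ ω, |M u ω| ≤ C) {E : ℝ → Set Ω} (hanti : Antitone E)
    (hE : ∀ r ∈ Icc s t, MeasurableSet[F r] (E r)) {τ : Ω → ℝ} (hτ : ∀ ω, τ ω ∈ Icc s t)
    (hτ1 : ∀ ω, ∀ r ∈ Icc s t, r < τ ω → ω ∈ E r) (hτ2 : ∀ ω, ∀ r ∈ Icc s t, τ ω < r → ω ∉ E r) :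
    ∫ ω, (M (τ ω) ω - M s ω) ∂P = 0 := by
  classical
  set p : ℕ → ℕ → ℝ := fun n k => s + k * ((t - s) / (n + 1)) with hp
  set S : ℕ → Ω → ℝ := fun n ω =>
    ∑ k ∈ Finset.range n, (E (p n k)).indicator (fun ω => M (p n (k + 1)) ω - M (p n k) ω) ω with hS
  have hd : ∀ n : ℕ, 0 < (t - s) / (n + 1) := fun n => by
    have : 0 < t - s := by linarith
    positivity
  have hp0 : ∀ n, p n 0 = s := fun n => by simp [hp]
  have hps : ∀ n k, p n (k + 1) = p n k + (t - s) / (n + 1) := fun n k => by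
    simp only [hp]; push_cast; ring
  have hpm : ∀ n, Monotone (p n) := fun n => monotone_nat_of_le_succ fun k => by
    rw [hps]; linarith [hd n]
  have hpn : ∀ n, p n (n + 1) = t := fun n => by
    have : (n : ℝ) + 1 ≠ 0 := by positivity
    simp only [hp]; push_cast; field_simp; ring
  have hpI : ∀ n k, k ≤ n → s ≤ p n k ∧ p n k ≤ p n n ∧ p n n < t := fun n k hk =>
    ⟨by rw [← hp0 n]; exact hpm n k.zero_le, hpm n hk, by
      have := hps n n; rw [hpn] at this; linarith [hd n]⟩
  have hpIcc : ∀ n k, k ≤ n → p n k ∈ Icc s t := fun n k hk =>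
    ⟨(hpI n k hk).1, ((hpI n k hk).2.1.trans (hpI n k hk).2.2.le)⟩
  have key : ∀ n ω, ∃ J ≤ n, S n ω = M (p n J) ω - M s ω ∧ |p n J - τ ω| ≤ (t - s) / (n + 1) := by
    intro n ω
    obtain ⟨J, hJ, h1, h2, h3⟩ := sum_stop (fun k => ω ∈ E (p n k))
      (fun k hk => hanti (hpm n k.le_succ) hk) (fun k => M (p n k) ω) n
    refine ⟨J, hJ, ?_, ?_⟩
    · rw [hp0] at h1
      rw [← h1]
      exact Finset.sum_congr rfl fun k _ => by rw [indicator_apply]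
    · have up : p n J ≤ τ ω + (t - s) / (n + 1) := by
        rcases J with _ | J
        · rw [hp0]; linarith [(hτ ω).1, hd n]
        · rw [hps]
          have : p n J ≤ τ ω := by
            by_contra hcon
            exact hτ2 ω _ (hpIcc n J (by omega)) (not_le.1 hcon) (h2 J (Nat.lt_succ_self J))
          linarith
      have low : τ ω ≤ p n J + (t - s) / (n + 1) := by
        rcases hJ.lt_or_eq with hlt | heq
        · have : τ ω ≤ p n J := by
            by_contra hcon
            exact h3 J le_rfl hlt (hτ1 ω _ (hpIcc n J hJ) (not_le.1 hcon))
          linarith [hd n]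
        · have := hps n n
          rw [hpn] at this
          rw [heq, ← this]; exact (hτ ω).2
      exact abs_le.2 ⟨by linarith, by linarith⟩
  have mt : ∀ n : ℕ, 1 ≤ n → MartingaleOn P F M (Icc s (p n n)) := fun n hn =>
    hM _ (by
      have := hpm n hn
      have h1 := hps n 0
      rw [hp0] at h1; norm_num at h1
      linarith [hd n]) (hpI n n le_rfl).2.2
  have hmem : ∀ n k, k ≤ n → p n k ∈ Icc s (p n n) := fun n k hk =>
    ⟨(hpI n k hk).1, (hpI n k hk).2.1⟩
  have hint : ∀ n k, k < n → Integrable ((E (p n k)).indicator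
      (fun ω => M (p n (k + 1)) ω - M (p n k) ω)) P := fun n k hk =>
    ((((mt n (by omega)).1 _ (hmem n (k + 1) hk)).2).sub
      (((mt n (by omega)).1 _ (hmem n k hk.le)).2)).indicator
        (F.le _ _ (hE _ (hpIcc n k hk.le)))
  have hS0 : ∀ n, ∫ ω, S n ω ∂P = 0 := by
    intro n
    simp only [hS]
    rw [integral_finsetSum _ fun k hk => hint n k (Finset.mem_range.1 hk)]
    refine Finset.sum_eq_zero fun k hk => ?_
    have hk := Finset.mem_range.1 hk
    rw [integral_indicator (F.le _ _ (hE _ (hpIcc n k hk.le)))]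
    exact (mt n (by omega)).setIntegral_sub (hmem n k hk.le) (hmem n (k + 1) hk)
      (hpm n k.le_succ) (hE _ (hpIcc n k hk.le))
  have hlim : ∀ ω, Tendsto (fun n => S n ω) atTop (𝓝 (M (τ ω) ω - M s ω)) := by
    intro ω
    choose J hJ h1 h2 using fun n => key n ω
    simp only [h1]
    refine Tendsto.sub_const ?_ _
    have hto : Tendsto (fun n => p n (J n)) atTop (𝓝[Icc s t] (τ ω)) := by
      refine tendsto_nhdsWithin_iff.2 ⟨?_, Eventually.of_forall fun n => hpIcc n _ (hJ n)⟩
      rw [tendsto_iff_dist_tendsto_zero]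
      refine squeeze_zero (fun _ => dist_nonneg) (fun n => ?_)
        (g := fun n : ℕ => (t - s) * (1 / ((n : ℝ) + 1))) ?_
      · rw [Real.dist_eq]; refine (h2 n).trans (le_of_eq (by ring))
      · simpa using tendsto_one_div_add_atTop_nhds_zero_nat.const_mul (t - s)
    exact (hc ω (τ ω) (hτ ω)).tendsto.comp hto
  have := tendsto_integral_of_dominated_convergence (μ := P) (F := S)
    (f := fun ω => M (τ ω) ω - M s ω) (fun _ => C + C) (fun n => by
      have : Integrable (S n) P := integrable_finsetSum _ fun k hk => hint n k (Finset.mem_range.1 hk)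
      exact this.aestronglyMeasurable) (integrable_const _) (fun n => ae_of_all _ fun ω => by
      obtain ⟨J, hJ, h1, -⟩ := key n ω
      rw [h1, Real.norm_eq_abs]
      exact (abs_sub _ _).trans (add_le_add (hb _ (hpIcc n J hJ) ω) (hb s ⟨le_rfl, hst.le⟩ ω)))
    (ae_of_all _ hlim)
  simp only [hS0] at this
  exact (tendsto_nhds_unique this tendsto_const_nhds)

end Stop

/-! ### Functions with continuous partial derivatives -/

/-- Continuous partial derivatives yield strict differentiability. -/
lemma hasStrictFDerivAt_of_partials {f f1 f2 : ℝ → ℝ → ℝ} {U : Set (ℝ × ℝ)} (hU : IsOpen U)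
    (d1 : ∀ p ∈ U, HasDerivAt (fun r => f r p.2) (f1 p.1 p.2) p.1)
    (d2 : ∀ p ∈ U, HasDerivAt (f p.1) (f2 p.1 p.2) p.2)
    (c1 : ContinuousOn (fun p : ℝ × ℝ => f1 p.1 p.2) U)
    (c2 : ContinuousOn (fun p : ℝ × ℝ => f2 p.1 p.2) U) {p : ℝ × ℝ} (hp : p ∈ U) :
    HasStrictFDerivAt (fun q : ℝ × ℝ => f q.1 q.2)
      ((ContinuousLinearMap.toSpanSingleton ℝ (f1 p.1 p.2)).coprod
        (ContinuousLinearMap.toSpanSingleton ℝ (f2 p.1 p.2))) p := by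
  have hm := hU.mem_nhds hp
  have cl : Continuous (fun x : ℝ => ContinuousLinearMap.toSpanSingleton ℝ x) :=
    (ContinuousLinearMap.toSpanSingletonCLE (𝕜 := ℝ) (E := ℝ)).continuous
  exact hasStrictFDerivAt_uncurry_coprod (f := f)
    (f₁ := fun a b => ContinuousLinearMap.toSpanSingleton ℝ (f1 a b))
    (f₂ := fun a b => ContinuousLinearMap.toSpanSingleton ℝ (f2 a b))
    (by filter_upwards [hm] with v hv; exact (d1 v hv).hasFDerivAt)
    (by filter_upwards [hm] with v hv; exact (d2 v hv).hasFDerivAt)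
    (cl.continuousAt.comp (c1.continuousAt hm)) (cl.continuousAt.comp (c2.continuousAt hm))

lemma continuousOn_of_partials {f f1 f2 : ℝ → ℝ → ℝ} {U : Set (ℝ × ℝ)} (hU : IsOpen U)
    (d1 : ∀ p ∈ U, HasDerivAt (fun r => f r p.2) (f1 p.1 p.2) p.1)
    (d2 : ∀ p ∈ U, HasDerivAt (f p.1) (f2 p.1 p.2) p.2)
    (c1 : ContinuousOn (fun p : ℝ × ℝ => f1 p.1 p.2) U)
    (c2 : ContinuousOn (fun p : ℝ × ℝ => f2 p.1 p.2) U) :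
    ContinuousOn (fun p : ℝ × ℝ => f p.1 p.2) U := fun _ hp =>
  (hasStrictFDerivAt_of_partials hU d1 d2 c1 c2 hp).continuousAt.continuousWithinAt

/-- Chain rule along a curve for a function with continuous partial derivatives. -/
lemma hasDerivAt_comp_of_partials {f f1 f2 : ℝ → ℝ → ℝ} {U : Set (ℝ × ℝ)} (hU : IsOpen U)
    (d1 : ∀ p ∈ U, HasDerivAt (fun r => f r p.2) (f1 p.1 p.2) p.1)
    (d2 : ∀ p ∈ U, HasDerivAt (f p.1) (f2 p.1 p.2) p.2)
    (c1 : ContinuousOn (fun p : ℝ × ℝ => f1 p.1 p.2) U)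
    (c2 : ContinuousOn (fun p : ℝ × ℝ => f2 p.1 p.2) U) {a b : ℝ → ℝ} {a' b' r : ℝ}
    (ha : HasDerivAt a a' r) (hb : HasDerivAt b b' r) (hp : (a r, b r) ∈ U) :
    HasDerivAt (fun r => f (a r) (b r)) (f1 (a r) (b r) * a' + f2 (a r) (b r) * b') r := by
  have h := (hasStrictFDerivAt_of_partials hU d1 d2 c1 c2 hp).hasFDerivAt
  have h2 := h.comp_hasDerivAt r (f := fun r => (a r, b r)) (ha.prodMk hb)
  refine h2.congr_deriv ?_
  simp [mul_comm]

/-! ### From the martingale problem to the Fokker–Planck equation -/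

section TestFn
variable {s t' : ℝ} {F Fr Fw Fww : ℝ → ℝ → ℝ}

lemma TestFn.cont (h : TestFn s t' F Fr Fw Fww) :
    ContinuousOn (fun p : ℝ × ℝ => F p.1 p.2) (Iio t' ×ˢ univ) :=
  continuousOn_of_partials (isOpen_Iio.prod isOpen_univ) (fun p hp => h.dr p.1 hp.1 p.2)
    (fun p hp => h.dw p.1 hp.1 p.2) h.cr h.cw

/-- The generator `∂_r + β ∂_w + ½ ∂_{ww}` applied to a test function. -/
def genT (β Fr Fw Fww : ℝ → ℝ → ℝ) (r w : ℝ) : ℝ := Fr r w + β r w * Fw r w + 1 / 2 * Fww r w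

lemma TestFn.cont_gen (h : TestFn s t' F Fr Fw Fww) {β : ℝ → ℝ → ℝ}
    (hβ : Continuous (fun p : ℝ × ℝ => β p.1 p.2)) :
    ContinuousOn (fun p : ℝ × ℝ => genT β Fr Fw Fww p.1 p.2) (Iio t' ×ˢ univ) :=
  (h.cr.add (hβ.continuousOn.mul h.cw)).add (continuousOn_const.mul h.cww)

lemma TestFn.bound (h : TestFn s t' F Fr Fw Fww) {β : ℝ → ℝ → ℝ}
    (hβ : Continuous (fun p : ℝ × ℝ => β p.1 p.2)) {t : ℝ} (ht : t < t') :
    ∃ C, 0 ≤ C ∧ ∀ r ∈ Icc s t, ∀ w, |F r w| ≤ C ∧ |genT β Fr Fw Fww r w| ≤ C := by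
  obtain ⟨s1, hs1, R, hR⟩ := h.supp
  have hK : IsCompact (Icc s t ×ˢ Icc (-R) R) := isCompact_Icc.prod isCompact_Icc
  have hsub : Icc s t ×ˢ Icc (-R) R ⊆ Iio t' ×ˢ (univ : Set ℝ) := fun p hp =>
    ⟨hp.1.2.trans_lt ht, mem_univ _⟩
  obtain ⟨C1, h1⟩ := hK.exists_bound_of_continuousOn (h.cont.mono hsub)
  obtain ⟨C2, h2⟩ := hK.exists_bound_of_continuousOn ((h.cont_gen hβ).mono hsub)
  refine ⟨max 0 (max C1 C2), le_max_left _ _, fun r hr w => ?_⟩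
  by_cases hw : R ≤ |w|
  · obtain ⟨e1, e2, e3, e4⟩ := hR r w (Or.inr hw)
    simp [genT, e1, e2, e3, e4]
  · have hw' : w ∈ Icc (-R) R := abs_le.1 (not_le.1 hw).le
    exact ⟨(h1 (r, w) ⟨hr, hw'⟩).trans ((le_max_left _ _).trans (le_max_right _ _)),
      (h2 (r, w) ⟨hr, hw'⟩).trans ((le_max_right _ _).trans (le_max_right _ _))⟩

end TestFn

section Flow

variable {Ω : Type*} [m : MeasurableSpace Ω]

/-- `Y` solves on `[s, T]` the martingale problem for `β ∂_w + ½ ∂_{ww}`, tested against the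
functions of `TestFn`, and starts below zero. -/
structure TransMP (P : Measure Ω) (F : Filtration ℝ m) (s T : ℝ) (β : ℝ → ℝ → ℝ)
    (Y : ℝ → Ω → ℝ) : Prop where
  cont : ∀ ω, ContinuousOn (fun u => Y u ω) (Icc s T)
  adapted : ∀ u ∈ Icc s T, Measurable[F u] (Y u)
  init : ∀ ω, Y s ω < 0
  mart : ∀ (t' : ℝ) (G Gr Gw Gww : ℝ → ℝ → ℝ), TestFn s t' G Gr Gw Gww → ∀ v, s < v → v < T →
    v < t' → MartingaleOn P F
      (fun u ω => G u (Y u ω) - ∫ r in s..u, genT β Gr Gw Gww r (Y r ω)) (Icc s v)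

/-- The kernel `r ↦ P(ω ∈ S_r, Y_r ∈ ·)`. -/
def flowKernel (P : Measure Ω) [IsFiniteMeasure P] (Y : ℝ → Ω → ℝ) (S : Set (ℝ × Ω))
    (hY : Measurable (fun p : ℝ × Ω => Y p.1 p.2)) (hS : MeasurableSet S) :
    ProbabilityTheory.Kernel ℝ ℝ where
  toFun r := (P.restrict (Prod.mk r ⁻¹' S)).map (Y r)
  measurable' := by
    refine Measure.measurable_of_measurable_coe _ fun A hA => ?_
    have hYr : ∀ r, Measurable (Y r) := fun r => hY.comp measurable_prodMk_left
    have : ∀ r, ((P.restrict (Prod.mk r ⁻¹' S)).map (Y r)) A =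
        P (Prod.mk r ⁻¹' (((fun p : ℝ × Ω => Y p.1 p.2) ⁻¹' A) ∩ S)) := fun r => by
      rw [Measure.map_apply (hYr r) hA, Measure.restrict_apply (hYr r hA)]
      rfl
    simp only [this]
    exact measurable_measure_prodMk_left ((hY hA).inter hS)

variable {P : Measure Ω} [IsProbabilityMeasure P] {Y : ℝ → Ω → ℝ} {S : Set (ℝ × Ω)}
  {hY : Measurable (fun p : ℝ × Ω => Y p.1 p.2)} {hS : MeasurableSet S}

lemma flowKernel_apply (r : ℝ) {A : Set ℝ} (hA : MeasurableSet A) :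
    flowKernel P Y S hY hS r A = P {ω | Y r ω ∈ A ∧ (r, ω) ∈ S} := by
  have hYr : Measurable (Y r) := hY.comp measurable_prodMk_left
  change ((P.restrict (Prod.mk r ⁻¹' S)).map (Y r)) A = _
  rw [Measure.map_apply hYr hA, Measure.restrict_apply (hYr hA)]
  rfl

lemma integral_flowKernel (r : ℝ) {φ : ℝ → ℝ} (hφ : Measurable φ) :
    ∫ w, φ w ∂(flowKernel P Y S hY hS r) =
      ∫ ω, S.indicator (fun p => φ (Y p.1 p.2)) (r, ω) ∂P := by
  have hYr : Measurable (Y r) := hY.comp measurable_prodMk_left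
  change ∫ w, φ w ∂((P.restrict (Prod.mk r ⁻¹' S)).map (Y r)) = _
  rw [integral_map hYr.aemeasurable hφ.aestronglyMeasurable,
    ← integral_indicator (measurable_prodMk_left hS)]
  rfl

instance : ProbabilityTheory.IsFiniteKernel (flowKernel P Y S hY hS) :=
  ⟨⟨1, ENNReal.one_lt_top, fun r => by
    rw [flowKernel_apply r MeasurableSet.univ]; exact prob_le_one⟩⟩

lemma flowKernel_real_le (r : ℝ) : (flowKernel P Y S hY hS r).real univ ≤ 1 := by
  rw [measureReal_def, flowKernel_apply r MeasurableSet.univ]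
  exact ENNReal.toReal_mono ENNReal.one_ne_top prob_le_one

lemma flowKernel_mono {S' : Set (ℝ × Ω)} {hS' : MeasurableSet S'} (h : S ⊆ S') (r : ℝ) :
    flowKernel P Y S hY hS r ≤ flowKernel P Y S' hY hS' r :=
  Measure.le_iff.2 fun A hA => by
    rw [flowKernel_apply r hA, flowKernel_apply r hA]
    exact measure_mono fun ω hω => ⟨hω.1, h hω.2⟩

/-- The time `r` clamped to `[s, T]`. -/
def clampT (s T r : ℝ) : ℝ := max s (min r T)

lemma clampT_mem {s T : ℝ} (h : s ≤ T) (r : ℝ) : clampT s T r ∈ Icc s T :=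
  ⟨le_max_left _ _, max_le h (min_le_right _ _)⟩

lemma clampT_of_mem {s T r : ℝ} (h : r ∈ Icc s T) : clampT s T r = r := by
  unfold clampT; rw [min_eq_left h.2, max_eq_right h.1]

lemma continuous_clampT (s T : ℝ) : Continuous (clampT s T) := by
  unfold clampT; fun_prop

/-- The flow of laws of `Y`, killed at the end of a decreasing family of events, is a weak solution
of the Fokker–Planck equation. The hypothesis `hτ` says that `τ` ends the period of life within
`[s, t]`: either the path is still alive at `t`, or it is killed at once (`τ = s`, where the test
functions vanish), or, under the boundary condition `bc`, it is killed at a zero of `Y`. -/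
lemma TransMP.weakSol {F : Filtration ℝ m} {s T : ℝ} {β : ℝ → ℝ → ℝ} {Y : ℝ → Ω → ℝ}
    (h : TransMP P F s T β Y) (hβ : Continuous (fun p : ℝ × ℝ => β p.1 p.2)) {E : ℝ → Set Ω}
    (hanti : Antitone E) (hE : ∀ r ∈ Icc s T, MeasurableSet[F r] (E r)) {bc : Prop}
    (hτ : ∀ t, s < t → t ≤ T → ∀ ω, ∃ τ ∈ Icc s t, (∀ r ∈ Icc s t, r < τ → ω ∈ E r) ∧
      (∀ r ∈ Icc s t, τ < r → ω ∉ E r) ∧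
      ((τ = t ∧ ω ∈ E t) ∨ (ω ∉ E t ∧ (τ = s ∨ (bc ∧ Y τ ω = 0)))))
    (hY : Measurable (fun p : ℝ × Ω => Y (clampT s T p.1) p.2))
    (hS : MeasurableSet {p : ℝ × Ω | p.2 ∈ E (clampT s T p.1)}) :
    WeakSol s T β (flowKernel P (fun r => Y (clampT s T r)) _ hY hS) bc := by
  classical
  intro t' G Gr Gw Gww hG hbc t hst htT htt'
  have hcl : ∀ r ∈ Icc s t, clampT s T r = r := fun r hr => clampT_of_mem ⟨hr.1, hr.2.trans htT⟩
  set S : Set (ℝ × Ω) := {p : ℝ × Ω | p.2 ∈ E (clampT s T p.1)} with hSdef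
  set ℓ := genT β Gr Gw Gww with hℓ
  obtain ⟨C, hC, hCb⟩ := hG.bound hβ htt'
  obtain ⟨s1, hs1, R, hR⟩ := hG.supp
  have hGs : ∀ w, G s w = 0 := fun w => (hR s w (Or.inl hs1.lt.le)).1
  have hsub : Icc s t ⊆ Icc s T := Icc_subset_Icc_right htT
  have hYc : ∀ ω, ContinuousOn (fun u => (u, Y u ω)) (Icc s t) := fun ω =>
    continuousOn_id.prodMk ((h.cont ω).mono hsub)
  have hmaps : ∀ ω, MapsTo (fun u => (u, Y u ω)) (Icc s t) (Iio t' ×ˢ (univ : Set ℝ)) :=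
    fun ω u hu => ⟨hu.2.trans_lt htt', mem_univ _⟩
  have hℓc : ∀ ω, ContinuousOn (fun u => ℓ u (Y u ω)) (Icc s t) := fun ω =>
    (hG.cont_gen hβ).comp (hYc ω) (hmaps ω)
  have hℓi : ∀ ω, ∀ a ∈ Icc s t, ∀ b ∈ Icc s t,
      IntervalIntegrable (fun u => ℓ u (Y u ω)) volume a b := fun ω a ha b hb =>
    ((hℓc ω).mono (uIcc_subset_Icc ha hb)).intervalIntegrable
  set M : ℝ → Ω → ℝ := fun u ω => G u (Y u ω) - ∫ r in s..u, ℓ r (Y r ω) with hM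
  choose τ hτm hτ1 hτ2 hτ3 using hτ t hst htT
  have hs_mem : s ∈ Icc s t := ⟨le_rfl, hst.le⟩
  have hMs : ∀ ω, M s ω = 0 := fun ω => by simp [hM, hGs]
  have h0 : ∫ ω, (M (τ ω) ω - M s ω) ∂P = 0 := by
    refine stopped_mean (C := C + C * (t - s)) hst (fun v hv hvt => ?_) (fun ω => ?_)
      (fun u hu ω => ?_) hanti (fun r hr => hE r (hsub hr)) hτm hτ1 hτ2
    · exact h.mart t' G Gr Gw Gww hG v hv (hvt.trans_le htT) (hvt.trans htt')
    · refine (hG.cont.comp (hYc ω) (hmaps ω)).sub ?_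
      have := intervalIntegral.continuousOn_primitive_interval (a := s) (b := t) (μ := volume)
        (f := fun u => ℓ u (Y u ω)) (by
          rw [uIcc_of_le hst.le]; exact (hℓc ω).integrableOn_Icc)
      rwa [uIcc_of_le hst.le] at this
    · refine (abs_sub _ _).trans (add_le_add (hCb u hu _).1 ?_)
      rw [← Real.norm_eq_abs]
      refine (intervalIntegral.norm_integral_le_of_norm_le_const (C := C) fun r hr => ?_).trans ?_
      · rw [uIoc_of_le hu.1] at hr
        exact (hCb r ⟨hr.1.le, hr.2.trans hu.2⟩ _).2
      · rw [abs_of_nonneg (by linarith [hu.1])]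
        exact mul_le_mul_of_nonneg_left (by linarith [hu.2]) hC
  -- a jointly measurable version of the integrand
  set ℓ' : ℝ × ℝ → ℝ := (Iio t' ×ˢ (univ : Set ℝ)).piecewise (fun p => ℓ p.1 p.2) (fun _ => 0)
    with hℓ'
  have hℓ'm : Measurable ℓ' := (hG.cont_gen hβ).measurable_piecewise continuousOn_const
    (measurableSet_Iio.prod MeasurableSet.univ)
  have hℓ'e : ∀ r ∈ Icc s t, ∀ w, ℓ' (r, w) = ℓ r w := fun r hr w =>
    piecewise_eq_of_mem _ _ _ ⟨hr.2.trans_lt htt', mem_univ _⟩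
  set J : ℝ × Ω → ℝ := S.indicator (fun p => ℓ' (p.1, Y (clampT s T p.1) p.2)) with hJ
  have hJm : Measurable J := (hℓ'm.comp (measurable_fst.prodMk hY)).indicator hS
  have hJb : ∀ r ∈ Icc s t, ∀ ω, |J (r, ω)| ≤ C := fun r hr ω => by
    simp only [hJ, indicator_apply]
    split_ifs
    · rw [hℓ'e r hr]; exact (hCb r hr _).2
    · simpa using hC
  have hJi : Integrable J ((volume.restrict (Ioc s t)).prod P) := by
    refine Integrable.of_bound hJm.aestronglyMeasurable C ?_
    have hms : MeasurableSet {p : ℝ × Ω | ‖J p‖ ≤ C} := measurableSet_le hJm.norm measurable_const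
    rw [Measure.ae_prod_iff_ae_ae hms]
    filter_upwards [ae_restrict_mem measurableSet_Ioc] with r hr
    exact ae_of_all _ fun ω => hJb r ⟨hr.1.le, hr.2⟩ ω
  have hpath : ∀ ω, M (τ ω) ω - M s ω =
      S.indicator (fun p => G t (Y (clampT s T p.1) p.2)) (t, ω) - ∫ r in s..t, J (r, ω) := by
    intro ω
    have htm : t ∈ Icc s t := ⟨hst.le, le_rfl⟩
    have a1 : S.indicator (fun p => G t (Y (clampT s T p.1) p.2)) (t, ω) = G (τ ω) (Y (τ ω) ω) := by
      simp only [indicator_apply, hSdef, mem_ofPred_eq, hcl t htm]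
      rcases hτ3 ω with ⟨e1, e2⟩ | ⟨e1, e2⟩
      · rw [if_pos e2, e1]
      · rw [if_neg e1]
        rcases e2 with e2 | ⟨e2, e3⟩
        · rw [e2, hGs]
        · rw [e3, hbc e2]
    have eJ : ∀ r ∈ Icc s t, J (r, ω) = if ω ∈ E r then ℓ r (Y r ω) else 0 := fun r hr => by
      simp only [hJ, indicator_apply, hSdef, mem_ofPred_eq, hcl r hr, hℓ'e r hr]
    have c1 : ∀ᵐ r ∂(volume : Measure ℝ), r ∈ uIoc s (τ ω) → ℓ r (Y r ω) = J (r, ω) := by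
      filter_upwards [CutData.ae_ne (τ ω)] with r hr hr2
      rw [uIoc_of_le (hτm ω).1] at hr2
      have hrI : r ∈ Icc s t := ⟨hr2.1.le, hr2.2.trans (hτm ω).2⟩
      rw [eJ r hrI, if_pos (hτ1 ω r hrI (lt_of_le_of_ne hr2.2 hr))]
    have c2 : ∀ᵐ r ∂(volume : Measure ℝ), r ∈ uIoc (τ ω) t → (0 : ℝ) = J (r, ω) := by
      refine ae_of_all _ fun r hr2 => ?_
      rw [uIoc_of_le (hτm ω).2] at hr2
      have hrI : r ∈ Icc s t := ⟨(hτm ω).1.trans hr2.1.le, hr2.2⟩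
      rw [eJ r hrI, if_neg (hτ2 ω r hrI hr2.1)]
    have i1 : IntervalIntegrable (fun r => J (r, ω)) volume s (τ ω) :=
      (hℓi ω s hs_mem _ (hτm ω)).congr_ae ((ae_restrict_iff' measurableSet_uIoc).2 c1)
    have i2 : IntervalIntegrable (fun r => J (r, ω)) volume (τ ω) t :=
      (intervalIntegrable_const (c := (0 : ℝ))).congr_ae
        ((ae_restrict_iff' measurableSet_uIoc).2 c2)
    rw [hMs, sub_zero, a1, ← intervalIntegral.integral_add_adjacent_intervals i1 i2,
      ← intervalIntegral.integral_congr_ae c1, ← intervalIntegral.integral_congr_ae c2]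
    simp [hM]
  have hGm : Measurable (G t) := by
    have : Continuous (G t) := continuous_iff_continuousAt.2 fun w =>
      (hG.dw t htt' w).continuousAt
    exact this.measurable
  have iA : Integrable (fun ω => S.indicator (fun p => G t (Y (clampT s T p.1) p.2)) (t, ω)) P := by
    refine Integrable.of_bound (((hGm.comp hY).indicator hS).comp
      measurable_prodMk_left).aestronglyMeasurable C (ae_of_all _ fun ω => ?_)
    simp only [indicator_apply]
    split_ifs
    · exact (hCb t ⟨hst.le, le_rfl⟩ _).1
    · simpa using hC
  have iB : Integrable (fun ω => ∫ r in s..t, J (r, ω)) P := by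
    simp only [intervalIntegral.integral_of_le hst.le]
    exact hJi.integral_prod_right
  simp only [hpath] at h0
  rw [integral_sub iA iB, sub_eq_zero] at h0
  rw [integral_flowKernel t hGm]
  refine h0.trans ?_
  simp only [intervalIntegral.integral_of_le hst.le]
  rw [← integral_integral_swap (f := fun r ω => J (r, ω)) hJi]
  refine setIntegral_congr_fun measurableSet_Ioc fun r hr => ?_
  have hrI : r ∈ Icc s t := ⟨hr.1.le, hr.2⟩
  have e : ∀ w, Gr r w + β r w * Gw r w + 1 / 2 * Gww r w = ℓ' (r, w) := fun w => by
    rw [hℓ'e r hrI]; rfl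
  simp only [e]
  rw [integral_flowKernel r (φ := fun w => ℓ' (r, w)) (hℓ'm.comp measurable_prodMk_left)]
  rfl

end Flow

/-! ### The law killed at the boundary -/

/-- A continuous function is negative on `[0, 1]` iff it is bounded away from zero at the rational
points; this countable description gives measurability. -/
lemma forall_neg_iff_rat {φ : ℝ → ℝ} (hφ : ContinuousOn φ (Icc 0 1)) :
    (∀ v ∈ Icc (0 : ℝ) 1, φ v < 0) ↔
      ∃ n : ℕ, ∀ q : ℚ, φ (clampT 0 1 q) ≤ -(1 / ((n : ℝ) + 1)) := by
  constructor
  · intro h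
    obtain ⟨v, hv, hmax⟩ := isCompact_Icc.exists_isMaxOn ⟨0, by simp⟩ hφ
    obtain ⟨n, hn⟩ := exists_nat_one_div_lt (neg_pos.2 (h v hv))
    exact ⟨n, fun q => (hmax (clampT_mem zero_le_one _)).trans (by linarith)⟩
  · rintro ⟨n, hn⟩ v hv
    have hc : Continuous fun x : ℝ => φ (clampT 0 1 x) :=
      hφ.comp_continuous (continuous_clampT 0 1) (clampT_mem zero_le_one)
    have : φ (clampT 0 1 v) ≤ -(1 / ((n : ℝ) + 1)) :=
      (isClosed_le hc continuous_const).closure_subset_iff (s := range ((↑) : ℚ → ℝ)) |>.2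
        (by rintro _ ⟨q, rfl⟩; exact hn q) (Rat.denseRange_cast v)
    rw [clampT_of_mem hv] at this
    have : 0 < 1 / ((n : ℝ) + 1) := by positivity
    linarith

section Flow

variable {Ω : Type*} [m : MeasurableSpace Ω] {P : Measure Ω} [IsProbabilityMeasure P]
  {F : Filtration ℝ m} {s T : ℝ} {β : ℝ → ℝ → ℝ} {Y : ℝ → Ω → ℝ}

/-- The event that `Y` stays below zero on `[s, r]`. -/
def aliveSet (s : ℝ) (Y : ℝ → Ω → ℝ) (r : ℝ) : Set Ω := {ω | ∀ u ∈ Icc s r, Y u ω < 0}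

omit m in
/-- Survival up to time `r` in terms of countably many times. -/
lemma mem_aliveSet_iff (hc : ∀ ω, ContinuousOn (fun u => Y u ω) (Icc s T)) {r : ℝ}
    (hr : r ∈ Icc s T) (ω : Ω) : ω ∈ aliveSet s Y r ↔
      ∃ n : ℕ, ∀ q : ℚ, Y (s + clampT 0 1 q * (r - s)) ω ≤ -(1 / ((n : ℝ) + 1)) := by
  have hmem : ∀ v ∈ Icc (0 : ℝ) 1, s + v * (r - s) ∈ Icc s r := fun v hv =>
    ⟨by nlinarith [hv.1, hr.1], by nlinarith [hv.2, hr.1]⟩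
  rw [← forall_neg_iff_rat (φ := fun v => Y (s + v * (r - s)) ω)]
  · constructor
    · intro h v hv
      exact h _ (hmem v hv)
    · intro h u hu
      rcases hr.1.eq_or_lt with e | e
      · have : u = s + 0 * (r - s) := by linarith [hu.1, hu.2]
        rw [this]; exact h 0 (by simp)
      · have h0 : 0 < r - s := by linarith
        have : u = s + (u - s) / (r - s) * (r - s) := by field_simp; ring
        rw [this]
        exact h _ ⟨div_nonneg (by linarith [hu.1]) h0.le, (div_le_one h0).2 (by linarith [hu.2])⟩
  · exact (hc ω).comp (by fun_prop) fun v hv =>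
      ⟨(hmem v hv).1, (hmem v hv).2.trans hr.2⟩

/-- The law killed on leaving `(-∞, 0)` is a killed flow: the boundary condition comes from
`TransMP.weakSol`, and the law has locally bounded densities because the law without killing, which
dominates it, does. -/
lemma TransMP.exists_killedFlow (h : TransMP P F s T β Y)
    (hβ : Continuous (fun p : ℝ × ℝ => β p.1 p.2)) {α : ℝ} (hα0 : 0 < α) (hα1 : α < 1)
    (hol : LocHolder s T α β) (hsT : s < T) :
    ∃ κ : ProbabilityTheory.Kernel ℝ ℝ, ProbabilityTheory.IsFiniteKernel κ ∧
      KilledFlow s T α β κ ∧ ∀ t ∈ Icc s T, ∀ A, MeasurableSet A →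
        κ t A = P {ω | Y t ω ∈ A ∧ ∀ u ∈ Icc s t, Y u ω < 0} := by
  have hcl := fun r => clampT_mem hsT.le r
  have hYm : ∀ u ∈ Icc s T, Measurable (Y u) := fun u hu => (h.adapted u hu).mono (F.le u) le_rfl
  have hY : Measurable (fun p : ℝ × Ω => Y (clampT s T p.1) p.2) :=
    measurable_uncurry_of_continuous_of_measurable (u := fun r => Y (clampT s T r))
      (fun ω => (h.cont ω).comp_continuous (continuous_clampT s T) hcl) fun r => hYm _ (hcl r)
  have hmem : ∀ r ∈ Icc s T, ∀ q : ℚ, s + clampT 0 1 q * (r - s) ∈ Icc s r := fun r hr q => by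
    have := clampT_mem zero_le_one (q : ℝ)
    exact ⟨by nlinarith [this.1, hr.1], by nlinarith [this.2, hr.1]⟩
  have hEF : ∀ r ∈ Icc s T, MeasurableSet[F r] (aliveSet s Y r) := by
    intro r hr
    have : aliveSet s Y r = ⋃ n : ℕ, ⋂ q : ℚ,
        (Y (s + clampT 0 1 q * (r - s))) ⁻¹' Iic (-(1 / ((n : ℝ) + 1))) := by
      ext ω
      rw [mem_aliveSet_iff h.cont hr]
      simp
    rw [this]
    refine MeasurableSet.iUnion fun n => MeasurableSet.iInter fun q => ?_
    have hq := hmem r hr q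
    exact ((h.adapted _ ⟨hq.1, hq.2.trans hr.2⟩).mono (F.mono hq.2) le_rfl) measurableSet_Iic
  have hS : MeasurableSet {p : ℝ × Ω | p.2 ∈ aliveSet s Y (clampT s T p.1)} := by
    have : {p : ℝ × Ω | p.2 ∈ aliveSet s Y (clampT s T p.1)} = ⋃ n : ℕ, ⋂ q : ℚ,
        {p : ℝ × Ω | Y (clampT s T (s + clampT 0 1 q * (clampT s T p.1 - s))) p.2 ≤
          -(1 / ((n : ℝ) + 1))} := by
      ext p
      have e : ∀ q : ℚ, clampT s T (s + clampT 0 1 q * (clampT s T p.1 - s)) =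
          s + clampT 0 1 q * (clampT s T p.1 - s) := fun q =>
        clampT_of_mem ⟨(hmem _ (hcl _) q).1, (hmem _ (hcl _) q).2.trans (hcl _).2⟩
      rw [mem_ofPred_eq, mem_aliveSet_iff h.cont (hcl _)]
      simp [e]
    rw [this]
    refine MeasurableSet.iUnion fun n => MeasurableSet.iInter fun q => ?_
    have hc : Measurable fun r : ℝ => s + clampT 0 1 q * (clampT s T r - s) := by
      have := (continuous_clampT s T).measurable
      fun_prop
    exact measurableSet_le (hY.comp ((hc.comp measurable_fst).prodMk measurable_snd))
      measurable_const
  have hS' : MeasurableSet {p : ℝ × Ω | p.2 ∈ (fun _ : ℝ => (univ : Set Ω)) (clampT s T p.1)} := by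
    simp
  have solν : WeakSol s T β (flowKernel P (fun r => Y (clampT s T r)) _ hY hS') False :=
    h.weakSol hβ (E := fun _ => univ) antitone_const (fun _ _ => MeasurableSet.univ)
      (fun t hst htT ω => ⟨t, ⟨hst.le, le_rfl⟩, fun _ _ _ => mem_univ _,
        fun r hr hr' => absurd hr.2 (not_le.2 hr'), Or.inl ⟨rfl, mem_univ _⟩⟩) hY hS'
  have hanti : Antitone (aliveSet s Y) := fun a b hab ω hω u hu => hω u ⟨hu.1, hu.2.trans hab⟩
  have solμ : WeakSol s T β (flowKernel P (fun r => Y (clampT s T r)) _ hY hS) True := by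
    refine h.weakSol hβ hanti hEF (fun t hst htT ω => ?_) hY hS
    by_cases hω : ω ∈ aliveSet s Y t
    · exact ⟨t, ⟨hst.le, le_rfl⟩, fun r hr _ => hanti hr.2 hω,
        fun r hr hr' => absurd hr.2 (not_le.2 hr'), Or.inl ⟨rfl, hω⟩⟩
    · have hω' := hω
      simp only [aliveSet, mem_ofPred_eq, not_forall, not_lt] at hω'
      obtain ⟨u, hu, hu0⟩ := hω'
      have hct : ContinuousOn (fun u => Y u ω) (Icc s t) :=
        (h.cont ω).mono (Icc_subset_Icc_right htT)
      have hK : IsCompact (Icc s t ∩ (fun u => Y u ω) ⁻¹' Ici 0) :=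
        isCompact_Icc.of_isClosed_subset (hct.preimage_isClosed_of_isClosed isClosed_Icc isClosed_Ici)
          inter_subset_left
      obtain ⟨τ, ⟨hτ1, hτ2⟩, hτ3⟩ := hK.exists_isLeast ⟨u, hu, hu0⟩
      have hbefore : ∀ r ∈ Icc s t, r < τ → Y r ω < 0 := fun r hr hrτ => by
        by_contra hc
        exact absurd (hτ3 ⟨hr, not_lt.1 hc⟩) (not_le.2 hrτ)
      refine ⟨τ, hτ1, fun r hr hrτ v hv => hbefore v ⟨hv.1, hv.2.trans hr.2⟩ (hv.2.trans_lt hrτ),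
        fun r hr hrτ hc => absurd (hc τ ⟨hτ1.1, hrτ.le⟩) (not_lt.2 hτ2), Or.inr ⟨hω, ?_⟩⟩
      rcases hτ1.1.eq_or_lt with e | e
      · exact Or.inl e.symm
      · refine Or.inr ⟨trivial, le_antisymm ?_ hτ2⟩
        have ht : Tendsto (fun u => Y u ω) (𝓝[Ico s τ] τ) (𝓝 (Y τ ω)) :=
          (hct τ hτ1).mono (fun v hv => ⟨hv.1, hv.2.le.trans hτ1.2⟩)
        have : (𝓝[Ico s τ] τ).NeBot := by
          rw [← mem_closure_iff_nhdsWithin_neBot, closure_Ico e.ne]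
          exact ⟨e.le, le_rfl⟩
        refine le_of_tendsto ht ?_
        filter_upwards [self_mem_nhdsWithin] with v hv
        exact (hbefore v ⟨hv.1, hv.2.le.trans hτ1.2⟩ hv.2).le
  refine ⟨flowKernel P (fun r => Y (clampT s T r)) _ hY hS, inferInstance, ?_, ?_⟩
  · refine ⟨hα0, hα1, hol, hβ.measurable, ?_, fun r => ?_, solμ⟩
    · have hB := hBd_zero hα0 hα1 hol flowKernel_real_le solν
      refine hB.mono (flowKernel_mono fun p _ => ?_)
      exact mem_univ p.2
    · rw [flowKernel_apply r measurableSet_Ici]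
      have : {ω | Y (clampT s T r) ω ∈ Ici 0 ∧
          (r, ω) ∈ {p : ℝ × Ω | p.2 ∈ aliveSet s Y (clampT s T p.1)}} = ∅ := by
        ext ω
        simp only [mem_ofPred_eq, mem_Ici, mem_empty_iff_false, iff_false, not_and]
        intro h1 h2
        exact absurd (h2 (clampT s T r) ⟨(hcl r).1, le_rfl⟩) (not_lt.2 h1)
      rw [this, measure_empty]
  · intro t ht A hA
    rw [flowKernel_apply t hA]
    simp only [mem_ofPred_eq, clampT_of_mem ht, aliveSet]

end Flow

/-! ### The Lamperti transform -/

/-- Coefficients on the whole plane: drift `M`, diffusion coefficient `S`, their partial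
derivatives, and the boundary `γ` with its derivative `γ1`. -/
structure Coef (T α c0 c1 : ℝ) (M Mx S Sx St : ℝ → ℝ → ℝ) (γ γ1 : ℝ → ℝ) : Prop where
  α0 : 0 < α
  α1 : α < 1
  c0_pos : 0 < c0
  cM : Continuous (fun p : ℝ × ℝ => M p.1 p.2)
  cMx : Continuous (fun p : ℝ × ℝ => Mx p.1 p.2)
  cS : Continuous (fun p : ℝ × ℝ => S p.1 p.2)
  cSx : Continuous (fun p : ℝ × ℝ => Sx p.1 p.2)
  cSt : Continuous (fun p : ℝ × ℝ => St p.1 p.2)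
  cγ : Continuous γ
  cγ1 : Continuous γ1
  lo : ∀ r z, c0 ≤ S r z
  hi : ∀ r z, S r z ≤ c1
  dM : ∀ r z, HasDerivAt (M r) (Mx r z) z
  dS : ∀ r z, HasDerivAt (S r) (Sx r z) z
  dSt : ∀ r ∈ Ioo 0 T, ∀ z, HasDerivAt (fun r => S r z) (St r z) r
  dγ : ∀ r ∈ Ioo 0 T, HasDerivAt γ (γ1 r) r
  hSx : ∃ C, 0 ≤ C ∧ ∀ r z z', |Sx r z - Sx r z'| ≤ C * |z - z'| ^ α

/-- The primitive `∫_0^z du / S(r, u)`. -/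
def lampI (S : ℝ → ℝ → ℝ) (r z : ℝ) : ℝ := ∫ u in (0 : ℝ)..z, (S r u)⁻¹

/-- The time derivative of `lampI`. -/
def lampJ (S St : ℝ → ℝ → ℝ) (r z : ℝ) : ℝ := ∫ u in (0 : ℝ)..z, -St r u / S r u ^ 2

/-- The Lamperti transform `Φ(r, z) = ∫_{γ(r)}^z du / S(r, u)`. -/
def lamp (S : ℝ → ℝ → ℝ) (γ : ℝ → ℝ) (r z : ℝ) : ℝ := lampI S r z - lampI S r (γ r)

/-- The time derivative of the Lamperti transform. -/
def lampT (S St : ℝ → ℝ → ℝ) (γ γ1 : ℝ → ℝ) (r z : ℝ) : ℝ :=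
  lampJ S St r z - (lampJ S St r (γ r) + (S r (γ r))⁻¹ * γ1 r)

namespace Coef

variable {T α c0 c1 : ℝ} {M Mx S Sx St : ℝ → ℝ → ℝ} {γ γ1 : ℝ → ℝ}
  (h : Coef T α c0 c1 M Mx S Sx St γ γ1)
include h

lemma S_pos (r z : ℝ) : 0 < S r z := h.c0_pos.trans_le (h.lo r z)

lemma cinv : Continuous (fun p : ℝ × ℝ => (S p.1 p.2)⁻¹) :=
  h.cS.inv₀ fun p => (h.S_pos p.1 p.2).ne'

lemma cquot : Continuous (fun p : ℝ × ℝ => -St p.1 p.2 / S p.1 p.2 ^ 2) :=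
  h.cSt.neg.div (h.cS.pow 2) fun p => pow_ne_zero 2 (h.S_pos p.1 p.2).ne'

lemma cI : Continuous (fun p : ℝ × ℝ => lampI S p.1 p.2) :=
  intervalIntegral.continuous_parametric_intervalIntegral_of_continuous
    (f := fun (p : ℝ × ℝ) u => (S p.1 u)⁻¹) (a₀ := 0) (s := fun p : ℝ × ℝ => p.2)
    (h.cinv.comp (g := fun q : ℝ × ℝ => (S q.1 q.2)⁻¹)
      (f := fun q : (ℝ × ℝ) × ℝ => (q.1.1, q.2)) (by fun_prop)) continuous_snd

lemma cJ : Continuous (fun p : ℝ × ℝ => lampJ S St p.1 p.2) :=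
  intervalIntegral.continuous_parametric_intervalIntegral_of_continuous
    (f := fun (p : ℝ × ℝ) u => -St p.1 u / S p.1 u ^ 2) (a₀ := 0) (s := fun p : ℝ × ℝ => p.2)
    (h.cquot.comp (g := fun q : ℝ × ℝ => -St q.1 q.2 / S q.1 q.2 ^ 2)
      (f := fun q : (ℝ × ℝ) × ℝ => (q.1.1, q.2)) (by fun_prop)) continuous_snd

lemma dI_z (r z : ℝ) : HasDerivAt (lampI S r) (S r z)⁻¹ z := by
  have hc : Continuous fun u => (S r u)⁻¹ := h.cinv.comp (by fun_prop : Continuous fun u : ℝ => (r, u))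
  exact intervalIntegral.integral_hasDerivAt_right (hc.intervalIntegrable _ _)
    hc.stronglyMeasurable.stronglyMeasurableAtFilter hc.continuousAt

lemma dJ_z (r z : ℝ) : HasDerivAt (lampJ S St r) (-St r z / S r z ^ 2) z := by
  have hc : Continuous fun u => -St r u / S r u ^ 2 :=
    h.cquot.comp (by fun_prop : Continuous fun u : ℝ => (r, u))
  exact intervalIntegral.integral_hasDerivAt_right (hc.intervalIntegrable _ _)
    hc.stronglyMeasurable.stronglyMeasurableAtFilter hc.continuousAt

lemma dI_r {r : ℝ} (hr : r ∈ Ioo 0 T) (z : ℝ) :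
    HasDerivAt (fun r => lampI S r z) (lampJ S St r z) r := by
  obtain ⟨ε, hε, hball⟩ := Metric.isOpen_iff.1 isOpen_Ioo r hr
  have hK : IsCompact (Metric.closedBall r (ε / 2) ×ˢ uIcc 0 z) :=
    (isCompact_closedBall r (ε / 2)).prod isCompact_uIcc
  obtain ⟨C, hC⟩ := hK.exists_bound_of_continuousOn h.cquot.continuousOn
  have c1 : ∀ r, Continuous fun u => (S r u)⁻¹ := fun r =>
    h.cinv.comp (by fun_prop : Continuous fun u : ℝ => (r, u))
  have c2 : ∀ r, Continuous fun u => -St r u / S r u ^ 2 := fun r =>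
    h.cquot.comp (by fun_prop : Continuous fun u : ℝ => (r, u))
  refine (intervalIntegral.hasDerivAt_integral_of_dominated_loc_of_deriv_le
    (s := Metric.closedBall r (ε / 2)) (F := fun r u => (S r u)⁻¹)
    (F' := fun r u => -St r u / S r u ^ 2) (bound := fun _ => C)
    (Metric.closedBall_mem_nhds r (by linarith))
    (Eventually.of_forall fun r => (c1 r).aestronglyMeasurable)
    ((c1 r).intervalIntegrable _ _) (c2 r).aestronglyMeasurable
    (ae_of_all _ fun u hu x hx => hC (x, u) ⟨hx, uIoc_subset_uIcc hu⟩)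
    intervalIntegrable_const (ae_of_all _ fun u _ x hx => ?_)).2
  exact (h.dSt x (hball (Metric.closedBall_subset_ball (by linarith) hx)) u).inv (h.S_pos x u).ne'

lemma cΦ : Continuous (fun p : ℝ × ℝ => lamp S γ p.1 p.2) := by
  have h2 := h.cγ
  exact h.cI.sub (h.cI.comp (by fun_prop : Continuous fun p : ℝ × ℝ => (p.1, γ p.1)))

lemma cΦt : Continuous (fun p : ℝ × ℝ => lampT S St γ γ1 p.1 p.2) := by
  have h1 := h.cγ
  have h2 := h.cγ1
  have hm : Continuous fun p : ℝ × ℝ => (p.1, γ p.1) := by fun_prop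
  exact h.cJ.sub ((h.cJ.comp hm).add ((h.cinv.comp hm).mul (h2.comp continuous_fst)))

lemma dΦ_z (r z : ℝ) : HasDerivAt (lamp S γ r) (S r z)⁻¹ z := (h.dI_z r z).sub_const _

lemma dΦ_zz (r z : ℝ) : HasDerivAt (fun z => (S r z)⁻¹) (-Sx r z / S r z ^ 2) z :=
  (h.dS r z).inv (h.S_pos r z).ne'

lemma dΦ_r {r : ℝ} (hr : r ∈ Ioo 0 T) (z : ℝ) :
    HasDerivAt (fun r => lamp S γ r z) (lampT S St γ γ1 r z) r := by
  have := hasDerivAt_comp_of_partials (f := lampI S) (f1 := lampJ S St)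
    (f2 := fun r z => (S r z)⁻¹) (U := Ioo 0 T ×ˢ univ) (isOpen_Ioo.prod isOpen_univ)
    (fun p hp => h.dI_r hp.1 p.2) (fun p _ => h.dI_z p.1 p.2) h.cJ.continuousOn h.cinv.continuousOn
    (hasDerivAt_id r) (h.dγ r hr) ⟨hr, mem_univ _⟩
  refine ((h.dI_r hr z).sub this).congr_deriv ?_
  simp [lampT]

lemma Φ_γ (r : ℝ) : lamp S γ r (γ r) = 0 := sub_self _

/-- The spatial derivative `1 / σ` of the transform is at least `1 / c1`. -/
lemma Φ_expand (r : ℝ) {z z' : ℝ} (hz : z ≤ z') :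
    c1⁻¹ * (z' - z) ≤ lamp S γ r z' - lamp S γ r z := by
  refine mul_sub_le_image_sub_of_le_deriv (fun z => (h.dΦ_z r z).differentiableAt)
    (fun x => ?_) hz
  rw [(h.dΦ_z r x).deriv]
  exact inv_anti₀ (h.S_pos r x) (h.hi r x)

lemma c1_pos : 0 < c1 := (h.S_pos 0 0).trans_le (h.hi 0 0)

lemma Φ_strictMono (r : ℝ) : StrictMono (lamp S γ r) := fun z z' hz => by
  have := h.Φ_expand r hz.le
  have : 0 < c1⁻¹ * (z' - z) := mul_pos (inv_pos.2 h.c1_pos) (by linarith)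
  linarith

/-- The inverse of the transform is Lipschitz in space with constant `c1`. -/
lemma abs_sub_le (r z z' : ℝ) : |z - z'| ≤ c1 * |lamp S γ r z - lamp S γ r z'| := by
  have key : ∀ z z', z ≤ z' → z' - z ≤ c1 * (lamp S γ r z' - lamp S γ r z) := fun z z' hz => by
    have := mul_le_mul_of_nonneg_left (h.Φ_expand r hz) h.c1_pos.le
    rwa [← mul_assoc, mul_inv_cancel₀ h.c1_pos.ne', one_mul] at this
  rcases le_total z z' with hz | hz
  · rw [abs_sub_comm, abs_sub_comm (lamp S γ r z), abs_of_nonneg (by linarith),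
      abs_of_nonneg (sub_nonneg.2 ((h.Φ_strictMono r).monotone hz))]
    exact key z z' hz
  · rw [abs_of_nonneg (by linarith),
      abs_of_nonneg (sub_nonneg.2 ((h.Φ_strictMono r).monotone hz))]
    exact key z' z hz

lemma Φ_surj (r : ℝ) : Function.Surjective (lamp S γ r) := by
  have hc : Continuous (lamp S γ r) := continuous_iff_continuousAt.2 fun z =>
    (h.dΦ_z r z).continuousAt
  have hc1 := h.c1_pos
  refine hc.surjective ?_ ?_
  · refine tendsto_atTop_mono' _ (f₁ := fun z => c1⁻¹ * (z - 0) + lamp S γ r 0) ?_ ?_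
    · filter_upwards [eventually_ge_atTop 0] with z hz
      linarith [h.Φ_expand r hz]
    · simp only [sub_zero]
      exact tendsto_atTop_add_const_right _ _ (tendsto_id.const_mul_atTop (inv_pos.2 hc1))
  · refine tendsto_atBot_mono' _ (f₁ := fun z => c1⁻¹ * (z - 0) + lamp S γ r 0) ?_ ?_
    · filter_upwards [eventually_le_atBot 0] with z hz
      linarith [h.Φ_expand r hz]
    · simp only [sub_zero]
      exact tendsto_atBot_add_const_right _ _ (tendsto_id.const_mul_atBot (inv_pos.2 hc1))

/-- The coefficients seen through the Lamperti transform: the inverse `Ψ` is continuous, and the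
transformed drift `β` is continuous and locally Hölder in space. -/
lemma exists_drift : ∃ Ψ β : ℝ → ℝ → ℝ, (∀ r w, lamp S γ r (Ψ r w) = w) ∧
    (∀ r z, Ψ r (lamp S γ r z) = z) ∧ Continuous (fun p : ℝ × ℝ => Ψ p.1 p.2) ∧
    Continuous (fun p : ℝ × ℝ => β p.1 p.2) ∧ (∀ s t, LocHolder s t α β) ∧
    ∀ r z, β r (lamp S γ r z) = lampT S St γ γ1 r z + M r z * (S r z)⁻¹
      + 1 / 2 * S r z ^ 2 * (-Sx r z / S r z ^ 2) := by
  choose Ψ hΨ using fun r => h.Φ_surj r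
  have hΨ' : ∀ r z, Ψ r (lamp S γ r z) = z := fun r z =>
    (h.Φ_strictMono r).injective (hΨ r _)
  have cΨ : Continuous (fun p : ℝ × ℝ => Ψ p.1 p.2) := by
    rw [OrderTopology.continuous_iff]
    refine fun a => ⟨?_, ?_⟩
    · have : (fun p : ℝ × ℝ => Ψ p.1 p.2) ⁻¹' Ioi a = {p | lamp S γ p.1 a < p.2} := by
        ext p
        rw [mem_preimage, mem_Ioi, mem_ofPred_eq, ← (h.Φ_strictMono p.1).lt_iff_lt, hΨ]
      rw [this]
      exact isOpen_lt (h.cΦ.comp (by fun_prop : Continuous fun p : ℝ × ℝ => (p.1, a)))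
        continuous_snd
    · have : (fun p : ℝ × ℝ => Ψ p.1 p.2) ⁻¹' Iio a = {p | p.2 < lamp S γ p.1 a} := by
        ext p
        rw [mem_preimage, mem_Iio, mem_ofPred_eq, ← (h.Φ_strictMono p.1).lt_iff_lt, hΨ]
      rw [this]
      exact isOpen_lt continuous_snd
        (h.cΦ.comp (by fun_prop : Continuous fun p : ℝ × ℝ => (p.1, a)))
  set B : ℝ → ℝ → ℝ := fun r z => lampT S St γ γ1 r z + M r z * (S r z)⁻¹ with hB
  set Bz : ℝ → ℝ → ℝ := fun r z =>
    -St r z / S r z ^ 2 + (Mx r z * (S r z)⁻¹ + M r z * (-Sx r z / S r z ^ 2)) with hBz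
  have cB : Continuous (fun p : ℝ × ℝ => B p.1 p.2) := h.cΦt.add (h.cM.mul h.cinv)
  have cBz : Continuous (fun p : ℝ × ℝ => Bz p.1 p.2) :=
    h.cquot.add ((h.cMx.mul h.cinv).add (h.cM.mul (h.cSx.neg.div (h.cS.pow 2)
      fun p => pow_ne_zero 2 (h.S_pos p.1 p.2).ne')))
  have dB : ∀ r z, HasDerivAt (B r) (Bz r z) z := fun r z =>
    ((h.dJ_z r z).sub_const _).add ((h.dM r z).mul (h.dΦ_zz r z))
  have cb : Continuous (fun p : ℝ × ℝ => B p.1 p.2 - 1 / 2 * Sx p.1 p.2) :=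
    cB.sub (h.cSx.const_mul _)
  refine ⟨Ψ, fun r w => B r (Ψ r w) - 1 / 2 * Sx r (Ψ r w), hΨ, hΨ', cΨ,
    cb.comp (continuous_fst.prodMk cΨ), fun s t R hR => ?_, fun r z => ?_⟩
  · obtain ⟨G, hG, hγb⟩ := exists_bound_Icc h.cγ s t
    obtain ⟨C, hC, hCx⟩ := h.hSx
    have hc1 := h.c1_pos
    have hα0 := h.α0
    have hα1 := h.α1
    set Z := G + c1 * R with hZ
    have hZ0 : 0 < Z := by positivity
    have hK : IsCompact (Icc s t ×ˢ Icc (-Z) Z) := isCompact_Icc.prod isCompact_Icc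
    obtain ⟨C1, h1⟩ := hK.exists_bound_of_continuousOn cb.continuousOn
    obtain ⟨C2, h2⟩ := hK.exists_bound_of_continuousOn cBz.continuousOn
    set C2' := max C2 0 with hC2'
    have hC20 : 0 ≤ C2' := le_max_right _ _
    set H := (C2' * (2 * Z) ^ (1 - α) + 1 / 2 * C) * c1 ^ α with hH
    have hH0 : 0 ≤ H := by positivity
    have hΨZ : ∀ r ∈ Icc s t, ∀ w, |w| ≤ R → Ψ r w ∈ Icc (-Z) Z := fun r hr w hw => by
      have e1 := h.abs_sub_le r (Ψ r w) (γ r)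
      rw [hΨ, h.Φ_γ, sub_zero] at e1
      have e2 := hγb r hr
      have e3 : |Ψ r w| ≤ |Ψ r w - γ r| + |γ r| := by
        have := abs_add_le (Ψ r w - γ r) (γ r)
        rwa [sub_add_cancel] at this
      have e4 : c1 * |w| ≤ c1 * R := by gcongr
      exact abs_le.1 (by linarith)
    refine ⟨max C1 0 + H, by positivity, fun r hr w w' hw hw' => ⟨?_, ?_⟩⟩
    · have := h1 (r, Ψ r w) ⟨hr, hΨZ r hr w hw⟩
      rw [Real.norm_eq_abs] at this
      exact this.trans ((le_max_left _ _).trans (by linarith))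
    · set z := Ψ r w with hz
      set z' := Ψ r w' with hz'
      have m1 := hΨZ r hr w hw
      have m2 := hΨZ r hr w' hw'
      have lip : |B r z - B r z'| ≤ C2' * |z - z'| := by
        have := Convex.norm_image_sub_le_of_norm_hasDerivWithin_le (f := B r) (f' := Bz r)
          (s := Icc (-Z) Z) (C := C2') (fun x _ => (dB r x).hasDerivWithinAt)
          (fun x hx => (h2 (r, x) ⟨hr, hx⟩).trans (le_max_left _ _)) (convex_Icc _ _) m2 m1
        simpa using this
      have hzz : |z - z'| ≤ (2 * Z) ^ (1 - α) * |z - z'| ^ α := by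
        rcases (abs_nonneg (z - z')).eq_or_lt' with e | e
        · rw [e]; positivity
        · calc |z - z'| = |z - z'| ^ (1 - α) * |z - z'| ^ α := by
                rw [← Real.rpow_add e]; simp
            _ ≤ _ := by
                have : |z - z'| ≤ 2 * Z := abs_le.2 ⟨by linarith [m1.1, m2.2], by linarith [m1.2, m2.1]⟩
                gcongr
      have hzw : |z - z'| ^ α ≤ c1 ^ α * |w - w'| ^ α := by
        rw [← Real.mul_rpow hc1.le (abs_nonneg _)]
        have := h.abs_sub_le r z z'
        rw [hz, hz', hΨ, hΨ] at this
        exact Real.rpow_le_rpow (abs_nonneg _) this hα0.le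
      have e : B r z - 1 / 2 * Sx r z - (B r z' - 1 / 2 * Sx r z') =
          (B r z - B r z') - 1 / 2 * (Sx r z - Sx r z') := by ring
      rw [e]
      calc _ ≤ |B r z - B r z'| + |1 / 2 * (Sx r z - Sx r z')| := abs_sub _ _
        _ ≤ C2' * ((2 * Z) ^ (1 - α) * |z - z'| ^ α) + 1 / 2 * (C * |z - z'| ^ α) := by
            rw [abs_mul, abs_of_pos (by norm_num : (0 : ℝ) < 1 / 2)]
            have := hCx r z z'
            have := lip.trans (mul_le_mul_of_nonneg_left hzz hC20)
            gcongr
        _ = (C2' * (2 * Z) ^ (1 - α) + 1 / 2 * C) * |z - z'| ^ α := by ring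
        _ ≤ (C2' * (2 * Z) ^ (1 - α) + 1 / 2 * C) * (c1 ^ α * |w - w'| ^ α) := by gcongr
        _ = H * |w - w'| ^ α := by rw [hH]; ring
        _ ≤ _ := by
            have : 0 ≤ |w - w'| ^ α := Real.rpow_nonneg (abs_nonneg _) _
            have h0 : 0 ≤ max C1 0 := le_max_right _ _
            nlinarith
  · have := (h.S_pos r z).ne'
    simp only [hΨ', hB]
    field_simp
    ring

end Coef

/-! ### Transfer of test functions -/

/-- A test function may be cut off shortly after a time `v < b`, which makes it globally smooth
without changing it before `v`. -/
lemma TestFn.extend {s t' : ℝ} {G Gr Gw Gww : ℝ → ℝ → ℝ} (h : TestFn s t' G Gr Gw Gww)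
    {v b : ℝ} (hvb : v < b) (hb : b ≤ t') :
    ∃ H Hr Hw Hww : ℝ → ℝ → ℝ,
      ((∀ r w, HasDerivAt (fun r => H r w) (Hr r w) r) ∧ (∀ r w, HasDerivAt (H r) (Hw r w) w) ∧
        (∀ r w, HasDerivAt (Hw r) (Hww r w) w)) ∧
      (Continuous (fun p : ℝ × ℝ => Hr p.1 p.2) ∧ Continuous (fun p : ℝ × ℝ => Hw p.1 p.2) ∧
        Continuous (fun p : ℝ × ℝ => Hww p.1 p.2)) ∧
      (∃ s1 > s, ∃ b1 < b, ∃ R : ℝ, ∀ r w, (r ≤ s1 ∨ b1 ≤ r ∨ R ≤ |w|) →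
        H r w = 0 ∧ Hr r w = 0 ∧ Hw r w = 0 ∧ Hww r w = 0) ∧
      ∀ r ≤ v, ∀ w, H r w = G r w ∧ Hr r w = Gr r w ∧ Hw r w = Gw r w ∧ Hww r w = Gww r w := by
  obtain ⟨v1, hv1, hv1b⟩ := exists_between hvb
  obtain ⟨b1, hb1, hb1b⟩ := exists_between hv1b
  obtain ⟨D⟩ := exists_cutData (R := 1) (s1 := -b1) (s2 := -v1) one_pos (by linarith)
  -- the time cutoff reversed: one at early times, zero at late ones
  set η : ℝ → ℝ := fun r => D.θ (-r) with hη
  set η1 : ℝ → ℝ := fun r => -D.θ1 (-r) with hη1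
  have dη : ∀ r, HasDerivAt η (η1 r) r := fun r => by
    have := (D.hθ (-r)).comp r (hasDerivAt_neg r)
    exact this.congr_deriv (by simp [hη1])
  have cη : Continuous η := continuous_iff_continuousAt.2 fun r => (dη r).continuousAt
  have cη1 : Continuous η1 := (D.cθ1.comp continuous_neg).neg
  have z0 : ∀ r, b1 ≤ r → η r = 0 := fun r hr => (D.θ_zero (-r) (by linarith)).1
  have z1 : ∀ r, b1 ≤ r → η1 r = 0 := fun r hr => by
    simp [hη1, (D.θ_zero (-r) (by linarith)).2]
  have o0 : ∀ r, r ≤ v1 → η r = 1 := fun r hr => D.θ_one (-r) (by linarith)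
  have o1 : ∀ r, r < v1 → η1 r = 0 := fun r hr => by
    have : HasDerivAt η 0 r := (hasDerivAt_const r (1 : ℝ)).congr_of_eventuallyEq
      ((eventually_lt_nhds hr).mono fun x hx => o0 x hx.le)
    exact (dη r).unique this
  have hU : IsOpen (Iio t' ×ˢ (univ : Set ℝ)) := isOpen_Iio.prod isOpen_univ
  have cG : ContinuousOn (fun p : ℝ × ℝ => G p.1 p.2) (Iio t' ×ˢ univ) := h.cont
  have glue : ∀ f : ℝ × ℝ → ℝ, ContinuousOn f (Iio t' ×ˢ univ) →
      (∀ p : ℝ × ℝ, b1 ≤ p.1 → f p = 0) → Continuous f := fun f hf hz => by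
    refine continuous_iff_continuousAt.2 fun p => ?_
    rcases lt_or_ge p.1 t' with hp | hp
    · exact hf.continuousAt (hU.mem_nhds ⟨hp, mem_univ _⟩)
    · have : f =ᶠ[𝓝 p] fun _ => 0 := by
        have : ∀ᶠ q : ℝ × ℝ in 𝓝 p, b1 < q.1 :=
          continuous_fst.continuousAt.eventually (lt_mem_nhds (by linarith))
        exact this.mono fun q hq => hz q hq.le
      exact continuousAt_const.congr this.symm
  obtain ⟨s1, hs1, R, hR⟩ := h.supp
  refine ⟨fun r w => η r * G r w, fun r w => η1 r * G r w + η r * Gr r w,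
    fun r w => η r * Gw r w, fun r w => η r * Gww r w, ⟨fun r w => ?_, fun r w => ?_,
    fun r w => ?_⟩, ⟨glue _ ?_ ?_, glue _ ?_ ?_, glue _ ?_ ?_⟩,
    ⟨s1, hs1, b1, hb1b, R, fun r w hrw => ?_⟩, fun r hr w => ?_⟩
  · rcases lt_or_ge r t' with hp | hp
    · exact (dη r).mul (h.dr r hp w)
    · have e : (fun r => η r * G r w) =ᶠ[𝓝 r] fun _ => 0 :=
        (lt_mem_nhds (show b1 < r by linarith)).mono fun q hq => by simp [z0 q hq.le]
      refine ((hasDerivAt_const r (0 : ℝ)).congr_of_eventuallyEq e).congr_deriv ?_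
      simp [z0 r (by linarith), z1 r (by linarith)]
  · rcases lt_or_ge r t' with hp | hp
    · exact (h.dw r hp w).const_mul (η r)
    · simp only [z0 r (by linarith), zero_mul]
      exact hasDerivAt_const _ _
  · rcases lt_or_ge r t' with hp | hp
    · exact (h.dww r hp w).const_mul (η r)
    · simp only [z0 r (by linarith), zero_mul]
      exact hasDerivAt_const _ _
  · exact ((cη1.comp continuous_fst).continuousOn.mul cG).add
      ((cη.comp continuous_fst).continuousOn.mul h.cr)
  · intro p hp
    simp [z0 p.1 hp, z1 p.1 hp]
  · exact (cη.comp continuous_fst).continuousOn.mul h.cw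
  · intro p hp
    simp [z0 p.1 hp]
  · exact (cη.comp continuous_fst).continuousOn.mul h.cww
  · intro p hp
    simp [z0 p.1 hp]
  · have key : (η r = 0 ∧ η1 r = 0) ∨ (G r w = 0 ∧ Gr r w = 0 ∧ Gw r w = 0 ∧ Gww r w = 0) := by
      rcases hrw with hr | hr | hr
      · exact Or.inr (hR r w (Or.inl hr))
      · exact Or.inl ⟨z0 r hr, z1 r hr⟩
      · exact Or.inr (hR r w (Or.inr hr))
    rcases key with ⟨e1, e2⟩ | ⟨e1, e2, e3, e4⟩
    · simp [e1, e2]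
    · simp [e1, e2, e3, e4]
  · simp [o0 r (by linarith), o1 r (by linarith)]

/-! ### Coefficients on the whole plane -/

/-- A function that is Hölder continuous on `[0, T] × ℝ` becomes continuous on the plane when frozen
in time outside `[0, T]`. -/
lemma HolderTX.continuous {T α : ℝ} {φ : ℝ → ℝ → ℝ} (h : HolderTX T α φ) (hT : 0 ≤ T)
    (hα : 0 < α) : Continuous (fun p : ℝ × ℝ => φ (clampT 0 T p.1) p.2) := by
  obtain ⟨C, hC⟩ := h
  refine continuous_iff_continuousAt.2 fun p0 => ?_
  have hc := continuous_clampT 0 T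
  have hlim : Tendsto (fun p : ℝ × ℝ => C * (|p.2 - p0.2| ^ α +
      |clampT 0 T p.1 - clampT 0 T p0.1| ^ (α / 2))) (𝓝 p0) (𝓝 0) := by
    have hcont : Continuous (fun p : ℝ × ℝ => C * (|p.2 - p0.2| ^ α +
      |clampT 0 T p.1 - clampT 0 T p0.1| ^ (α / 2))) := by
      refine continuous_const.mul (Continuous.add ?_ ?_)
      · exact ((continuous_snd.sub continuous_const).abs).rpow_const fun _ => Or.inr hα.le
      · exact (((hc.comp continuous_fst).sub continuous_const).abs).rpow_const
          fun _ => Or.inr (by positivity)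
    have := hcont.tendsto p0
    simpa [Real.zero_rpow hα.ne', Real.zero_rpow (half_pos hα).ne'] using this
  refine tendsto_iff_norm_sub_tendsto_zero.2 (squeeze_zero (fun _ => norm_nonneg _) (fun p => ?_) hlim)
  exact hC _ (clampT_mem hT _) _ (clampT_mem hT _) _ _

lemma clampT_eventuallyEq {T r : ℝ} (hr : r ∈ Ioo 0 T) : clampT 0 T =ᶠ[𝓝 r] id :=
  mem_of_superset (isOpen_Ioo.mem_nhds hr) fun _ hq => clampT_of_mem (Ioo_subset_Icc_self hq)

/-- The coefficients of the equation and the boundary, frozen in time outside `[0, T]`. -/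
lemma exists_coef {T α : ℝ} (hT : 0 < T) (hα : α ∈ Ioo (0 : ℝ) 1) {μ σ : ℝ → ℝ → ℝ}
    (hC2 : CondC2 T σ) (hC3 : CondC3 T α μ σ) {g : ℝ → ℝ} (hg : ContDiffOn ℝ 2 g (Icc 0 T)) :
    ∃ c0 c1, Coef T α c0 c1 (fun r => μ (clampT 0 T r)) (fun r => pderivX μ (clampT 0 T r))
      (fun r => σ (clampT 0 T r)) (fun r => pderivX σ (clampT 0 T r))
      (fun r => pderivT σ (clampT 0 T r)) (fun r => g (clampT 0 T r))
      (fun r => derivWithin g (Icc 0 T) (clampT 0 T r)) := by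
  obtain ⟨c0, hc0, hlo⟩ := hC2
  obtain ⟨⟨c1, hb⟩, hd, h1, h2, h3, h4, h5, -, -⟩ := hC3
  have hm := clampT_mem hT.le
  have hc := continuous_clampT 0 T
  have cg : Continuous fun r => g (clampT 0 T r) :=
    hg.continuousOn.comp_continuous hc hm
  have cg1 : Continuous fun r => derivWithin g (Icc 0 T) (clampT 0 T r) :=
    (hg.continuousOn_derivWithin (uniqueDiffOn_Icc hT) (by norm_num)).comp_continuous hc hm
  refine ⟨c0, c1, hα.1, hα.2, hc0, h1.continuous hT.le hα.1, h2.continuous hT.le hα.1,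
    h3.continuous hT.le hα.1, h5.continuous hT.le hα.1, h4.continuous hT.le hα.1, cg, cg1,
    fun r z => hlo _ (hm r) z, fun r z => (le_abs_self _).trans (hb _ (hm r) z).2,
    fun r z => (hd _ (hm r) z).1.hasDerivAt, fun r z => (hd _ (hm r) z).2.1.hasDerivAt,
    fun r hr z => ?_, fun r hr => ?_, ?_⟩
  · have e := clampT_eventuallyEq hr
    have e0 : clampT 0 T r = r := e.self_of_nhds
    have := (hd r (Ioo_subset_Icc_self hr) z).2.2.1.hasDerivAt
    simp only [e0]
    refine this.congr_of_eventuallyEq (e.mono fun q hq => ?_)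
    simp only [hq, id]
  · have e := clampT_eventuallyEq hr
    have e0 : clampT 0 T r = r := e.self_of_nhds
    have := ((hg.differentiableOn (by norm_num)) r (Ioo_subset_Icc_self hr)).hasDerivWithinAt
    have := this.hasDerivAt (Icc_mem_nhds hr.1 hr.2)
    simp only [e0]
    refine this.congr_of_eventuallyEq (e.mono fun q hq => ?_)
    simp only [hq, id]
  · obtain ⟨C, hC⟩ := h5
    refine ⟨max C 0, le_max_right _ _, fun r z z' => ?_⟩
    have := hC _ (hm r) _ (hm r) z z'
    rw [sub_self, abs_zero, Real.zero_rpow (half_pos hα.1).ne', add_zero] at this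
    exact this.trans (by gcongr; exact le_max_left _ _)

/-! ### The transformed martingale problem -/

/-- Composing a test function with the Lamperti transform turns the generator
`∂_r + β ∂_w + ½ ∂_{ww}` into the generator of the original equation. -/
lemma Coef.exists_pullback {T α c0 c1 : ℝ} {M Mx S Sx St : ℝ → ℝ → ℝ} {γ γ1 : ℝ → ℝ}
    (h : Coef T α c0 c1 M Mx S Sx St γ γ1) {β : ℝ → ℝ → ℝ}
    (hβ : ∀ r z, β r (lamp S γ r z) = lampT S St γ γ1 r z + M r z * (S r z)⁻¹
      + 1 / 2 * S r z ^ 2 * (-Sx r z / S r z ^ 2)) {μ σ : ℝ → ℝ → ℝ}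
    (hM : ∀ r ∈ Icc 0 T, ∀ z, M r z = μ r z) (hS : ∀ r ∈ Icc 0 T, ∀ z, S r z = σ r z)
    {H Hr Hw Hww : ℝ → ℝ → ℝ} (dr : ∀ r w, HasDerivAt (fun r => H r w) (Hr r w) r)
    (dw : ∀ r w, HasDerivAt (H r) (Hw r w) w) (dww : ∀ r w, HasDerivAt (Hw r) (Hww r w) w)
    (cr : Continuous (fun p : ℝ × ℝ => Hr p.1 p.2))
    (cw : Continuous (fun p : ℝ × ℝ => Hw p.1 p.2))
    (cww : Continuous (fun p : ℝ × ℝ => Hww p.1 p.2)) {a b R : ℝ} (ha : 0 < a) (hb : b < T)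
    (hsupp : ∀ r w, (r ≤ a ∨ b ≤ r ∨ R ≤ |w|) →
        H r w = 0 ∧ Hr r w = 0 ∧ Hw r w = 0 ∧ Hww r w = 0) :
    C12On (fun r z => H r (lamp S γ r z)) univ ∧
    HasCompactSupport (fun p : ℝ × ℝ => H p.1 (lamp S γ p.1 p.2)) ∧
    ∀ r ∈ Icc 0 T, ∀ z, genOp μ σ (fun r z => H r (lamp S γ r z)) r z =
      genT β Hr Hw Hww r (lamp S γ r z) := by
  set Φ := lamp S γ with hΦ
  set f : ℝ → ℝ → ℝ := fun r z => H r (Φ r z) with hf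
  set fr : ℝ → ℝ → ℝ := fun r z => Hr r (Φ r z) + Hw r (Φ r z) * lampT S St γ γ1 r z with hfr
  set fz : ℝ → ℝ → ℝ := fun r z => Hw r (Φ r z) * (S r z)⁻¹ with hfz
  set fzz : ℝ → ℝ → ℝ := fun r z =>
    Hww r (Φ r z) * (S r z)⁻¹ * (S r z)⁻¹ + Hw r (Φ r z) * (-Sx r z / S r z ^ 2) with hfzz
  have dfr : ∀ r z, HasDerivAt (fun r => f r z) (fr r z) r := fun r z => by
    -- the transform is differentiable in time only inside `(0, T)`; elsewhere the test function
    -- vanishes nearby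
    by_cases hr : r ∈ Ioo 0 T
    · refine (hasDerivAt_comp_of_partials (f := H) (f1 := Hr) (f2 := Hw) isOpen_univ
        (fun p _ => dr p.1 p.2) (fun p _ => dw p.1 p.2) cr.continuousOn cw.continuousOn
        (hasDerivAt_id r) (h.dΦ_r hr z) (mem_univ _)).congr_deriv ?_
      simp [hfr, hΦ]
    · have e : (fun r => f r z) =ᶠ[𝓝 r] fun _ => 0 := by
        rcases le_or_gt r 0 with h0 | h0
        · exact (gt_mem_nhds (show r < a by linarith)).mono fun q hq =>
            (hsupp q _ (Or.inl hq.le)).1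
        · have : T ≤ r := not_lt.1 fun h' => hr ⟨h0, h'⟩
          exact (lt_mem_nhds (show b < r by linarith)).mono fun q hq =>
            (hsupp q _ (Or.inr (Or.inl hq.le))).1
      have e2 : fr r z = 0 := by
        have : r ≤ a ∨ b ≤ r ∨ R ≤ |Φ r z| := by
          rcases le_or_gt r 0 with h0 | h0
          · exact Or.inl (by linarith)
          · have : T ≤ r := not_lt.1 fun h' => hr ⟨h0, h'⟩
            exact Or.inr (Or.inl (by linarith))
        obtain ⟨-, e1, e2, -⟩ := hsupp r (Φ r z) this
        simp [hfr, e1, e2]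
      rw [e2]
      exact (hasDerivAt_const r (0 : ℝ)).congr_of_eventuallyEq e
  have dfz : ∀ r z, HasDerivAt (f r) (fz r z) z := fun r z =>
    (dw r (Φ r z)).comp z (h.dΦ_z r z)
  have dfzz : ∀ r z, HasDerivAt (fz r) (fzz r z) z := fun r z =>
    (((dww r (Φ r z)).comp z (h.dΦ_z r z))).mul (h.dΦ_zz r z)
  have efz : ∀ r, deriv (f r) = fz r := fun r => funext fun z => (dfz r z).deriv
  have e1 : ∀ r z, pderivT f r z = fr r z := fun r z => (dfr r z).deriv
  have e2 : ∀ r z, pderivX f r z = fz r z := fun r z => (dfz r z).deriv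
  have e3 : ∀ r z, pderivXX f r z = fzz r z := fun r z => by
    unfold pderivXX; rw [efz]; exact (dfzz r z).deriv
  have cm : Continuous fun p : ℝ × ℝ => (p.1, Φ p.1 p.2) := continuous_fst.prodMk h.cΦ
  refine ⟨⟨fun p _ => (dfr p.1 p.2).differentiableAt, fun p _ => (dfz p.1 p.2).differentiableAt,
    fun p _ => ?_, ?_, ?_, ?_⟩, ?_, fun r hr z => ?_⟩
  · rw [efz]; exact (dfzz p.1 p.2).differentiableAt
  · simp only [e1]
    exact ((cr.comp cm).add ((cw.comp cm).mul h.cΦt)).continuousOn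
  · simp only [e2]
    exact ((cw.comp cm).mul h.cinv).continuousOn
  · simp only [e3]
    exact ((((cww.comp cm).mul h.cinv).mul h.cinv).add ((cw.comp cm).mul
      (h.cSx.neg.div (h.cS.pow 2) fun p => pow_ne_zero 2 (h.S_pos p.1 p.2).ne'))).continuousOn
  · obtain ⟨G, hG, hγb⟩ := exists_bound_Icc h.cγ a b
    have hc1 := h.c1_pos
    refine HasCompactSupport.intro (K := Icc a b ×ˢ Icc (-(G + c1 * R)) (G + c1 * R))
      (isCompact_Icc.prod isCompact_Icc) fun p hp => ?_
    refine (hsupp p.1 _ ?_).1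
    by_contra! hcon
    obtain ⟨k1, k2, k3⟩ := hcon
    refine hp ⟨⟨k1.le, k2.le⟩, abs_le.1 ?_⟩
    have e1 := h.abs_sub_le p.1 p.2 (γ p.1)
    rw [h.Φ_γ, sub_zero] at e1
    have e2 := hγb p.1 ⟨k1.le, k2.le⟩
    have e3 : |p.2| ≤ |p.2 - γ p.1| + |γ p.1| := by
      have := abs_add_le (p.2 - γ p.1) (γ p.1)
      rwa [sub_add_cancel] at this
    have e4 : c1 * |lamp S γ p.1 p.2| ≤ c1 * R := by gcongr
    linarith
  · unfold genOp genT
    rw [e1, e2, e3, hβ, ← hM r hr, ← hS r hr]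
    have hS0 := (h.S_pos r z).ne'
    simp only [hfr, hfz, hfzz]
    field_simp
    ring

section

variable {Ω : Type*} [m : MeasurableSpace Ω]

lemma MartingaleOn.mono_congr {P : Measure Ω} {F : Filtration ℝ m} {N N' : ℝ → Ω → ℝ}
    {I J : Set ℝ} (h : MartingaleOn P F N I) (hJ : J ⊆ I) (e : ∀ u ∈ J, N u = N' u) :
    MartingaleOn P F N' J := by
  refine ⟨fun u hu => ?_, fun u₁ h₁ u₂ h₂ h12 => ?_⟩
  · rw [← e u hu]; exact h.1 u (hJ hu)
  · rw [← e _ h₁, ← e _ h₂]; exact h.2 _ (hJ h₁) _ (hJ h₂) h12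

/-- The Lamperti transform of the solution solves the martingale problem with unit diffusion
coefficient and drift `β`, and the moving boundary becomes the level `0`. -/
lemma Coef.transMP {T α c0 c1 : ℝ} {M Mx S Sx St : ℝ → ℝ → ℝ} {γ γ1 : ℝ → ℝ}
    (h : Coef T α c0 c1 M Mx S Sx St γ γ1) {β : ℝ → ℝ → ℝ}
    (hβ : ∀ r z, β r (lamp S γ r z) = lampT S St γ γ1 r z + M r z * (S r z)⁻¹
      + 1 / 2 * S r z ^ 2 * (-Sx r z / S r z ^ 2)) {μ σ : ℝ → ℝ → ℝ}
    (hM : ∀ r ∈ Icc 0 T, ∀ z, M r z = μ r z) (hS : ∀ r ∈ Icc 0 T, ∀ z, S r z = σ r z)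
    {P : Measure Ω} {F : Filtration ℝ m} {X : ℝ → ℝ → ℝ → Ω → ℝ}
    (hXad : ∀ s x : ℝ, ∀ u, Measurable[F u] (X s x u))
    (hXcont : ∀ s x : ℝ, ∀ ω, ContinuousOn (fun u => X s x u ω) (Icc s T))
    (hXinit : ∀ s x : ℝ, ∀ ω, X s x s ω = x)
    (hXmp : SolvesMP T μ σ P F X) {s x : ℝ} (hs : 0 ≤ s) (hx : x < γ s) :
    TransMP P F s T β (fun u ω => lamp S γ u (X s x u ω)) := by
  refine ⟨fun ω => ?_, fun u hu => ?_, fun ω => ?_, fun t' G Gr Gw Gww hG v hsv hvT hvt' => ?_⟩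
  · exact h.cΦ.comp_continuousOn (continuousOn_id.prodMk (hXcont s x ω))
  · have : Continuous (lamp S γ u) := h.cΦ.comp (by fun_prop : Continuous fun z : ℝ => (u, z))
    exact this.measurable.comp (hXad s x u)
  · simp only [hXinit]
    rw [← h.Φ_γ s]
    exact h.Φ_strictMono s hx
  · obtain ⟨H, Hr, Hw, Hww, ⟨dr, dw, dww⟩, ⟨cr, cw, cww⟩, ⟨a, ha, b, hb, R, hsupp⟩, heq⟩ :=
      hG.extend (lt_min hvT hvt') (min_le_right T t')
    obtain ⟨k1, k2, k3⟩ := h.exists_pullback hβ hM hS dr dw dww cr cw cww (hs.trans_lt ha)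
      (hb.trans_le (min_le_left _ _)) hsupp
    refine (hXmp s ⟨hs, by linarith⟩ x _ k1 k2).mono_congr (Icc_subset_Icc_right hvT.le)
      fun u hu => funext fun ω => ?_
    rw [(heq u hu.2 _).1]
    congr 1
    refine intervalIntegral.integral_congr fun r hr => ?_
    rw [uIcc_of_le hu.1] at hr
    have hrv : r ≤ v := hr.2.trans hu.2
    rw [k3 r ⟨hs.trans hr.1, by linarith⟩]
    obtain ⟨-, e1, e2, e3⟩ := heq r hrv (lamp S γ r (X s x r ω))
    simp only [genT, e1, e2, e3]

end

/-! ### Gluing and change of variables -/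

/-- Densities on the intervals `(-R, 0)` that are `C¹` up to the boundary glue to a density on
`(-∞, 0)`, since continuous densities of the same measure agree. -/
lemma glue_density (ν : Measure ℝ) [IsFiniteMeasure ν]
    (h : ∀ R : ℝ, 0 < R → ∃ k k' : ℝ → ℝ, (∀ y, HasDerivAt k (k' y) y) ∧ Continuous k' ∧
      (∀ y ∈ Ioo (-R) 0, 0 ≤ k y) ∧ ν.restrict (Ioo (-R) 0) =
        (volume.restrict (Ioo (-R) 0)).withDensity (fun y => ENNReal.ofReal (k y))) :
    ∃ (k : ℝ → ℝ) (l0 l1 : ℝ), (∀ y < 0, DifferentiableAt ℝ k y) ∧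
      ContinuousOn (deriv k) (Iio 0) ∧ Tendsto k (𝓝[<] 0) (𝓝 l0) ∧
      Tendsto (deriv k) (𝓝[<] 0) (𝓝 l1) ∧ (∀ y < 0, 0 ≤ k y) ∧
      ν.restrict (Iio 0) =
        (volume.withDensity (fun y => ENNReal.ofReal (k y))).restrict (Iio 0) := by
  choose K K' hd hc hnn hν using fun n : ℕ => h ((n : ℝ) + 1) (by positivity)
  have cK : ∀ n, Continuous (K n) := fun n =>
    continuous_iff_continuousAt.2 fun y => (hd n y).continuousAt
  have hm : ∀ n, Measurable fun y => ENNReal.ofReal (K n y) := fun n =>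
    (cK n).measurable.ennreal_ofReal
  have agree : ∀ n p, n ≤ p → EqOn (K n) (K p) (Ioo (-((n : ℝ) + 1)) 0) := fun n p hnp => by
    have hsub : Ioo (-((n : ℝ) + 1)) 0 ⊆ Ioo (-((p : ℝ) + 1)) 0 := by
      have : (n : ℝ) ≤ p := by exact_mod_cast hnp
      exact Ioo_subset_Ioo_left (by linarith)
    have e1 : (volume.restrict (Ioo (-((n : ℝ) + 1)) 0)).withDensity
        (fun y => ENNReal.ofReal (K n y)) = (volume.restrict (Ioo (-((n : ℝ) + 1)) 0)).withDensity
        (fun y => ENNReal.ofReal (K p y)) := by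
      have := congrArg (fun m => Measure.restrict m (Ioo (-((n : ℝ) + 1)) 0)) (hν p)
      simp only [restrict_withDensity measurableSet_Ioo,
        Measure.restrict_restrict measurableSet_Ioo, inter_eq_left.2 hsub] at this
      rw [← hν n, this]
    have e2 := (withDensity_eq_iff_of_sigmaFinite (hm n).aemeasurable (hm p).aemeasurable).1 e1
    refine Measure.eqOn_open_of_ae_eq ?_ isOpen_Ioo (cK n).continuousOn (cK p).continuousOn
      (μ := volume)
    filter_upwards [e2, ae_restrict_mem measurableSet_Ioo] with y hy hmem
    exact (ENNReal.ofReal_eq_ofReal_iff (hnn n y hmem) (hnn p y (hsub hmem))).1 hy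
  -- with `n = ⌈-y⌉₊`, the point `y` lies in `(-(n + 1), 0)`
  set k : ℝ → ℝ := fun y => K ⌈-y⌉₊ y with hk
  have hkK : ∀ n, EqOn k (K n) (Ioo (-((n : ℝ) + 1)) 0) := fun n y hy => by
    have hy1 : y ∈ Ioo (-((⌈-y⌉₊ : ℝ) + 1)) 0 := ⟨by linarith [Nat.le_ceil (-y)], hy.2⟩
    rcases le_total ⌈-y⌉₊ n with h' | h'
    · exact agree _ _ h' hy1
    · exact (agree _ _ h' hy).symm
  have hmem : ∀ y < 0, y ∈ Ioo (-((⌈-y⌉₊ : ℝ) + 1)) 0 := fun y hy =>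
    ⟨by linarith [Nat.le_ceil (-y)], hy⟩
  have hdk : ∀ n : ℕ, ∀ y ∈ Ioo (-((n : ℝ) + 1)) 0, HasDerivAt k (K' n y) y := fun n y hy =>
    (hd n y).congr_of_eventuallyEq (mem_of_superset (isOpen_Ioo.mem_nhds hy) (hkK n))
  have hnear : Ioo (-(((0 : ℕ) : ℝ) + 1)) 0 ∈ 𝓝[<] (0 : ℝ) := Ioo_mem_nhdsLT (by norm_num)
  refine ⟨k, K 0 0, K' 0 0, fun y hy => (hdk _ y (hmem y hy)).differentiableAt, fun y hy => ?_,
    ?_, ?_, fun y hy => ?_, ?_⟩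
  · have : deriv k =ᶠ[𝓝 y] K' ⌈-y⌉₊ := mem_of_superset (isOpen_Ioo.mem_nhds (hmem y hy))
      fun z hz => (hdk _ z hz).deriv
    exact ((hc _).continuousAt.congr this.symm).continuousWithinAt
  · refine (((cK 0).tendsto 0).mono_left nhdsWithin_le_nhds).congr' ?_
    filter_upwards [hnear] with y hy using (hkK 0 hy).symm
  · refine (((hc 0).tendsto 0).mono_left nhdsWithin_le_nhds).congr' ?_
    filter_upwards [hnear] with y hy using ((hdk 0 y hy).deriv).symm
  · exact hnn _ y (hmem y hy)
  · have hU : Iio (0 : ℝ) = ⋃ n : ℕ, Ioo (-((n : ℝ) + 1)) 0 := by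
      ext y
      rw [mem_iUnion]
      exact ⟨fun hy => ⟨_, hmem y hy⟩, fun ⟨n, hn⟩ => hn.2⟩
    rw [hU, Measure.restrict_iUnion_congr]
    intro n
    rw [hν n, restrict_withDensity measurableSet_Ioo]
    refine withDensity_congr_ae ?_
    filter_upwards [ae_restrict_mem measurableSet_Ioo] with y hy
    rw [hkK n hy]

/-- Change of variables through the Lamperti transform. -/
lemma Coef.exists_density {T α c0 c1 : ℝ} {M Mx S Sx St : ℝ → ℝ → ℝ} {γ γ1 : ℝ → ℝ}
    (h : Coef T α c0 c1 M Mx S Sx St γ γ1) (t : ℝ) (ν : Measure ℝ) [IsFiniteMeasure ν]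
    {k : ℝ → ℝ} {l0 l1 : ℝ} (hk : ∀ y < 0, DifferentiableAt ℝ k y)
    (hk' : ContinuousOn (deriv k) (Iio 0)) (hl0 : Tendsto k (𝓝[<] 0) (𝓝 l0))
    (hl1 : Tendsto (deriv k) (𝓝[<] 0) (𝓝 l1)) (hnn : ∀ y < 0, 0 ≤ k y)
    (hν : ν.restrict (Iio 0) =
        (volume.withDensity (fun y => ENNReal.ofReal (k y))).restrict (Iio 0)) :
    ∃ q : ℝ → ℝ,
      (∀ A : Set ℝ, MeasurableSet A → A ⊆ Iio (γ t) → MeasurableSet (lamp S γ t '' A) ∧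
        ν (lamp S γ t '' A) = ENNReal.ofReal (∫ y in A, q y)) ∧
      (∀ y : ℝ, y < γ t → DifferentiableAt ℝ q y) ∧
      ContinuousOn (deriv q) (Iio (γ t)) ∧
      ∃ l : ℝ, Tendsto (deriv q) (𝓝[<] (γ t)) (𝓝 l) := by
  set φ := lamp S γ t with hφ
  have mono : StrictMono φ := h.Φ_strictMono t
  have dφ : ∀ z, HasDerivAt φ (S t z)⁻¹ z := h.dΦ_z t
  have cφ : Continuous φ := continuous_iff_continuousAt.2 fun z => (dφ z).continuousAt
  have neg : ∀ y < γ t, φ y < 0 := fun y hy => by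
    rw [← h.Φ_γ t]; exact mono hy
  have cinv : Continuous fun y => (S t y)⁻¹ :=
    h.cinv.comp (by fun_prop : Continuous fun z : ℝ => (t, z))
  have cquot : Continuous fun y => -Sx t y / S t y ^ 2 :=
    (h.cSx.neg.div (h.cS.pow 2) fun p => pow_ne_zero 2 (h.S_pos p.1 p.2).ne').comp
      (by fun_prop : Continuous fun z : ℝ => (t, z))
  set q : ℝ → ℝ := fun y => k (φ y) * (S t y)⁻¹ with hq
  have dq : ∀ y < γ t, HasDerivAt q (deriv k (φ y) * (S t y)⁻¹ * (S t y)⁻¹ +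
      k (φ y) * (-Sx t y / S t y ^ 2)) y := fun y hy =>
    ((hk _ (neg y hy)).hasDerivAt.comp y (dφ y)).mul (h.dΦ_zz t y)
  have maps : MapsTo φ (Iio (γ t)) (Iio 0) := neg
  have ck : ContinuousOn k (Iio 0) := fun y hy => (hk y hy).continuousAt.continuousWithinAt
  have lim : Tendsto φ (𝓝[<] (γ t)) (𝓝[<] 0) := by
    refine tendsto_nhdsWithin_iff.2 ⟨?_, ?_⟩
    · have := (cφ.tendsto (γ t)).mono_left (nhdsWithin_le_nhds (s := Iio (γ t)))
      rwa [show φ (γ t) = 0 from h.Φ_γ t] at this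
    · filter_upwards [self_mem_nhdsWithin] with y hy using neg y hy
  refine ⟨q, fun A hA hAs => ?_, fun y hy => (dq y hy).differentiableAt, ?_, ?_⟩
  · have hmeas : MeasurableSet (φ '' A) :=
      (cφ.measurableEmbedding mono.injective).measurableSet_image.2 hA
    refine ⟨hmeas, ?_⟩
    have hsub : φ '' A ⊆ Iio 0 := by
      rintro _ ⟨y, hy, rfl⟩
      exact neg y (hAs hy)
    have qnn : ∀ y ∈ A, 0 ≤ q y := fun y hy =>
      mul_nonneg (hnn _ (neg y (hAs hy))) (inv_pos.2 (h.S_pos t y)).le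
    have e1 : ν (φ '' A) = ∫⁻ y in A, ENNReal.ofReal (q y) := by
      have := congrArg (fun m => m (φ '' A)) hν
      simp only [Measure.restrict_apply hmeas, inter_eq_left.2 hsub] at this
      rw [this, withDensity_apply _ hmeas, lintegral_image_eq_lintegral_abs_deriv_mul hA
        (fun z _ => (dφ z).hasDerivWithinAt) mono.injective.injOn]
      refine setLIntegral_congr_fun hA fun y hy => ?_
      have hp : 0 < (S t y)⁻¹ := inv_pos.2 (h.S_pos t y)
      simp only [hq]
      rw [abs_of_pos hp, ← ENNReal.ofReal_mul hp.le, mul_comm]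
    have cq : ContinuousOn q (Iio (γ t)) := fun y hy =>
      (dq y hy).continuousAt.continuousWithinAt
    have hint : IntegrableOn q A := by
      refine ⟨(cq.aestronglyMeasurable measurableSet_Iio).mono_measure
        (Measure.restrict_mono hAs le_rfl), ?_⟩
      rw [hasFiniteIntegral_iff_ofReal
        ((ae_restrict_iff' hA).2 (ae_of_all _ qnn)), ← e1]
      exact measure_lt_top _ _
    rw [e1, ofReal_integral_eq_lintegral_ofReal hint ((ae_restrict_iff' hA).2 (ae_of_all _ qnn))]
  · refine ContinuousOn.congr ?_ fun y hy => (dq y hy).deriv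
    exact (((hk'.comp cφ.continuousOn maps).mul cinv.continuousOn).mul cinv.continuousOn).add
      ((ck.comp cφ.continuousOn maps).mul cquot.continuousOn)
  · refine ⟨l1 * (S t (γ t))⁻¹ * (S t (γ t))⁻¹ + l0 * (-Sx t (γ t) / S t (γ t) ^ 2), ?_⟩
    have ti := (cinv.tendsto (γ t)).mono_left (nhdsWithin_le_nhds (s := Iio (γ t)))
    have tq := (cquot.tendsto (γ t)).mono_left (nhdsWithin_le_nhds (s := Iio (γ t)))
    refine ((((hl1.comp lim).mul ti).mul ti).add ((hl0.comp lim).mul tq)).congr' ?_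
    filter_upwards [self_mem_nhdsWithin] with y hy using ((dq y hy).deriv).symm

/-- Lemma 3: for `0 ≤ s < t ≤ T` and `x < g(s)`, the taboo sub-probability
measure `A ↦ P(X^{s,x}_t ∈ A, X^{s,x}_u < g(u) ∀ u ∈ [s,t])` on Borel subsets of `(−∞, g(t))`
has a density `q(s,x;t,·)` which is continuously differentiable on `(−∞,g(t))`, with
`∂_y q(s,x;t,y)` having a finite limit as `y ↑ g(t)`. -/
theorem taboo_transition_density_exists
    [m : MeasurableSpace Ω] (P : Measure Ω) [IsProbabilityMeasure P]
    (F : Filtration ℝ m) (T x₀ α : ℝ) (hT : 0 < T) (hα : α ∈ Ioo (0:ℝ) 1)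
    (μ σ : ℝ → ℝ → ℝ) (hC1 : CondC1 T μ σ) (hC2 : CondC2 T σ) (hC3 : CondC3 T α μ σ)
    (g : ℝ → ℝ) (hg : ContDiffOn ℝ 2 g (Icc 0 T)) (hg0 : x₀ < g 0)
    (X : ℝ → ℝ → ℝ → Ω → ℝ)
    (hXad : ∀ s x : ℝ, Adapted F (X s x))
    (hXcont : ∀ s x : ℝ, ∀ ω, ContinuousOn (fun u => X s x u ω) (Icc s T))
    (hXinit : ∀ s x : ℝ, ∀ ω, X s x s ω = x)
    (hXmp : SolvesMP T μ σ P F X)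
    :
    ∀ s x t : ℝ, 0 ≤ s → s < t → t ≤ T → x < g s →
      ∃ q : ℝ → ℝ,
        (∀ A : Set ℝ, MeasurableSet A → A ⊆ Iio (g t) →
          P {ω | X s x t ω ∈ A ∧ ∀ u ∈ Icc s t, X s x u ω < g u} =
            ENNReal.ofReal (∫ y in A, q y)) ∧
        (∀ y : ℝ, y < g t → DifferentiableAt ℝ q y) ∧
        ContinuousOn (deriv q) (Iio (g t)) ∧
        ∃ l : ℝ, Tendsto (deriv q) (𝓝[<] (g t)) (𝓝 l) := by
  intro s x t hs hst htT hx
  have hcl : ∀ r ∈ Icc 0 T, clampT 0 T r = r := fun r hr => clampT_of_mem hr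
  obtain ⟨c0, c1, h⟩ := exists_coef hT hα hC2 hC3 hg
  obtain ⟨Ψ, β, -, -, -, cβ, hol, hβ⟩ := h.exists_drift
  have hγs : g (clampT 0 T s) = g s := by rw [hcl s ⟨hs, by linarith⟩]
  have hγt : g (clampT 0 T t) = g t := by rw [hcl t ⟨by linarith, htT⟩]
  have hY := h.transMP hβ (fun r hr z => by rw [hcl r hr]) (fun r hr z => by rw [hcl r hr])
    hXad hXcont hXinit hXmp hs (hx.trans_eq hγs.symm)
  obtain ⟨κ, hfin, hκ, hκP⟩ := hY.exists_killedFlow cβ hα.1 hα.2 (hol s T) (hst.trans_le htT)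
  obtain ⟨k, l0, l1, d1, d2, d3, d4, d5, d6⟩ := glue_density (κ t) fun R hR =>
    hκ.exists_density hst htT hR
  obtain ⟨q, q1, q2, q3, q4⟩ := h.exists_density t (κ t) d1 d2 d3 d4 d5 d6
  rw [hγt] at q1 q2 q3 q4
  refine ⟨q, fun A hA hAs => ?_, q2, q3, q4⟩
  obtain ⟨hm, e⟩ := q1 A hA hAs
  rw [← e, hκP t ⟨hst.le, htT⟩ _ hm]
  congr 1
  ext ω
  simp only [mem_ofPred_eq]
  refine and_congr ((h.Φ_strictMono t).injective.mem_set_image).symm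
    (forall₂_congr fun u hu => ?_)
  have e0 := h.Φ_γ u
  simp only [hcl u ⟨hs.trans hu.1, hu.2.trans htT⟩] at e0
  rw [← (h.Φ_strictMono u).lt_iff_lt, e0]
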